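/- Let u be a weak solution of −div(A∇u) = u in Ω with u ≢ 0. Suppose that for some δ ∈ (0,1) one has liminf_{R→∞} R^{−(1−δ)} ∫_{R<|x|<2R} u² dx = 0. Then there exists a sequence r_j → ∞ such that G(r_j) > 0 for every j. -/

import Mathlib

open MeasureTheory Metric Filter

noncomputable section

abbrev En (n : ℕ) := EuclideanSpace ℝ (Fin n)

/-- The exterior domain `Ω = {x ∈ ℝⁿ : |x| > 1}`. -/
def OmegaExt (n : ℕ) : Set (En n) := {x | 1 < ‖x‖}

/-- The quadratic/bilinear form `⟨M ξ, η⟩`. -/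
def quadForm {n : ℕ} (M : Matrix (Fin n) (Fin n) ℝ) (ξ η : En n) : ℝ :=
  ∑ i, M.mulVec (fun j => ξ j) i * η i

/-- The conformal factor `μ(x) = ⟨A(x)∇r, ∇r⟩ = ⟨A(x)x, x⟩ / |x|²`. -/
def muA {n : ℕ} (A : En n → Matrix (Fin n) (Fin n) ℝ) (x : En n) : ℝ :=
  quadForm (A x) x x / ‖x‖ ^ 2

/-- The vector field `Z(x) = r(x) A(x)∇r(x) / μ(x) = A(x)x / μ(x)`. -/
def Zvec {n : ℕ} (A : En n → Matrix (Fin n) (Fin n) ℝ) (x : En n) : En n :=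
  (muA A x)⁻¹ • (WithLp.toLp 2 ((A x).mulVec (fun j => x j)) : En n)

/-- The derivative of `f` along `Z`: `Zf = ⟨Z, ∇f⟩`. -/
def Zd {n : ℕ} (A : En n → Matrix (Fin n) (Fin n) ℝ) (f : En n → ℝ) (x : En n) : ℝ :=
  ∑ i, Zvec A x i * gradient f x i

/-- Surface integral over the sphere `{|x| = ρ}` w.r.t. the `(n-1)`-dimensional
Hausdorff measure. -/
def sphInt (n : ℕ) (ρ : ℝ) (f : En n → ℝ) : ℝ :=
  ∫ x in sphere (0 : En n) ρ, f x ∂(μH[(n : ℝ) - 1])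

/-- Structural hypotheses on `A`: symmetry, `C¹` entries on `Ω`, uniform ellipticity
`λ|ξ|² ≤ ⟨A(x)ξ,ξ⟩ ≤ λ⁻¹|ξ|²`, and the decay `|x||∇B(x)| + |B(x)| ≤ C|x|^{-α}`
where `B = A - Iₙ` (entrywise). -/
def EllipticDecay {n : ℕ} (A : En n → Matrix (Fin n) (Fin n) ℝ) (lam α C : ℝ) : Prop :=
  (∀ x ∈ OmegaExt n, (A x).IsSymm) ∧
  (∀ i j, ContDiffOn ℝ 1 (fun x => A x i j) (OmegaExt n)) ∧
  (∀ x ∈ OmegaExt n, ∀ ξ : En n,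
      lam * ‖ξ‖ ^ 2 ≤ quadForm (A x) ξ ξ ∧ quadForm (A x) ξ ξ ≤ lam⁻¹ * ‖ξ‖ ^ 2) ∧
  (∀ x ∈ OmegaExt n, ∀ i j,
      ‖x‖ * ‖gradient (fun y => (A y - 1) i j) x‖ + |(A x - 1) i j| ≤ C * ‖x‖ ^ (-α))

/-- `u ∈ C¹(Ω)` is a weak solution of `-div(A∇u) = u` in `Ω`, i.e.
`∫_Ω ⟨A∇u, ∇φ⟩ = ∫_Ω u φ` for every test function `φ ∈ C_c^∞(Ω)`. -/
def WeakSol {n : ℕ} (A : En n → Matrix (Fin n) (Fin n) ℝ) (u : En n → ℝ) : Prop :=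
  ContDiffOn ℝ 1 u (OmegaExt n) ∧
  ∀ φ : En n → ℝ, ContDiff ℝ (⊤ : ℕ∞) φ → HasCompactSupport φ → tsupport φ ⊆ OmegaExt n →
    (∫ x in OmegaExt n, ∑ i, (A x).mulVec (fun j => gradient u x j) i * gradient φ x i) =
    ∫ x in OmegaExt n, u x * φ x

/-- The functional `G(ρ)` associated with a solution `u`, where `w = r^{(n-1)/2} u`. -/
def Gfun {n : ℕ} (A : En n → Matrix (Fin n) (Fin n) ℝ) (u : En n → ℝ) (ρ : ℝ) : ℝ :=
  let w : En n → ℝ := fun x => ‖x‖ ^ (((n : ℝ) - 1) / 2) * u x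
  2 * sphInt n ρ (fun x => (Zd A w x / ‖x‖) ^ 2 * muA A x)
    - sphInt n ρ (fun x => quadForm (A x) (gradient w x) (gradient w x))
    + sphInt n ρ (fun x => (w x) ^ 2)
    - ((n : ℝ) - 1) * ((n : ℝ) - 3) / 4 * sphInt n ρ (fun x => (w x) ^ 2 / ‖x‖ ^ 2 * muA A x)

/-!
Normalised by powers of `r`, the spherical integrals `H`, `I`, `E` of `w²μ`, `w⟨A∇r, ∇w⟩`,
`⟨A∇w, ∇w⟩` together with `G` satisfy the differential system of the Laplacian up to errors of
relative size `r^(-1-α)`. Suppose `G ≤ 0` near infinity. As long as `H > 0`, the quotients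
`N = I / H` and `k = -G / H ≥ 0` obey `N' ≥ k` and `k' ≤ -c / r - 2kN` up to integrable errors, so
`k + (min N 0)² ≥ 0` would decrease like `-c log r`; hence `H` vanishes at arbitrarily large radii.
Where `H = 0` and `G ≤ 0` the Cauchy data of `u` vanish, and a Carleman estimate for the system
propagates this to all smaller spheres, so `u = 0`.
-/

section HausdorffMeasureOfSpheres

open scoped Topology ENNReal NNReal Pointwise

-- By Besicovitch differentiation the density is the limit of the ratios of ball masses.
lemma exists_eq_smul_of_ball_uniform {E : Type*} [NormedAddCommGroup E] [NormedSpace ℝ E]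
    [FiniteDimensional ℝ E] [MeasurableSpace E] [BorelSpace E] {S : Set E} {ρ ν : Measure E}
    [IsFiniteMeasure ρ] [IsFiniteMeasure ν] (hac : ρ ≪ ν) (hνS : ν Sᶜ = 0)
    (hρ : ∀ x ∈ S, ∀ y ∈ S, ∀ r, ρ (closedBall x r) = ρ (closedBall y r))
    (hν : ∀ x ∈ S, ∀ y ∈ S, ∀ r, ν (closedBall x r) = ν (closedBall y r)) :
    ∃ c : ℝ≥0∞, c ≠ ∞ ∧ ρ = c • ν := by
  rcases eq_or_ne ν 0 with rfl | hν0
  · exact ⟨0, ENNReal.zero_ne_top, by simpa using hac⟩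
  have hS : ∀ᵐ x ∂ν, x ∈ S := hνS
  have hlim := Besicovitch.ae_tendsto_rnDeriv ρ ν
  have : (ae ν).NeBot := ae_neBot.2 hν0
  obtain ⟨x, hxS, hx, hx_top⟩ := (hS.and (hlim.and (Measure.rnDeriv_lt_top ρ ν))).exists
  have hconst : ρ.rnDeriv ν =ᵐ[ν] fun _ => ρ.rnDeriv ν x := by
    filter_upwards [hS, hlim] with y hyS hy
    simp_rw [hρ y hyS x hxS, hν y hyS x hxS] at hy
    exact tendsto_nhds_unique hy hx
  refine ⟨_, hx_top.ne, ?_⟩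
  rw [← withDensity_const, ← withDensity_congr_ae hconst, Measure.withDensity_rnDeriv_eq _ _ hac]

lemma measure_closedBall_eq_of_map_eq {n : ℕ} {ρ : Measure (En n)}
    (hρ : ∀ e : En n ≃ₗᵢ[ℝ] En n, ρ.map e = ρ) {x y : En n} (hxy : ‖x‖ = ‖y‖) (r : ℝ) :
    ρ (closedBall x r) = ρ (closedBall y r) := by
  obtain ⟨e, he⟩ : ∃ e : En n ≃ₗᵢ[ℝ] En n, e x = y := ⟨_, Submodule.reflection_sub hxy⟩
  calc ρ (closedBall x r) = ρ (e ⁻¹' closedBall y r) := by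
        rw [e.preimage_closedBall, ← he, e.symm_apply_apply]
    _ = ρ.map e (closedBall y r) := (e.toHomeomorph.measurableEmbedding.map_apply ρ _).symm
    _ = ρ (closedBall y r) := by rw [hρ]

lemma exists_eq_smul_of_rotation_invariant {n : ℕ} {R : ℝ} {ρ ν : Measure (En n)}
    [IsFiniteMeasure ρ] [IsFiniteMeasure ν] (hρ0 : ρ ≠ 0) (hν0 : ν ≠ 0)
    (hρS : ρ (sphere 0 R)ᶜ = 0) (hνS : ν (sphere 0 R)ᶜ = 0)
    (hρ : ∀ e : En n ≃ₗᵢ[ℝ] En n, ρ.map e = ρ) (hν : ∀ e : En n ≃ₗᵢ[ℝ] En n, ν.map e = ν) :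
    ∃ c : ℝ≥0∞, c ≠ 0 ∧ c ≠ ∞ ∧ ρ = c • ν := by
  have hnorm : ∀ x ∈ sphere (0 : En n) R, ∀ y ∈ sphere (0 : En n) R, ‖x‖ = ‖y‖ := by
    simp +contextual
  have uniform : ∀ τ : Measure (En n), (∀ e : En n ≃ₗᵢ[ℝ] En n, τ.map e = τ) →
      ∀ x ∈ sphere (0 : En n) R, ∀ y ∈ sphere (0 : En n) R, ∀ r,
        τ (closedBall x r) = τ (closedBall y r) :=
    fun τ hτ x hx y hy => measure_closedBall_eq_of_map_eq hτ (hnorm x hx y hy)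
  have hsum : ∀ e : En n ≃ₗᵢ[ℝ] En n, (ρ + ν).map e = ρ + ν := fun e => by
    rw [Measure.map_add _ _ e.continuous.measurable, hρ, hν]
  have hsumS : (ρ + ν) (sphere 0 R)ᶜ = 0 := by rw [Measure.add_apply, hρS, hνS, add_zero]
  obtain ⟨a, ha_top, ha⟩ := exists_eq_smul_of_ball_uniform
    (Measure.AbsolutelyContinuous.refl ρ |>.add_right ν) hsumS (uniform _ hρ) (uniform _ hsum)
  obtain ⟨b, hb_top, hb⟩ := exists_eq_smul_of_ball_uniform
    (by rw [add_comm]; exact Measure.AbsolutelyContinuous.refl ν |>.add_right ρ)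
    hsumS (uniform _ hν) (uniform _ hsum)
  have ha0 : a ≠ 0 := by rintro rfl; exact hρ0 (by simpa using ha)
  have hb0 : b ≠ 0 := by rintro rfl; exact hν0 (by simpa using hb)
  refine ⟨a * b⁻¹, mul_ne_zero ha0 (ENNReal.inv_ne_zero.2 hb_top),
    ENNReal.mul_ne_top ha_top (ENNReal.inv_ne_top.2 hb0), ?_⟩
  calc ρ = a • (ρ + ν) := ha
    _ = (a * b⁻¹) • b • (ρ + ν) := by
      rw [smul_smul, mul_assoc, ENNReal.inv_mul_cancel hb0 hb_top, mul_one]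
    _ = (a * b⁻¹) • ν := by rw [← hb]

/-- The central projection to the unit sphere of the facet `{x | x i = s}` of a cube, the facet
being parametrized by the coordinates other than `i`. -/
def cubeFacetProj (m : ℕ) (i : Fin (m + 1)) (s : ℝ) (y : Fin m → ℝ) : En (m + 1) :=
  ‖(WithLp.toLp 2 (i.insertNth s y) : En (m + 1))‖⁻¹ • WithLp.toLp 2 (i.insertNth s y)

lemma contDiff_cubeFacetProj (m : ℕ) (i : Fin (m + 1)) {s : ℝ} (hs : s ≠ 0) :
    ContDiff ℝ 1 (cubeFacetProj m i s) := by
  have hcoord : ContDiff ℝ 1 fun y : Fin m → ℝ =>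
      (WithLp.toLp 2 (i.insertNth s y : Fin (m + 1) → ℝ) : En (m + 1)) := by
    refine contDiff_euclidean.2 fun j => ?_
    rcases Fin.eq_self_or_eq_succAbove i j with rfl | ⟨k, rfl⟩
    · simpa using contDiff_const
    · simpa using contDiff_apply ℝ ℝ k
  have hne : ∀ y : Fin m → ℝ,
      (WithLp.toLp 2 (i.insertNth s y : Fin (m + 1) → ℝ) : En (m + 1)) ≠ 0 := fun y h =>
    hs (by simpa using congrArg (fun v : En (m + 1) => v i) h)
  exact ((hcoord.norm ℝ hne).inv fun y => norm_ne_zero_iff.2 (hne y)).smul hcoord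

lemma sphere_subset_iUnion_cubeFacetProj (m : ℕ) : sphere (0 : En (m + 1)) 1 ⊆
    ⋃ p : Fin (m + 1) × Fin 2, cubeFacetProj m p.1 ((-1) ^ (p.2 : ℕ)) '' Set.Icc (-1) 1 := by
  intro x hx
  rw [mem_sphere_zero_iff_norm] at hx
  obtain ⟨i, hi⟩ := Finite.exists_max fun j => |x j|
  have hpos : 0 < |x i| := by
    refine (abs_nonneg _).lt_of_ne fun h0 => ?_
    have : x = 0 := by
      ext j
      exact abs_nonpos_iff.1 ((hi j).trans h0.ge)
    simp [this] at hx
  obtain ⟨s, hs⟩ : ∃ s : Fin 2, x i = |x i| * (-1) ^ (s : ℕ) := by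
    rcases abs_choice (x i) with h | h
    · exact ⟨0, by simp [h]⟩
    · exact ⟨1, by simp [h]⟩
  have hins : (WithLp.toLp 2 (i.insertNth ((-1) ^ (s : ℕ)) fun j => x (i.succAbove j) / |x i|) :
      En (m + 1)) = |x i|⁻¹ • x := by
    ext j
    rcases Fin.eq_self_or_eq_succAbove i j with rfl | ⟨k, rfl⟩
    · simp only [Fin.insertNth_apply_same, PiLp.smul_apply, smul_eq_mul]
      rw [eq_inv_mul_iff_mul_eq₀ hpos.ne', ← hs]
    · simp [div_eq_inv_mul]
  refine Set.mem_iUnion.2 ⟨(i, s), fun j => x (i.succAbove j) / |x i|, ?_, ?_⟩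
  · have hle : ∀ j, |x (i.succAbove j) / (|x i|)| ≤ 1 := fun j => by
      rw [abs_div, abs_abs]
      exact div_le_one_of_le₀ (hi _) hpos.le
    exact ⟨fun j => (abs_le.1 (hle j)).1, fun j => (abs_le.1 (hle j)).2⟩
  · rw [cubeFacetProj, hins, norm_smul, hx, smul_smul]
    simp [hpos.ne']

lemma hausdorffMeasure_pi_fin (m : ℕ) : (μH[(m : ℝ)] : Measure (Fin m → ℝ)) = volume := by
  simpa using hausdorffMeasure_pi_real (ι := Fin m)

lemma hausdorffMeasure_unitSphere_lt_top (m : ℕ) :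
    μH[(m : ℝ)] (sphere (0 : En (m + 1)) 1) < ∞ := by
  refine (measure_mono (sphere_subset_iUnion_cubeFacetProj m)).trans_lt ?_
  refine (measure_iUnion_le _).trans_lt ?_
  rw [tsum_fintype]
  refine ENNReal.sum_lt_top.2 fun p _ => ?_
  obtain ⟨K, hK⟩ := (contDiff_cubeFacetProj m p.1 (s := (-1) ^ (p.2 : ℕ)) (by simp)).contDiffOn
    |>.exists_lipschitzOnWith one_ne_zero (convex_Icc (-1 : Fin m → ℝ) 1) isCompact_Icc
  refine (hK.hausdorffMeasure_image_le m.cast_nonneg).trans_lt (ENNReal.mul_lt_top ?_ ?_)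
  · exact ENNReal.rpow_lt_top_of_nonneg m.cast_nonneg ENNReal.coe_ne_top
  · rw [hausdorffMeasure_pi_fin]
    exact isCompact_Icc.measure_lt_top

lemma hausdorffMeasure_unitSphere_pos (m : ℕ) :
    0 < μH[(m : ℝ)] (sphere (0 : En (m + 1)) 1) := by
  let proj : En (m + 1) → Fin m → ℝ := fun x j => x j.succ
  have hproj : LipschitzWith 1 proj := LipschitzWith.of_dist_le_mul fun x y => by
    rw [NNReal.coe_one, one_mul, dist_pi_le_iff dist_nonneg]
    exact fun j => by simpa [dist_eq_norm] using PiLp.norm_apply_le (x - y) j.succ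
  let B : Set (Fin m → ℝ) := {y | ∑ j, y j ^ 2 < 1}
  have hB : B ⊆ proj '' sphere 0 1 := by
    intro y hy
    have hy' : 0 ≤ 1 - ∑ j, y j ^ 2 := sub_nonneg.2 (le_of_lt hy)
    refine ⟨WithLp.toLp 2 (Fin.cons √(1 - ∑ j, y j ^ 2) y), ?_, by ext j; simp [proj]⟩
    rw [mem_sphere_zero_iff_norm, EuclideanSpace.norm_eq, Fin.sum_univ_succ]
    simp [Real.sq_sqrt hy']
  have hB_open : IsOpen B := isOpen_lt (by fun_prop) continuous_const
  calc 0 < volume B := hB_open.measure_pos volume ⟨0, by simp [B]⟩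
    _ ≤ volume (proj '' sphere 0 1) := measure_mono hB
    _ ≤ μH[(m : ℝ)] (sphere (0 : En (m + 1)) 1) := by
      simpa [hausdorffMeasure_pi_fin] using
        hproj.hausdorffMeasure_image_le m.cast_nonneg (sphere 0 1)

lemma hausdorffMeasure_sphere (m : ℕ) {ρ : ℝ} (hρ : 0 < ρ) :
    μH[(m : ℝ)] (sphere (0 : En (m + 1)) ρ) =
      ‖ρ‖₊ ^ (m : ℝ) • μH[(m : ℝ)] (sphere (0 : En (m + 1)) 1) := by
  rw [← Measure.hausdorffMeasure_smul₀ m.cast_nonneg hρ.ne', smul_sphere' hρ.ne']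
  simp [abs_of_pos hρ]

/-- The surface measure of the unit sphere of `ℝⁿ` that appears in polar coordinates. -/
def unitSphereMeasure (n : ℕ) : Measure (sphere (0 : En n) 1) :=
  (volume : Measure (En n)).toSphere

instance (n : ℕ) : IsFiniteMeasure (unitSphereMeasure n) := by
  unfold unitSphereMeasure; infer_instance

lemma map_unitSphereMeasure_rotation_invariant (n : ℕ) (ρ : ℝ) (e : En n ≃ₗᵢ[ℝ] En n) :
    ((unitSphereMeasure n).map fun θ => ρ • θ.1).map e =
      (unitSphereMeasure n).map fun θ => ρ • θ.1 := by
  have hm : Measurable fun θ : sphere (0 : En n) 1 => ρ • θ.1 := by fun_prop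
  have he : Measurable e := e.continuous.measurable
  rw [Measure.map_map he hm]
  ext s hs
  rw [Measure.map_apply (he.comp hm) hs, Measure.map_apply hm hs, unitSphereMeasure,
    Measure.toSphere_apply' _ (he.comp hm hs), Measure.toSphere_apply' _ (hm hs),
    ← e.symm.measurePreserving.measure_preimage_equiv
      (f := e.symm.toHomeomorph.toMeasurableEquiv)]
  congr 2
  ext z
  have hez : e.symm.toHomeomorph.toMeasurableEquiv z = e.symm z := rfl
  simp only [hez, Set.mem_smul, Set.mem_image, Set.mem_preimage, Function.comp_apply,
    Subtype.exists, mem_sphere_zero_iff_norm]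
  constructor
  · rintro ⟨t, ht, _, ⟨v, hv, hvs, rfl⟩, hz⟩
    refine ⟨t, ht, _, ⟨e v, by simpa using hv, by simpa using hvs, rfl⟩, e.symm.injective ?_⟩
    simpa using hz
  · rintro ⟨t, ht, _, ⟨v, hv, hvs, rfl⟩, rfl⟩
    exact ⟨t, ht, _, ⟨e.symm v, by simpa using hv, by simpa using hvs, rfl⟩, by simp⟩

lemma hausdorffMeasure_restrict_sphere_rotation_invariant {n : ℕ} (d ρ : ℝ) (e : En n ≃ₗᵢ[ℝ] En n) :
    ((μH[d]).restrict (sphere (0 : En n) ρ)).map e = (μH[d]).restrict (sphere 0 ρ) := by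
  have hpre : e ⁻¹' sphere 0 ρ = sphere 0 ρ := by simp [e.preimage_sphere]
  conv_lhs => rw [← hpre]
  rw [← e.coe_toHomeomorph, ← e.toHomeomorph.measurableEmbedding.restrict_map, e.coe_toHomeomorph]
  exact congrArg (fun ν => Measure.restrict ν _) (e.toIsometryEquiv.map_hausdorffMeasure d)

lemma exists_hausdorffMeasure_restrict_sphere_eq (m : ℕ) {ρ : ℝ} (hρ : 0 < ρ) :
    ∃ c : ℝ≥0∞, c ≠ 0 ∧ c ≠ ∞ ∧ (μH[(m : ℝ)]).restrict (sphere (0 : En (m + 1)) ρ) =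
      c • (unitSphereMeasure (m + 1)).map fun θ => ρ • θ.1 := by
  have hm : Measurable fun θ : sphere (0 : En (m + 1)) 1 => ρ • θ.1 := by fun_prop
  have hpos : 0 < ‖ρ‖₊ ^ (m : ℝ) := NNReal.rpow_pos (by simpa using hρ.ne')
  have : IsFiniteMeasure ((μH[(m : ℝ)]).restrict (sphere (0 : En (m + 1)) ρ)) := ⟨by
    rw [Measure.restrict_apply_univ, hausdorffMeasure_sphere m hρ]
    exact ENNReal.mul_lt_top ENNReal.coe_lt_top (hausdorffMeasure_unitSphere_lt_top m)⟩
  have hS : MeasurableSet (sphere (0 : En (m + 1)) ρ)ᶜ := isClosed_sphere.measurableSet.compl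
  refine exists_eq_smul_of_rotation_invariant (R := ρ) ?_ ?_ ?_ ?_
    (hausdorffMeasure_restrict_sphere_rotation_invariant _ _)
    (map_unitSphereMeasure_rotation_invariant _ _)
  · rw [Ne, Measure.restrict_eq_zero, hausdorffMeasure_sphere m hρ]
    exact smul_ne_zero hpos.ne' (hausdorffMeasure_unitSphere_pos m).ne'
  · rw [Ne, Measure.map_eq_zero_iff hm.aemeasurable]
    exact Measure.toSphere_ne_zero _
  · rw [Measure.restrict_apply hS, Set.compl_inter_self, measure_empty]
  · rw [Measure.map_apply hm hS]
    convert measure_empty (μ := unitSphereMeasure (m + 1))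
    ext θ
    simp [norm_smul, abs_of_pos hρ]

end HausdorffMeasureOfSpheres

section PolarCoordinates

open scoped Topology ENNReal NNReal

/-- The integral of `f` over the sphere of radius `r` in the normalization of polar coordinates:
`∫ f = ∫₀^∞ sphereIntegral f r dr`. -/
def sphereIntegral {n : ℕ} (f : En n → ℝ) (r : ℝ) : ℝ :=
  r ^ (n - 1) * ∫ θ, f (r • θ.1) ∂unitSphereMeasure n

-- The constant is in fact `1`; only its positivity matters for the sign of `Gfun`.
lemma exists_sphInt_eq_mul_sphereIntegral {n : ℕ} [NeZero n] {ρ : ℝ} (hρ : 0 < ρ) :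
    ∃ c : ℝ, 0 < c ∧ ∀ f : En n → ℝ, sphInt n ρ f = c * sphereIntegral f ρ := by
  obtain ⟨m, rfl⟩ : ∃ m, n = m + 1 := Nat.exists_eq_succ_of_ne_zero (NeZero.ne n)
  obtain ⟨c, hc0, hc_top, hc⟩ := exists_hausdorffMeasure_restrict_sphere_eq m hρ
  have hcR : 0 < c.toReal := ENNReal.toReal_pos hc0 hc_top
  have hemb : MeasurableEmbedding fun θ : sphere (0 : En (m + 1)) 1 => ρ • θ.1 :=
    (Homeomorph.smulOfNeZero ρ hρ.ne').measurableEmbedding.comp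
      (MeasurableEmbedding.subtype_coe isClosed_sphere.measurableSet)
  have hdim : ((m + 1 : ℕ) : ℝ) - 1 = m := by push_cast; ring
  refine ⟨c.toReal / ρ ^ m, by positivity, fun f => ?_⟩
  rw [sphInt, hdim, hc, integral_smul_measure, hemb.integral_map, sphereIntegral, smul_eq_mul,
    Nat.add_sub_cancel]
  field_simp

lemma integral_volumeIoiPow (k : ℕ) (g : ℝ → ℝ) :
    ∫ r, g r ∂Measure.volumeIoiPow k = ∫ r in Set.Ioi (0 : ℝ), r ^ k * g r := by
  simp only [Measure.volumeIoiPow, ENNReal.ofReal]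
  rw [integral_withDensity_eq_integral_smul (by fun_prop),
    integral_subtype_comap measurableSet_Ioi fun r : ℝ => Real.toNNReal (r ^ k) • g r]
  refine setIntegral_congr_fun measurableSet_Ioi fun r hr => ?_
  simp only [NNReal.smul_def, smul_eq_mul, Real.coe_toNNReal _ (pow_nonneg (le_of_lt hr) k)]

lemma integral_eq_setIntegral_sphereIntegral {n : ℕ} [NeZero n] {f : En n → ℝ}
    (hf : Integrable f) : ∫ x, f x = ∫ r in Set.Ioi (0 : ℝ), sphereIntegral f r := by
  have hmp := (volume : Measure (En n)).measurePreserving_homeomorphUnitSphereProd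
  have hemb := (homeomorphUnitSphereProd (En n)).measurableEmbedding
  have hS : MeasurableSet ({0}ᶜ : Set (En n)) := (measurableSet_singleton 0).compl
  let polar : sphere (0 : En n) 1 × Set.Ioi (0 : ℝ) → ℝ := fun p => f (p.2.1 • p.1.1)
  have hpolar : ∀ x : ({0}ᶜ : Set (En n)), f x = polar (homeomorphUnitSphereProd (En n) x) :=
    fun x => congrArg f <| by
      rw [← homeomorphUnitSphereProd_symm_apply_coe, Homeomorph.symm_apply_apply]
  have hint : Integrable polar ((volume : Measure (En n)).toSphere.prod
      (Measure.volumeIoiPow (n - 1))) := by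
    have h := (integrableOn_iff_comap_subtypeVal hS).1 hf.integrableOn
    rw [show f ∘ Subtype.val = _ from funext hpolar] at h
    simpa using (hmp.integrable_comp_emb hemb (g := polar)).1 h
  calc ∫ x, f x = ∫ x : ({0}ᶜ : Set (En n)), f x ∂Measure.comap Subtype.val volume := by
        rw [integral_subtype_comap hS f, restrict_compl_singleton]
    _ = ∫ p, polar p ∂(volume : Measure (En n)).toSphere.prod (Measure.volumeIoiPow (n - 1)) := by
        simp_rw [hpolar]
        simpa using hmp.integral_comp hemb polar
    _ = ∫ r, (fun r => ∫ θ, f (r • θ.1) ∂unitSphereMeasure n) r.1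
          ∂Measure.volumeIoiPow (n - 1) := integral_prod_symm _ hint
    _ = ∫ r in Set.Ioi (0 : ℝ), sphereIntegral f r :=
        integral_volumeIoiPow (n - 1) fun r => ∫ θ, f (r • θ.1) ∂unitSphereMeasure n

end PolarCoordinates

section CompactlySupportedFactors

variable {X : Type*} [TopologicalSpace X] {U : Set X} {φ P : X → ℝ}

lemma continuous_mul_of_tsupport_subset (hU : IsOpen U) (hφ : Continuous φ)
    (hs : tsupport φ ⊆ U) (hP : ContinuousOn P U) : Continuous fun x => φ x * P x :=
  continuous_of_tsupport fun _ hx => hφ.continuousAt.mul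
    (hP.continuousAt (hU.mem_nhds (hs (tsupport_mul_subset_left hx))))

lemma integrable_mul_of_tsupport_subset [MeasurableSpace X] [OpensMeasurableSpace X]
    {μ : Measure X} [IsFiniteMeasureOnCompacts μ] (hU : IsOpen U) (hφ : Continuous φ)
    (hc : HasCompactSupport φ) (hs : tsupport φ ⊆ U) (hP : ContinuousOn P U) :
    Integrable (fun x => φ x * P x) μ :=
  (continuous_mul_of_tsupport_subset hU hφ hs hP).integrable_of_hasCompactSupport hc.mul_right

variable {E : Type*} [NormedAddCommGroup E] [NormedSpace ℝ E] {V : Set E} {ψ Q : E → ℝ}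
  {k : WithTop ℕ∞}

lemma contDiff_of_tsupport_subset (hV : IsOpen V) (hs : tsupport ψ ⊆ V)
    (hψ : ContDiffOn ℝ k ψ V) : ContDiff ℝ k ψ := by
  refine contDiff_iff_contDiffAt.2 fun x => ?_
  by_cases hx : x ∈ tsupport ψ
  · exact hψ.contDiffAt (hV.mem_nhds (hs hx))
  · exact (contDiffAt_const (c := (0 : ℝ))).congr_of_eventuallyEq
      (notMem_tsupport_iff_eventuallyEq.1 hx)

lemma contDiff_mul_of_tsupport_subset (hV : IsOpen V) (hψ : ContDiff ℝ k ψ)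
    (hs : tsupport ψ ⊆ V) (hQ : ContDiffOn ℝ k Q V) : ContDiff ℝ k fun x => ψ x * Q x :=
  contDiff_of_tsupport_subset hV (tsupport_mul_subset_left.trans hs) (hψ.contDiffOn.mul hQ)

end CompactlySupportedFactors

section DuBoisReymond

open scoped Topology ContDiff

lemma exists_subset_Ioc_of_isCompact {K : Set ℝ} (hK : IsCompact K) {a : ℝ}
    (hKa : K ⊆ Set.Ioi a) : ∃ c d : ℝ, a < c ∧ K ⊆ Set.Ioc c d := by
  rcases K.eq_empty_or_nonempty with rfl | hne
  · exact ⟨a + 1, a, by linarith, Set.empty_subset _⟩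
  obtain ⟨c, hcK, hc⟩ := hK.exists_isLeast hne
  obtain ⟨d, -, hd⟩ := hK.exists_isGreatest hne
  have hac : a < c := hKa hcK
  exact ⟨(a + c) / 2, d, by linarith, fun x hx => ⟨by linarith [hc hx], hd hx⟩⟩

lemma exists_contDiff_primitive_of_integral_eq_zero {k : ℝ → ℝ} {a : ℝ} (hk : ContDiff ℝ ∞ k)
    (hc : HasCompactSupport k) (hs : tsupport k ⊆ Set.Ioi a) (h0 : ∫ x, k x = 0) :
    ∃ η : ℝ → ℝ, ContDiff ℝ ∞ η ∧ HasCompactSupport η ∧ tsupport η ⊆ Set.Ioi a ∧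
      deriv η = k := by
  obtain ⟨c, d, hac, hcd⟩ := exists_subset_Ioc_of_isCompact hc.isCompact hs
  have hsupp : Function.support k ⊆ Set.Ioc c d := (subset_tsupport k).trans hcd
  have hderiv : ∀ x, HasDerivAt (fun x => ∫ t in c..x, k t) (k x) x := fun x =>
    hk.continuous.integral_hasStrictDerivAt c x |>.hasDerivAt
  have hzero : ∀ x, x ∉ Set.Icc c d → ∫ t in c..x, k t = 0 := by
    intro x hx
    rcases lt_or_ge x c with hxc | hcx
    · refine intervalIntegral.integral_zero_ae (ae_of_all _ fun t ht => ?_)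
      rw [Set.uIoc_of_ge hxc.le] at ht
      exact Function.notMem_support.1 fun h => (hsupp h).1.not_ge ht.2
    · have hdx : d < x := by by_contra! h; exact hx ⟨hcx, h⟩
      rw [intervalIntegral.integral_eq_integral_of_support_subset
        (hsupp.trans (Set.Ioc_subset_Ioc_right hdx.le)), h0]
  have hsub : Function.support (fun x => ∫ t in c..x, k t) ⊆ Set.Icc c d :=
    fun x hx => by_contra fun h => hx (hzero x h)
  refine ⟨_, ?_, HasCompactSupport.of_support_subset_isCompact isCompact_Icc hsub,
    (closure_minimal hsub isClosed_Icc).trans fun x hx => hac.trans_le hx.1,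
    funext fun x => (hderiv x).deriv⟩
  exact contDiff_infty_iff_deriv.2 ⟨fun x => (hderiv x).differentiableAt,
    by rwa [show deriv (fun x => ∫ t in c..x, k t) = k from funext fun x => (hderiv x).deriv]⟩

-- A test function minus the multiple of a fixed bump with the same integral is a derivative.
lemma exists_eqOn_const_of_integral_deriv_mul_eq_zero {F : ℝ → ℝ} {a : ℝ}
    (hF : ContinuousOn F (Set.Ioi a))
    (h : ∀ η : ℝ → ℝ, ContDiff ℝ ∞ η → HasCompactSupport η → tsupport η ⊆ Set.Ioi a →
      ∫ r, deriv η r * F r = 0) : ∃ c, Set.EqOn F (fun _ => c) (Set.Ioi a) := by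
  let bump : ContDiffBump (a + 2) := ⟨1 / 2, 1, by norm_num, by norm_num⟩
  let β : ℝ → ℝ := bump.normed volume
  have hβ : ContDiff ℝ ∞ β := bump.contDiff_normed
  have hβc : HasCompactSupport β := bump.hasCompactSupport_normed
  have hβs : tsupport β ⊆ Set.Ioi a := by
    rw [bump.tsupport_normed_eq, Real.closedBall_eq_Icc]
    exact fun x hx => Set.mem_Ioi.2 (by linarith [hx.1])
  set c : ℝ := ∫ x, β x * F x
  refine ⟨c, Measure.eqOn_open_of_ae_eq (μ := volume) ?_ isOpen_Ioi hF continuousOn_const⟩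
  have hae : ∀ᵐ x : ℝ, x ∈ Set.Ioi a → F x - c = 0 := by
    refine isOpen_Ioi.ae_eq_zero_of_integral_contDiff_smul_eq_zero
      ((hF.sub continuousOn_const).locallyIntegrableOn measurableSet_Ioi) fun g hg hgc hgs => ?_
    have hgF := integrable_mul_of_tsupport_subset (μ := volume) isOpen_Ioi hg.continuous hgc hgs hF
    have hβF := integrable_mul_of_tsupport_subset (μ := volume) isOpen_Ioi hβ.continuous hβc hβs hF
    have hgI : Integrable g := hg.continuous.integrable_of_hasCompactSupport hgc
    have hβI : Integrable β := hβ.continuous.integrable_of_hasCompactSupport hβc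
    let k : ℝ → ℝ := fun x => g x - (∫ y, g y) * β x
    have hk0 : ∫ x, k x = 0 := by
      rw [integral_sub hgI (hβI.const_mul _), integral_const_mul, bump.integral_normed, mul_one,
        sub_self]
    have hks : tsupport k ⊆ Set.Ioi a := (tsupport_sub _ _).trans
      (Set.union_subset hgs (tsupport_mul_subset_right.trans hβs))
    obtain ⟨η, hη, hηc, hηs, hη'⟩ := exists_contDiff_primitive_of_integral_eq_zero
      (hg.sub (contDiff_const.mul hβ)) (hgc.sub hβc.mul_left) hks hk0
    calc ∫ x, g x • (F x - c) = (∫ x, g x * F x) - (∫ x, g x) * c := by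
          simp_rw [smul_eq_mul, mul_sub]
          rw [integral_sub hgF (hgI.mul_const c), integral_mul_const]
      _ = ∫ x, deriv η x * F x := by
          simp_rw [hη', sub_mul, mul_assoc]
          rw [integral_sub hgF (hβF.const_mul _), integral_const_mul]
      _ = 0 := h η hη hηc hηs
  rw [Filter.EventuallyEq, ae_restrict_iff' measurableSet_Ioi]
  filter_upwards [hae] with x hx hxa using sub_eq_zero.1 (hx hxa)

lemma exists_primitive_on_Ioi {q : ℝ → ℝ} {a : ℝ} (hq : ContinuousOn q (Set.Ioi a)) :
    ∃ K : ℝ → ℝ, ∀ r, a < r → HasDerivAt K (q r) r := by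
  refine ⟨fun r => ∫ t in (a + 1)..r, q t, fun r hr => ?_⟩
  have hsub : Set.uIcc (a + 1) r ⊆ Set.Ioi a :=
    Set.ordConnected_Ioi.uIcc_subset (lt_add_one a) hr
  exact intervalIntegral.integral_hasDerivAt_right (hq.mono hsub).intervalIntegrable
    (hq.stronglyMeasurableAtFilter isOpen_Ioi r hr) (hq.continuousAt (isOpen_Ioi.mem_nhds hr))

lemma hasDerivAt_of_integral_deriv_mul_add_eq_zero {f q : ℝ → ℝ} {a : ℝ}
    (hf : ContinuousOn f (Set.Ioi a)) (hq : ContinuousOn q (Set.Ioi a))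
    (h : ∀ η : ℝ → ℝ, ContDiff ℝ ∞ η → HasCompactSupport η → tsupport η ⊆ Set.Ioi a →
      ∫ r, (deriv η r * f r + η r * q r) = 0) {r : ℝ} (hr : a < r) : HasDerivAt f (q r) r := by
  obtain ⟨K, hK⟩ := exists_primitive_on_Ioi hq
  have hKc : ContinuousOn K (Set.Ioi a) := fun r hr => (hK r hr).continuousAt.continuousWithinAt
  obtain ⟨c, hc⟩ := exists_eqOn_const_of_integral_deriv_mul_eq_zero
      (hf.sub hKc) fun η hη hηc hηs => by
    have hη' : Continuous (deriv η) := hη.continuous_deriv (by simp)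
    have hη's : tsupport (deriv η) ⊆ Set.Ioi a := tsupport_deriv_subset.trans hηs
    have integrable_deriv {g : ℝ → ℝ} (hg : ContinuousOn g (Set.Ioi a)) :=
      integrable_mul_of_tsupport_subset (μ := volume) isOpen_Ioi hη' hηc.deriv hη's hg
    have integrable {g : ℝ → ℝ} (hg : ContinuousOn g (Set.Ioi a)) :=
      integrable_mul_of_tsupport_subset (μ := volume) isOpen_Ioi hη.continuous hηc hηs hg
    have hparts : ∫ r, η r * q r = -∫ r, deriv η r * K r :=
      integral_mul_deriv_eq_deriv_mul_of_integrable
        (fun x _ => (hη.differentiable (by simp) x).hasDerivAt) (fun x hx => hK x (hηs hx))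
        (integrable hq) (integrable_deriv hKc) (integrable hKc)
    have htest := h η hη hηc hηs
    rw [integral_add (integrable_deriv hf) (integrable hq), hparts] at htest
    simp_rw [Pi.sub_apply, mul_sub]
    rw [integral_sub (integrable_deriv hf) (integrable_deriv hKc), sub_eq_add_neg, htest]
  refine ((hK r hr).add_const c).congr_of_eventuallyEq ?_
  filter_upwards [isOpen_Ioi.mem_nhds hr] with t ht
  have : f t - K t = c := hc ht
  linarith

end DuBoisReymond

section SphereIntegrals

variable {n : ℕ} {f g k : En n → ℝ} {r : ℝ}

instance (n : ℕ) : (unitSphereMeasure n).IsOpenPosMeasure := by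
  unfold unitSphereMeasure; infer_instance

lemma isOpen_OmegaExt (n : ℕ) : IsOpen (OmegaExt n) := isOpen_lt continuous_const continuous_norm

lemma norm_pos_of_mem_OmegaExt {x : En n} (hx : x ∈ OmegaExt n) : 0 < ‖x‖ := one_pos.trans hx

lemma norm_smul_unitSphere (hr : 0 < r) (θ : sphere (0 : En n) 1) : ‖r • θ.1‖ = r := by
  rw [norm_smul, norm_eq_of_mem_sphere θ, mul_one, Real.norm_of_nonneg hr.le]

lemma smul_unitSphere_mem_OmegaExt (hr : 1 < r) (θ : sphere (0 : En n) 1) :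
    r • θ.1 ∈ OmegaExt n :=
  hr.trans_eq (norm_smul_unitSphere (one_pos.trans hr) θ).symm

lemma continuous_comp_smul_unitSphere (hf : ContinuousOn f (OmegaExt n)) (hr : 1 < r) :
    Continuous fun θ : sphere (0 : En n) 1 => f (r • θ.1) :=
  hf.comp_continuous (by fun_prop) (smul_unitSphere_mem_OmegaExt hr)

lemma integrable_comp_smul_unitSphere (hf : ContinuousOn f (OmegaExt n)) (hr : 1 < r) :
    Integrable (fun θ : sphere (0 : En n) 1 => f (r • θ.1)) (unitSphereMeasure n) :=
  (continuous_comp_smul_unitSphere hf hr).integrable_of_hasCompactSupport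
    (HasCompactSupport.of_compactSpace _)

lemma continuousOn_sphereIntegral (hf : ContinuousOn f (OmegaExt n)) :
    ContinuousOn (sphereIntegral f) (Set.Ioi 1) := by
  refine (continuousOn_id.pow (n - 1)).mul (continuousOn_iff_continuous_domRestrict.2 ?_)
  have hcont : Continuous (Function.uncurry
      fun (r : Set.Ioi (1 : ℝ)) (θ : sphere (0 : En n) 1) => f (r.1 • θ.1)) :=
    hf.comp_continuous (by fun_prop) fun p => smul_unitSphere_mem_OmegaExt p.1.2 p.2
  have : LocallyCompactSpace (Set.Ioi (1 : ℝ)) := isOpen_Ioi.locallyCompactSpace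
  have h := continuous_parametric_integral_of_continuous (μ := unitSphereMeasure n) hcont
    isCompact_univ
  simp only [Measure.restrict_univ] at h
  exact h

lemma sphereIntegral_congr (h : Set.EqOn f g (OmegaExt n)) (hr : 1 < r) :
    sphereIntegral f r = sphereIntegral g r := by
  simp only [sphereIntegral, h (smul_unitSphere_mem_OmegaExt hr _)]

lemma sphereIntegral_add (hf : ContinuousOn f (OmegaExt n)) (hg : ContinuousOn g (OmegaExt n))
    (hr : 1 < r) :
    sphereIntegral (fun x => f x + g x) r = sphereIntegral f r + sphereIntegral g r := by
  rw [sphereIntegral, integral_add (integrable_comp_smul_unitSphere hf hr)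
    (integrable_comp_smul_unitSphere hg hr), mul_add]
  rfl

lemma sphereIntegral_radial_mul (c : ℝ → ℝ) (f : En n → ℝ) (hr : 0 < r) :
    sphereIntegral (fun x => c ‖x‖ * f x) r = c r * sphereIntegral f r := by
  simp only [sphereIntegral, norm_smul_unitSphere hr, integral_const_mul]
  ring

lemma sphereIntegral_const_mul (c : ℝ) (f : En n → ℝ) (r : ℝ) :
    sphereIntegral (fun x => c * f x) r = c * sphereIntegral f r := by
  simp only [sphereIntegral, integral_const_mul]
  ring

lemma sphereIntegral_sub (hf : ContinuousOn f (OmegaExt n)) (hg : ContinuousOn g (OmegaExt n))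
    (hr : 1 < r) :
    sphereIntegral (fun x => f x - g x) r = sphereIntegral f r - sphereIntegral g r := by
  rw [sphereIntegral, integral_sub (integrable_comp_smul_unitSphere hf hr)
    (integrable_comp_smul_unitSphere hg hr), mul_sub]
  rfl

lemma sphereIntegral_mono (hf : ContinuousOn f (OmegaExt n)) (hg : ContinuousOn g (OmegaExt n))
    (hr : 1 < r) (h : ∀ x ∈ OmegaExt n, f x ≤ g x) : sphereIntegral f r ≤ sphereIntegral g r :=
  mul_le_mul_of_nonneg_left (integral_mono (integrable_comp_smul_unitSphere hf hr)
    (integrable_comp_smul_unitSphere hg hr)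
    fun θ => h _ (smul_unitSphere_mem_OmegaExt hr θ)) (by positivity)

lemma sphereIntegral_nonneg (hr : 1 < r) (h : ∀ x ∈ OmegaExt n, 0 ≤ f x) :
    0 ≤ sphereIntegral f r :=
  mul_nonneg (by positivity) (integral_nonneg fun θ => h _ (smul_unitSphere_mem_OmegaExt hr θ))

lemma eq_zero_of_sphereIntegral_eq_zero (hf : ContinuousOn f (OmegaExt n)) (hr : 1 < r)
    (h : ∀ x ∈ OmegaExt n, 0 ≤ f x) (h0 : sphereIntegral f r = 0) {x : En n} (hx : ‖x‖ = r) :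
    f x = 0 := by
  have hr0 : 0 < r := one_pos.trans hr
  have hint : ∫ θ, f (r • θ.1) ∂unitSphereMeasure n = 0 :=
    (mul_eq_zero.1 h0).resolve_left (by positivity)
  have hzero : (fun θ : sphere (0 : En n) 1 => f (r • θ.1)) = 0 :=
    ((continuous_comp_smul_unitSphere hf hr).ae_eq_iff_eq _ continuous_zero).1
      ((integral_eq_zero_iff_of_nonneg (fun θ => h _ (smul_unitSphere_mem_OmegaExt hr θ))
        (integrable_comp_smul_unitSphere hf hr)).1 hint)
  have hmem : r⁻¹ • x ∈ sphere (0 : En n) 1 := by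
    rw [mem_sphere_zero_iff_norm, norm_smul, hx, Real.norm_of_nonneg (by positivity),
      inv_mul_cancel₀ hr0.ne']
  simpa only [smul_inv_smul₀ hr0.ne', Pi.zero_apply] using congrFun hzero ⟨_, hmem⟩

lemma sq_sphereIntegral_le_mul (hf : ContinuousOn f (OmegaExt n))
    (hg : ContinuousOn g (OmegaExt n)) (hk : ContinuousOn k (OmegaExt n)) (hr : 1 < r)
    (h : ∀ x ∈ OmegaExt n, ∀ t : ℝ, 0 ≤ f x + 2 * t * k x + t ^ 2 * g x) :
    sphereIntegral k r ^ 2 ≤ sphereIntegral f r * sphereIntegral g r := by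
  have hquad : ∀ t : ℝ, 0 ≤ sphereIntegral g r * (t * t) + 2 * sphereIntegral k r * t
      + sphereIntegral f r := by
    intro t
    have hpos := sphereIntegral_nonneg hr fun x hx => h x hx t
    rw [sphereIntegral_add (hf.fun_add (continuousOn_const.fun_mul hk))
      (continuousOn_const.fun_mul hg) hr, sphereIntegral_add hf (continuousOn_const.fun_mul hk) hr,
      sphereIntegral_const_mul, sphereIntegral_const_mul] at hpos
    linarith
  have hdiscrim := discrim_le_zero hquad
  rw [discrim] at hdiscrim
  linarith

end SphereIntegrals

section RadialDerivatives

open scoped ContDiff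

variable {n : ℕ} {P Q P' Q' : En n → ℝ} {η c c' : ℝ → ℝ}

/-- `d/dr ∫_{∂B_r} P = ∫_{∂B_r} Q` for every `r > 1`, with continuous densities `P` and `Q`. -/
structure HasSphereDeriv (P Q : En n → ℝ) : Prop where
  continuousOn : ContinuousOn P (OmegaExt n)
  continuousOn_deriv : ContinuousOn Q (OmegaExt n)
  hasDerivAt : ∀ r, 1 < r → HasDerivAt (sphereIntegral P) (sphereIntegral Q r) r

lemma HasSphereDeriv.add (h : HasSphereDeriv P Q) (h' : HasSphereDeriv P' Q') :
    HasSphereDeriv (fun x => P x + P' x) (fun x => Q x + Q' x) where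
  continuousOn := h.continuousOn.add h'.continuousOn
  continuousOn_deriv := h.continuousOn_deriv.add h'.continuousOn_deriv
  hasDerivAt r hr := by
    rw [sphereIntegral_add h.continuousOn_deriv h'.continuousOn_deriv hr]
    refine ((h.hasDerivAt r hr).add (h'.hasDerivAt r hr)).congr_of_eventuallyEq ?_
    filter_upwards [isOpen_Ioi.mem_nhds hr] with t ht
    exact sphereIntegral_add h.continuousOn h'.continuousOn ht

lemma HasSphereDeriv.congr (h : HasSphereDeriv P Q) (hP : Set.EqOn P' P (OmegaExt n))
    (hQ : Set.EqOn Q' Q (OmegaExt n)) : HasSphereDeriv P' Q' where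
  continuousOn := h.continuousOn.congr hP
  continuousOn_deriv := h.continuousOn_deriv.congr hQ
  hasDerivAt r hr := by
    rw [sphereIntegral_congr hQ hr]
    refine (h.hasDerivAt r hr).congr_of_eventuallyEq ?_
    filter_upwards [isOpen_Ioi.mem_nhds hr] with t ht
    exact sphereIntegral_congr hP ht

lemma continuousOn_comp_norm (hc : ContinuousOn c (Set.Ioi 1)) :
    ContinuousOn (fun x : En n => c ‖x‖) (OmegaExt n) :=
  hc.comp continuous_norm.continuousOn fun _ hx => hx

lemma HasSphereDeriv.radial_mul (h : HasSphereDeriv P Q)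
    (hc : ∀ r, 1 < r → HasDerivAt c (c' r) r) (hc' : ContinuousOn c' (Set.Ioi 1)) :
    HasSphereDeriv (fun x => c ‖x‖ * P x) (fun x => c ‖x‖ * Q x + c' ‖x‖ * P x) := by
  have hcQ := (continuousOn_comp_norm (n := n) fun r hr =>
    (hc r hr).continuousAt.continuousWithinAt).fun_mul h.continuousOn_deriv
  have hc'P := (continuousOn_comp_norm hc').fun_mul h.continuousOn
  refine ⟨(continuousOn_comp_norm fun r hr => (hc r hr).continuousAt.continuousWithinAt).mul
    h.continuousOn, hcQ.add hc'P, fun r hr => ?_⟩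
  have hr0 : 0 < r := one_pos.trans hr
  rw [sphereIntegral_add hcQ hc'P hr, sphereIntegral_radial_mul c Q hr0,
    sphereIntegral_radial_mul c' P hr0, add_comm]
  refine ((hc r hr).mul (h.hasDerivAt r hr)).congr_of_eventuallyEq ?_
  filter_upwards [isOpen_Ioi.mem_nhds hr] with t ht
  exact sphereIntegral_radial_mul c P (one_pos.trans ht)

lemma tsupport_comp_norm_subset (η : ℝ → ℝ) :
    tsupport (fun x : En n => η ‖x‖) ⊆ norm ⁻¹' tsupport η :=
  tsupport_comp_subset_preimage η continuous_norm

lemma tsupport_comp_norm_subset_OmegaExt (hs : tsupport η ⊆ Set.Ioi 1) :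
    tsupport (fun x : En n => η ‖x‖) ⊆ OmegaExt n :=
  fun _ hx => hs (tsupport_comp_norm_subset η hx)

lemma hasCompactSupport_comp_norm (hc : HasCompactSupport η) :
    HasCompactSupport fun x : En n => η ‖x‖ := by
  obtain ⟨b, hb⟩ := hc.isCompact.bddAbove
  refine HasCompactSupport.of_support_subset_isCompact (isCompact_closedBall (0 : En n) b) ?_
  intro x hx
  exact mem_closedBall_zero_iff.2 (hb (tsupport_comp_norm_subset η (subset_tsupport _ hx)))

lemma contDiff_comp_norm (hη : ContDiff ℝ ∞ η) (hs : tsupport η ⊆ Set.Ioi 1) :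
    ContDiff ℝ ∞ fun x : En n => η ‖x‖ :=
  contDiff_of_tsupport_subset (isOpen_OmegaExt n) (tsupport_comp_norm_subset_OmegaExt hs)
    fun x hx => (hη.contDiffAt.comp x (contDiffAt_norm ℝ (norm_pos_iff.1
      (norm_pos_of_mem_OmegaExt hx)))).contDiffWithinAt

lemma setIntegral_sphereIntegral_comp_norm_mul (hs : tsupport η ⊆ Set.Ioi 1) (P : En n → ℝ) :
    ∫ r in Set.Ioi (0 : ℝ), sphereIntegral (fun x => η ‖x‖ * P x) r =
      ∫ r, η r * sphereIntegral P r := by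
  rw [setIntegral_congr_fun measurableSet_Ioi fun r hr => sphereIntegral_radial_mul η P hr]
  refine setIntegral_eq_integral_of_forall_compl_eq_zero fun r hr => ?_
  have hr' : r ∉ tsupport η := fun h => hr (Set.Ioi_subset_Ioi zero_le_one (hs h))
  rw [image_eq_zero_of_notMem_tsupport hr', zero_mul]

lemma HasSphereDeriv.of_radial_test [NeZero n] (hP : ContinuousOn P (OmegaExt n))
    (hQ : ContinuousOn Q (OmegaExt n))
    (h : ∀ η : ℝ → ℝ, ContDiff ℝ ∞ η → HasCompactSupport η → tsupport η ⊆ Set.Ioi 1 →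
      ∫ x : En n, (deriv η ‖x‖ * P x + η ‖x‖ * Q x) = 0) : HasSphereDeriv P Q := by
  refine ⟨hP, hQ, fun r hr => hasDerivAt_of_integral_deriv_mul_add_eq_zero
    (continuousOn_sphereIntegral hP) (continuousOn_sphereIntegral hQ) (fun η hη hc hs => ?_) hr⟩
  have hη' : Continuous (deriv η) := hη.continuous_deriv (by simp)
  have hs' : tsupport (deriv η) ⊆ Set.Ioi 1 := tsupport_deriv_subset.trans hs
  have hintP := integrable_mul_of_tsupport_subset (μ := volume) (isOpen_OmegaExt n)
    (hη'.comp continuous_norm) (hasCompactSupport_comp_norm hc.deriv)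
    (tsupport_comp_norm_subset_OmegaExt hs') hP
  have hintQ := integrable_mul_of_tsupport_subset (μ := volume) (isOpen_OmegaExt n)
    (hη.continuous.comp continuous_norm) (hasCompactSupport_comp_norm hc)
    (tsupport_comp_norm_subset_OmegaExt hs) hQ
  rw [Function.comp_def] at hintP hintQ
  rw [integral_add, ← setIntegral_sphereIntegral_comp_norm_mul hs' P,
    ← setIntegral_sphereIntegral_comp_norm_mul hs Q,
    ← integral_eq_setIntegral_sphereIntegral hintP, ← integral_eq_setIntegral_sphereIntegral hintQ,
    ← integral_add hintP hintQ]
  · exact h η hη hc hs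
  · exact integrable_mul_of_tsupport_subset isOpen_Ioi hη' hc.deriv hs'
      (continuousOn_sphereIntegral hP)
  · exact integrable_mul_of_tsupport_subset isOpen_Ioi hη.continuous hc hs
      (continuousOn_sphereIntegral hQ)

end RadialDerivatives

section SmoothApproximation

open scoped ContDiff Convolution Topology Manifold

variable {E : Type*} [NormedAddCommGroup E] [InnerProductSpace ℝ E] [FiniteDimensional ℝ E]
  {U : Set E} {φ : E → ℝ}

lemma exists_contDiff_cutoff {K : Set E} (hU : IsOpen U) (hK : IsCompact K) (hKU : K ⊆ U) :
    ∃ χ : E → ℝ, ContDiff ℝ ∞ χ ∧ HasCompactSupport χ ∧ tsupport χ ⊆ U ∧ (∀ x, 0 ≤ χ x) ∧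
      ∀ x ∈ K, χ =ᶠ[𝓝 x] 1 := by
  obtain ⟨L, hL, hKL, hLU⟩ := exists_compact_between hK hU hKU
  obtain ⟨χ, hχ1, hχ0, hχI⟩ :=
    exists_contMDiffMap_one_nhds_of_subset_interior (n := (⊤ : ℕ∞)) 𝓘(ℝ, E)
      hK.isClosed hKL
  have hχL : Function.support χ ⊆ L := fun x hx => by_contra fun h => hx (hχ0 x h)
  exact ⟨χ, χ.contMDiff.contDiff, HasCompactSupport.of_support_subset_isCompact hL hχL,
    (closure_minimal hχL hL.isClosed).trans hLU, fun x => (hχI x).1,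
    fun x hx => eventually_nhdsSet_iff_forall.1 hχ1 x hx⟩

lemma exists_contDiff_eventuallyEq {K : Set E} (hU : IsOpen U) (hK : IsCompact K) (hKU : K ⊆ U)
    (hφ : ContDiffOn ℝ 1 φ U) :
    ∃ ψ : E → ℝ, ContDiff ℝ 1 ψ ∧ HasCompactSupport ψ ∧ ∀ x ∈ K, ψ =ᶠ[𝓝 x] φ := by
  obtain ⟨χ, hχ, hχc, hχs, -, hχ1⟩ := exists_contDiff_cutoff hU hK hKU
  refine ⟨fun y => χ y * φ y, contDiff_mul_of_tsupport_subset hU (hχ.of_le (by simp)) hχs hφ,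
    hχc.mul_right, fun x hx => ?_⟩
  filter_upwards [hχ1 x hx] with y hy
  simp only [hy, Pi.one_apply, one_mul]

lemma exists_contDiff_approx {δ ε : ℝ} (hδ : 0 < δ) (hε : 0 < ε) (hφ : ContDiff ℝ 1 φ)
    (hc : HasCompactSupport φ) :
    ∃ ψ : E → ℝ, ContDiff ℝ ∞ ψ ∧ tsupport ψ ⊆ cthickening δ (tsupport φ) ∧
      ∀ x, |φ x - ψ x| ≤ ε ∧ ‖fderiv ℝ φ x - fderiv ℝ ψ x‖ ≤ ε := by
  borelize E
  obtain ⟨d, hd, hφd⟩ := uniformContinuous_iff.1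
    (hc.uniformContinuous_of_continuous hφ.continuous) ε hε
  obtain ⟨d', hd', hφd'⟩ := uniformContinuous_iff.1
    ((hc.fderiv ℝ).uniformContinuous_of_continuous (hφ.continuous_fderiv one_ne_zero)) ε hε
  have hR : 0 < min δ (min d d') := by positivity
  let b : ContDiffBump (0 : E) := ⟨min δ (min d d') / 2, min δ (min d d'), by linarith, by linarith⟩
  let μ : Measure E := Measure.addHaar
  have hb : LocallyIntegrable (b.normed μ) μ := b.continuous_normed.locallyIntegrable
  refine ⟨b.normed μ ⋆[ContinuousLinearMap.lsmul ℝ ℝ, μ] φ,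
    b.hasCompactSupport_normed.contDiff_convolution_left _ b.contDiff_normed
      hφ.continuous.locallyIntegrable, closure_minimal ?_ isClosed_cthickening, fun x => ⟨?_, ?_⟩⟩
  · rintro _ hx
    obtain ⟨y, hy, z, hz, rfl⟩ := support_convolution_subset _ hx
    rw [b.support_normed_eq, mem_ball_zero_iff] at hy
    refine mem_cthickening_of_dist_le _ z δ _ (subset_tsupport _ hz) ?_
    rw [dist_eq_norm, add_sub_cancel_right]
    exact hy.le.trans (min_le_left _ _)
  · rw [← Real.dist_eq, dist_comm]
    refine b.dist_normed_convolution_le hφ.continuous.aestronglyMeasurable fun y hy => ?_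
    exact (hφd (hy.trans_le ((min_le_right _ _).trans (min_le_left _ _)))).le
  · refine ContinuousLinearMap.opNorm_le_bound _ hε.le fun v => ?_
    have hψv : fderiv ℝ (b.normed μ ⋆[ContinuousLinearMap.lsmul ℝ ℝ, μ] φ) x v =
        (b.normed μ ⋆[ContinuousLinearMap.lsmul ℝ ℝ, μ] fun y => fderiv ℝ φ y v) x := by
      rw [(hc.hasFDerivAt_convolution_right _ hb hφ x).fderiv]
      exact convolution_precompR_apply _ hb (hc.fderiv ℝ) (hφ.continuous_fderiv one_ne_zero) x v
    rw [sub_apply, hψv, norm_sub_rev, ← dist_eq_norm]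
    refine b.dist_normed_convolution_le
      ((hφ.continuous_fderiv one_ne_zero).clm_apply continuous_const).aestronglyMeasurable
      fun y hy => ?_
    rw [dist_eq_norm, ← sub_apply]
    exact ContinuousLinearMap.le_of_opNorm_le _ (by
      rw [← dist_eq_norm]
      exact (hφd' (hy.trans_le ((min_le_right _ _).trans (min_le_right _ _)))).le) v

end SmoothApproximation

section PartialDerivatives

open scoped Topology

variable {n : ℕ} (i : Fin n) {f g : En n → ℝ} {x : En n}

/-- The partial derivative `∂f/∂xᵢ`. -/
def pderiv (f : En n → ℝ) (x : En n) : ℝ := fderiv ℝ f x (EuclideanSpace.single i 1)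

lemma gradient_apply_eq_pderiv (f : En n → ℝ) (x : En n) : gradient f x i = pderiv i f x := by
  have h : inner ℝ (gradient f x) (EuclideanSpace.single i 1) = pderiv i f x :=
    InnerProductSpace.toDual_symm_apply
  rw [← h, EuclideanSpace.inner_single_right]
  simp

lemma abs_pderiv_le (f : En n → ℝ) (x : En n) : |pderiv i f x| ≤ ‖fderiv ℝ f x‖ := by
  simpa [pderiv] using (fderiv ℝ f x).le_opNorm (EuclideanSpace.single i 1)

lemma continuous_pderiv (hf : ContDiff ℝ 1 f) : Continuous (pderiv i f) :=
  (hf.continuous_fderiv one_ne_zero).clm_apply continuous_const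

lemma continuousOn_pderiv (hf : ContDiffOn ℝ 1 f (OmegaExt n)) :
    ContinuousOn (pderiv i f) (OmegaExt n) :=
  (hf.continuousOn_fderiv_of_isOpen (isOpen_OmegaExt n) le_rfl).clm_apply continuousOn_const

lemma differentiableAt_of_mem_OmegaExt (hf : ContDiffOn ℝ 1 f (OmegaExt n))
    (hx : x ∈ OmegaExt n) : DifferentiableAt ℝ f x :=
  (hf.contDiffAt ((isOpen_OmegaExt n).mem_nhds hx)).differentiableAt one_ne_zero

lemma pderiv_mul (hf : DifferentiableAt ℝ f x) (hg : DifferentiableAt ℝ g x) :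
    pderiv i (fun y => f y * g y) x = pderiv i f x * g x + f x * pderiv i g x := by
  rw [pderiv, fderiv_fun_mul hf hg]
  simp only [add_apply, smul_apply, smul_eq_mul, pderiv]
  ring

lemma pderiv_add (hf : DifferentiableAt ℝ f x) (hg : DifferentiableAt ℝ g x) :
    pderiv i (fun y => f y + g y) x = pderiv i f x + pderiv i g x := by
  rw [pderiv, fderiv_fun_add hf hg]
  rfl

lemma pderiv_sub (hf : DifferentiableAt ℝ f x) (hg : DifferentiableAt ℝ g x) :
    pderiv i (fun y => f y - g y) x = pderiv i f x - pderiv i g x := by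
  rw [pderiv, fderiv_fun_sub hf hg]
  rfl

lemma pderiv_congr (h : f =ᶠ[𝓝 x] g) : pderiv i f x = pderiv i g x := by
  rw [pderiv, h.fderiv_eq, pderiv]

lemma pderiv_eq_zero_of_notMem_tsupport (hx : x ∉ tsupport f) : pderiv i f x = 0 := by
  rw [pderiv, fderiv_of_notMem_tsupport ℝ hx, zero_apply]

lemma hasCompactSupport_pderiv (hc : HasCompactSupport f) : HasCompactSupport (pderiv i f) :=
  hc.fderiv_apply ℝ _

lemma integrable_pderiv (hf : ContDiff ℝ 1 f) (hc : HasCompactSupport f) :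
    Integrable (pderiv i f) :=
  (continuous_pderiv i hf).integrable_of_hasCompactSupport (hasCompactSupport_pderiv i hc)

lemma integral_pderiv_eq_zero (hf : ContDiff ℝ 1 f) (hc : HasCompactSupport f) :
    ∫ x, pderiv i f x = 0 := by
  have h := integral_mul_fderiv_eq_neg_fderiv_mul_of_integrable (μ := (volume : Measure (En n)))
    (f := fun _ => (1 : ℝ)) (g := f) (v := EuclideanSpace.single i 1) (by simp)
    (by simp only [one_mul]; exact integrable_pderiv i hf hc)
    (by simpa only [one_mul] using hf.continuous.integrable_of_hasCompactSupport hc)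
    (fun _ _ => differentiableAt_const 1) fun x _ => hf.differentiable one_ne_zero x
  simpa [pderiv] using h

end PartialDerivatives

section WeakForm

open scoped Topology ContDiff Matrix

variable {n : ℕ}

/-- The coordinate vector of the gradient `∇f`, used for matrix-vector algebra. -/
def grad (f : En n → ℝ) (x : En n) : Fin n → ℝ := fun i => pderiv i f x

/-- The flux `A∇u` of the equation `-div(A∇u) = u`. -/
def flux (A : En n → Matrix (Fin n) (Fin n) ℝ) (u : En n → ℝ) (x : En n) : Fin n → ℝ :=
  A x *ᵥ grad u x

/-- The integrand `⟨A∇u, ∇φ⟩ - uφ` of the weak formulation tested against `φ`. -/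
def weakDensity (A : En n → Matrix (Fin n) (Fin n) ℝ) (u φ : En n → ℝ) (x : En n) : ℝ :=
  flux A u x ⬝ᵥ grad φ x - u x * φ x

variable {A : En n → Matrix (Fin n) (Fin n) ℝ} {u φ ψ f g : En n → ℝ} {x : En n}

lemma continuousOn_dotProduct {X : Type*} [TopologicalSpace X] {s : Set X} {v w : X → Fin n → ℝ}
    (hv : ContinuousOn v s) (hw : ContinuousOn w s) : ContinuousOn (fun x => v x ⬝ᵥ w x) s :=
  continuousOn_iff_continuous_domRestrict.2 (hv.domRestrict.dotProduct hw.domRestrict)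

lemma continuousOn_mulVec {X : Type*} [TopologicalSpace X] {s : Set X}
    {M : X → Matrix (Fin n) (Fin n) ℝ} {v : X → Fin n → ℝ}
    (hM : ∀ i j, ContinuousOn (fun x => M x i j) s) (hv : ContinuousOn v s) :
    ContinuousOn (fun x => M x *ᵥ v x) s :=
  continuousOn_pi.2 fun i => continuousOn_dotProduct (continuousOn_pi.2 (hM i)) hv

lemma continuousOn_grad (hf : ContDiffOn ℝ 1 f (OmegaExt n)) :
    ContinuousOn (grad f) (OmegaExt n) :=
  continuousOn_pi.2 fun i => continuousOn_pderiv i hf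

lemma continuous_grad (hf : ContDiff ℝ 1 f) : Continuous (grad f) :=
  continuous_pi fun i => continuous_pderiv i hf

lemma grad_mul (hf : DifferentiableAt ℝ f x) (hg : DifferentiableAt ℝ g x) :
    grad (fun y => f y * g y) x = g x • grad f x + f x • grad g x := by
  ext i
  rw [grad, pderiv_mul i hf hg, mul_comm (pderiv i f x)]
  rfl

lemma grad_sub (hf : DifferentiableAt ℝ f x) (hg : DifferentiableAt ℝ g x) :
    grad (fun y => f y - g y) x = grad f x - grad g x :=
  funext fun i => pderiv_sub i hf hg

lemma grad_congr (h : f =ᶠ[𝓝 x] g) : grad f x = grad g x :=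
  funext fun i => pderiv_congr i h

lemma grad_eq_zero_of_notMem_tsupport (hx : x ∉ tsupport f) : grad f x = 0 :=
  funext fun i => pderiv_eq_zero_of_notMem_tsupport i hx

lemma continuousOn_flux (hA : ∀ i j, ContDiffOn ℝ 1 (fun x => A x i j) (OmegaExt n))
    (hu : ContDiffOn ℝ 1 u (OmegaExt n)) : ContinuousOn (flux A u) (OmegaExt n) :=
  continuousOn_mulVec (fun i j => (hA i j).continuousOn) (continuousOn_grad hu)

lemma integrable_of_continuousOn_isCompact {K : Set (En n)} (hK : IsCompact K)
    (hf : ContinuousOn f K) (h0 : ∀ x ∉ K, f x = 0) : Integrable f :=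
  (integrableOn_iff_integrable_of_support_subset fun x hx => by_contra fun h => hx (h0 x h)).1
    (hf.integrableOn_compact hK)

lemma weakDensity_eq_zero_of_notMem_tsupport (hx : x ∉ tsupport φ) :
    weakDensity A u φ x = 0 := by
  rw [weakDensity, grad_eq_zero_of_notMem_tsupport hx, image_eq_zero_of_notMem_tsupport hx]
  simp

lemma weakDensity_sub (hφ : DifferentiableAt ℝ φ x) (hψ : DifferentiableAt ℝ ψ x) :
    weakDensity A u (fun y => φ y - ψ y) x = weakDensity A u φ x - weakDensity A u ψ x := by
  simp only [weakDensity, grad_sub hφ hψ, dotProduct_sub]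
  ring

lemma abs_weakDensity_le {ε : ℝ} (h : |φ x| ≤ ε) (h' : ‖fderiv ℝ φ x‖ ≤ ε) :
    |weakDensity A u φ x| ≤ ε * (∑ i, |flux A u x i| + |u x|) := by
  have hflux : |flux A u x ⬝ᵥ grad φ x| ≤ ∑ i, |flux A u x i| * ε := by
    refine (Finset.abs_sum_le_sum_abs _ _).trans (Finset.sum_le_sum fun i _ => ?_)
    rw [abs_mul]
    gcongr
    exact (abs_pderiv_le i φ x).trans h'
  calc |weakDensity A u φ x| ≤ |flux A u x ⬝ᵥ grad φ x| + |u x| * |φ x| := by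
        rw [← abs_mul]; exact abs_sub _ _
    _ ≤ ∑ i, |flux A u x i| * ε + |u x| * ε := by gcongr
    _ = _ := by rw [← Finset.sum_mul]; ring

lemma integrable_weakDensity (hA : ∀ i j, ContDiffOn ℝ 1 (fun x => A x i j) (OmegaExt n))
    (hu : ContDiffOn ℝ 1 u (OmegaExt n)) (hφ : ContDiff ℝ 1 φ) (hc : HasCompactSupport φ)
    (hs : tsupport φ ⊆ OmegaExt n) : Integrable (weakDensity A u φ) :=
  integrable_of_continuousOn_isCompact hc
    (((continuousOn_dotProduct (continuousOn_flux hA hu) (continuous_grad hφ).continuousOn).sub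
      (hu.continuousOn.mul hφ.continuous.continuousOn)).mono hs)
    fun _ => weakDensity_eq_zero_of_notMem_tsupport

lemma abs_integral_weakDensity_le {K : Set (En n)} {ε : ℝ}
    (hA : ∀ i j, ContDiffOn ℝ 1 (fun x => A x i j) (OmegaExt n))
    (hu : ContDiffOn ℝ 1 u (OmegaExt n)) (hK : IsCompact K) (hKΩ : K ⊆ OmegaExt n)
    (hφK : tsupport φ ⊆ K) (h : ∀ x, |φ x| ≤ ε) (h' : ∀ x, ‖fderiv ℝ φ x‖ ≤ ε) :
    |∫ x, weakDensity A u φ x| ≤ ε * ∫ x in K, (∑ i, |flux A u x i| + |u x|) := by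
  have hV : IntegrableOn (fun x => ∑ i, |flux A u x i| + |u x|) K := by
    have hflux := continuousOn_pi.1 (continuousOn_flux hA hu)
    exact (((continuousOn_finsetSum _ fun i _ => (hflux i).abs).add
      hu.continuousOn.abs).mono hKΩ).integrableOn_compact hK
  rw [← integral_const_mul, ← integral_indicator hK.measurableSet, ← Real.norm_eq_abs]
  refine norm_integral_le_of_norm_le
    ((integrable_indicator_iff hK.measurableSet).2 (hV.const_mul ε)) (.of_forall fun x => ?_)
  by_cases hx : x ∈ K
  · rw [Set.indicator_of_mem hx]
    exact abs_weakDensity_le (h x) (h' x)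
  · rw [Set.indicator_of_notMem hx, weakDensity_eq_zero_of_notMem_tsupport fun h => hx (hφK h),
      norm_zero]

namespace WeakSol

lemma integral_weakDensity_eq_zero_of_smooth
    (hA : ∀ i j, ContDiffOn ℝ 1 (fun x => A x i j) (OmegaExt n)) (hu : WeakSol A u)
    (hφ : ContDiff ℝ ∞ φ) (hc : HasCompactSupport φ) (hs : tsupport φ ⊆ OmegaExt n) :
    ∫ x, weakDensity A u φ x = 0 := by
  have hφ1 : ContDiff ℝ 1 φ := hφ.of_le (by simp)
  have hflux : ∀ x, ∑ i, (A x).mulVec (fun j => gradient u x j) i * gradient φ x i =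
      flux A u x ⬝ᵥ grad φ x := fun x => by
    simp only [gradient_apply_eq_pderiv]
    rfl
  have h := hu.2 φ hφ hc hs
  simp only [hflux] at h
  rw [← setIntegral_eq_integral_of_forall_compl_eq_zero fun x hx =>
    weakDensity_eq_zero_of_notMem_tsupport fun hx' => hx (hs hx')]
  simp only [weakDensity]
  rw [integral_sub, h, sub_self]
  · exact (integrable_of_continuousOn_isCompact hc ((continuousOn_dotProduct
      (continuousOn_flux hA hu.1) (continuous_grad hφ1).continuousOn).mono hs) fun x hx => by
        rw [grad_eq_zero_of_notMem_tsupport hx, dotProduct_zero]).integrableOn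
  · exact (integrable_of_continuousOn_isCompact hc
      ((hu.1.continuousOn.mul hφ.continuous.continuousOn).mono hs) fun x hx => by
        rw [Pi.mul_apply, image_eq_zero_of_notMem_tsupport hx, mul_zero]).integrableOn

theorem integral_weakDensity_eq_zero
    (hA : ∀ i j, ContDiffOn ℝ 1 (fun x => A x i j) (OmegaExt n)) (hu : WeakSol A u)
    (hφ : ContDiff ℝ 1 φ) (hc : HasCompactSupport φ) (hs : tsupport φ ⊆ OmegaExt n) :
    ∫ x, weakDensity A u φ x = 0 := by
  obtain ⟨δ, hδ, hδs⟩ := hc.isCompact.exists_cthickening_subset_open (isOpen_OmegaExt n) hs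
  set K := cthickening δ (tsupport φ)
  have hK : IsCompact K := hc.isCompact.cthickening
  set M := ∫ x in K, (∑ i, |flux A u x i| + |u x|)
  have hbound : ∀ ε > 0, |∫ x, weakDensity A u φ x| ≤ ε * M := by
    intro ε hε
    obtain ⟨ψ, hψ, hψK, hψφ⟩ := exists_contDiff_approx hδ hε hφ hc
    have hψ1 : ContDiff ℝ 1 ψ := hψ.of_le (by simp)
    have hψc : HasCompactSupport ψ := hK.of_isClosed_subset (isClosed_tsupport _) hψK
    have hdφ := fun x => hφ.differentiable one_ne_zero x
    have hdψ := fun x => hψ1.differentiable one_ne_zero x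
    have hdiff : ∫ x, weakDensity A u (fun y => φ y - ψ y) x = ∫ x, weakDensity A u φ x := by
      simp only [weakDensity_sub (hdφ _) (hdψ _)]
      rw [integral_sub (integrable_weakDensity hA hu.1 hφ hc hs)
        (integrable_weakDensity hA hu.1 hψ1 hψc (hψK.trans hδs)),
        integral_weakDensity_eq_zero_of_smooth hA hu hψ hψc (hψK.trans hδs), sub_zero]
    rw [← hdiff]
    refine abs_integral_weakDensity_le hA hu.1 hK hδs ?_ (fun x => (hψφ x).1) fun x => ?_
    · exact (tsupport_sub φ ψ).trans (Set.union_subset (self_subset_cthickening _) hψK)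
    · rw [fderiv_fun_sub (hdφ x) (hdψ x)]
      exact (hψφ x).2
  have hlim : Tendsto (fun ε => ε * M) (𝓝[>] 0) (𝓝 0) :=
    tendsto_nhdsWithin_of_tendsto_nhds (Continuous.tendsto' (by fun_prop) _ _ (zero_mul M))
  exact abs_nonpos_iff.1 (ge_of_tendsto hlim (eventually_mem_nhdsWithin.mono hbound))

end WeakSol

end WeakForm

section WeakDivergence

open scoped Topology ContDiff Matrix

variable {n : ℕ} {F : En n → Fin n → ℝ} {g v ζ : En n → ℝ} {x : En n}

/-- `div F = g` in `Ω` in the sense of distributions, for continuous `F` and `g`; only `C¹` test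
functions with compact support are used. -/
structure HasWeakDivergence (F : En n → Fin n → ℝ) (g : En n → ℝ) : Prop where
  continuousOn : ContinuousOn F (OmegaExt n)
  continuousOn_divergence : ContinuousOn g (OmegaExt n)
  integral_eq_zero : ∀ ζ : En n → ℝ, ContDiff ℝ 1 ζ → HasCompactSupport ζ →
    tsupport ζ ⊆ OmegaExt n → ∫ x, (F x ⬝ᵥ grad ζ x + g x * ζ x) = 0

lemma dotProduct_grad_add_mul_eq_zero (hx : x ∉ tsupport ζ) :
    F x ⬝ᵥ grad ζ x + g x * ζ x = 0 := by
  rw [grad_eq_zero_of_notMem_tsupport hx, image_eq_zero_of_notMem_tsupport hx, dotProduct_zero,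
    mul_zero, add_zero]

lemma integrable_dotProduct_grad_add_mul (hF : ContinuousOn F (OmegaExt n))
    (hg : ContinuousOn g (OmegaExt n)) (hζ : ContDiff ℝ 1 ζ) (hc : HasCompactSupport ζ)
    (hs : tsupport ζ ⊆ OmegaExt n) : Integrable fun x => F x ⬝ᵥ grad ζ x + g x * ζ x :=
  integrable_of_continuousOn_isCompact hc
    (((continuousOn_dotProduct hF (continuous_grad hζ).continuousOn).add
      (hg.mul hζ.continuous.continuousOn)).mono hs) fun _ => dotProduct_grad_add_mul_eq_zero

lemma exists_contDiff_nonneg_add {U : Set (En n)} (hU : IsOpen U) (hζ : ContDiff ℝ 1 ζ)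
    (hc : HasCompactSupport ζ) (hs : tsupport ζ ⊆ U) :
    ∃ ψ : En n → ℝ, ContDiff ℝ 1 ψ ∧ HasCompactSupport ψ ∧ tsupport ψ ⊆ U ∧ (∀ x, 0 ≤ ψ x) ∧
      ∀ x, 0 ≤ ζ x + ψ x := by
  obtain ⟨χ, hχ, hχc, hχs, hχ0, hχ1⟩ := exists_contDiff_cutoff hU hc.isCompact hs
  obtain ⟨M, hM⟩ := hζ.continuous.bounded_above_of_compact_support hc
  have hψ0 : ∀ x, 0 ≤ M * χ x := fun x => mul_nonneg ((norm_nonneg _).trans (hM 0)) (hχ0 x)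
  refine ⟨fun x => M * χ x, contDiff_const.mul (hχ.of_le (by simp)), hχc.mul_left,
    tsupport_mul_subset_right.trans hχs, hψ0, fun x => ?_⟩
  by_cases hx : x ∈ tsupport ζ
  · simp only [(hχ1 x hx).eq_of_nhds, Pi.one_apply, mul_one]
    linarith [neg_le_of_abs_le (hM x)]
  · rw [image_eq_zero_of_notMem_tsupport hx, zero_add]
    exact hψ0 x

namespace HasWeakDivergence

lemma of_nonneg (hF : ContinuousOn F (OmegaExt n)) (hg : ContinuousOn g (OmegaExt n))
    (h : ∀ ζ : En n → ℝ, ContDiff ℝ 1 ζ → HasCompactSupport ζ → tsupport ζ ⊆ OmegaExt n →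
      (∀ x, 0 ≤ ζ x) → ∫ x, (F x ⬝ᵥ grad ζ x + g x * ζ x) = 0) : HasWeakDivergence F g := by
  refine ⟨hF, hg, fun ζ hζ hc hs => ?_⟩
  obtain ⟨ψ, hψ, hψc, hψs, hψ0, hζψ⟩ := exists_contDiff_nonneg_add (isOpen_OmegaExt n) hζ hc hs
  set φ : En n → ℝ := fun x => ζ x + ψ x
  have hφ : ContDiff ℝ 1 φ := hζ.add hψ
  have hφc : HasCompactSupport φ := hc.add hψc
  have hφs : tsupport φ ⊆ OmegaExt n := (tsupport_add ζ ψ).trans (Set.union_subset hs hψs)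
  have hsub : ∀ x, F x ⬝ᵥ grad ζ x + g x * ζ x =
      (F x ⬝ᵥ grad φ x + g x * φ x) - (F x ⬝ᵥ grad ψ x + g x * ψ x) := fun x => by
    have hζφ : ζ = fun y => φ y - ψ y := by ext y; simp only [φ, add_sub_cancel_right]
    rw [hζφ, grad_sub (hφ.differentiable one_ne_zero x) (hψ.differentiable one_ne_zero x),
      dotProduct_sub]
    ring
  simp only [hsub]
  rw [integral_sub (integrable_dotProduct_grad_add_mul hF hg hφ hφc hφs)
    (integrable_dotProduct_grad_add_mul hF hg hψ hψc hψs), h φ hφ hφc hφs hζψ,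
    h ψ hψ hψc hψs hψ0, sub_zero]

lemma smul (hF : HasWeakDivergence F g) (hv : ContDiffOn ℝ 1 v (OmegaExt n)) :
    HasWeakDivergence (fun x => v x • F x) fun x => F x ⬝ᵥ grad v x + v x * g x := by
  refine ⟨hv.continuousOn.smul hF.continuousOn, (continuousOn_dotProduct hF.continuousOn
    (continuousOn_grad hv)).add (hv.continuousOn.mul hF.continuousOn_divergence),
    fun ζ hζ hc hs => ?_⟩
  have hζv := contDiff_mul_of_tsupport_subset (isOpen_OmegaExt n) hζ hs hv
  rw [← hF.integral_eq_zero _ hζv hc.mul_right (tsupport_mul_subset_left.trans hs)]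
  congr 1
  ext x
  by_cases hx : x ∈ tsupport ζ
  · rw [grad_mul (hζ.differentiable one_ne_zero x) (differentiableAt_of_mem_OmegaExt hv (hs hx))]
    simp only [smul_dotProduct, dotProduct_smul, dotProduct_add, smul_eq_mul]
    ring
  · rw [dotProduct_grad_add_mul_eq_zero fun h => hx (tsupport_mul_subset_left h)]
    exact dotProduct_grad_add_mul_eq_zero (F := fun y => v y • F y)
      (g := fun y => F y ⬝ᵥ grad v y + v y * g y) hx

lemma sum {F : Fin n → En n → Fin n → ℝ} {g : Fin n → En n → ℝ}
    (hF : ∀ m, HasWeakDivergence (F m) (g m)) :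
    HasWeakDivergence (fun x => ∑ m, F m x) fun x => ∑ m, g m x := by
  refine ⟨continuousOn_finsetSum _ fun m _ => (hF m).continuousOn,
    continuousOn_finsetSum _ fun m _ => (hF m).continuousOn_divergence, fun ζ hζ hc hs => ?_⟩
  simp only [sum_dotProduct, Finset.sum_mul, ← Finset.sum_add_distrib]
  rw [integral_finsetSum _ fun m _ => integrable_dotProduct_grad_add_mul (hF m).continuousOn
    (hF m).continuousOn_divergence hζ hc hs]
  exact Finset.sum_eq_zero fun m _ => (hF m).integral_eq_zero ζ hζ hc hs

end HasWeakDivergence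

/-- The divergence `∑ᵢ ∂Fᵢ/∂xᵢ`. -/
def divergence (F : En n → Fin n → ℝ) (x : En n) : ℝ := ∑ i, pderiv i (fun y => F y i) x

lemma hasWeakDivergence_divergence (hF : ∀ i, ContDiffOn ℝ 1 (fun x => F x i) (OmegaExt n)) :
    HasWeakDivergence F (divergence F) := by
  refine ⟨continuousOn_pi.2 fun i => (hF i).continuousOn,
    continuousOn_finsetSum _ fun i _ => continuousOn_pderiv i (hF i), fun ζ hζ hc hs => ?_⟩
  have hζF := fun i => contDiff_mul_of_tsupport_subset (isOpen_OmegaExt n) hζ hs (hF i)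
  have hsum : ∀ x, F x ⬝ᵥ grad ζ x + divergence F x * ζ x =
      ∑ i, pderiv i (fun y => ζ y * F y i) x := fun x => by
    by_cases hx : x ∈ tsupport ζ
    · rw [dotProduct, divergence, Finset.sum_mul, ← Finset.sum_add_distrib]
      refine Finset.sum_congr rfl fun i _ => ?_
      rw [pderiv_mul i (hζ.differentiable one_ne_zero x)
        (differentiableAt_of_mem_OmegaExt (hF i) (hs hx)), grad]
      ring
    · rw [dotProduct_grad_add_mul_eq_zero hx]
      exact (Finset.sum_eq_zero fun i _ => pderiv_eq_zero_of_notMem_tsupport i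
        fun h => hx (tsupport_mul_subset_left h)).symm
  simp only [hsum]
  rw [integral_finsetSum _ fun i _ => integrable_pderiv i (hζF i) hc.mul_right]
  exact Finset.sum_eq_zero fun i _ => integral_pderiv_eq_zero i (hζF i) hc.mul_right

lemma WeakSol.hasWeakDivergence_flux {A : En n → Matrix (Fin n) (Fin n) ℝ} {u : En n → ℝ}
    (hA : ∀ i j, ContDiffOn ℝ 1 (fun x => A x i j) (OmegaExt n)) (hu : WeakSol A u) :
    HasWeakDivergence (flux A u) fun x => -u x where
  continuousOn := continuousOn_flux hA hu.1
  continuousOn_divergence := hu.1.continuousOn.neg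
  integral_eq_zero ζ hζ hc hs := by
    simp only [neg_mul, ← sub_eq_add_neg]
    exact hu.integral_weakDensity_eq_zero hA hζ hc hs

/-- The radial unit vector `∇r = x/|x|`. -/
def radial (x : En n) : Fin n → ℝ := fun i => x i / ‖x‖

lemma continuousOn_radial : ContinuousOn (radial (n := n)) (OmegaExt n) :=
  continuousOn_pi.2 fun _ => ContinuousOn.div (by fun_prop) (by fun_prop) fun _ hx =>
    (norm_pos_of_mem_OmegaExt hx).ne'

lemma grad_comp_norm {c : ℝ → ℝ} {c' : ℝ} (hx : x ≠ 0) (hc : HasDerivAt c c' ‖x‖) :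
    grad (fun y => c ‖y‖) x = c' • radial x := by
  have hnorm : HasFDerivAt (fun y : En n => ‖y‖) (‖x‖⁻¹ • innerSL ℝ x) x := by
    have h := (hasStrictFDerivAt_norm_sq x).hasFDerivAt.sqrt (by simpa using hx)
    simp only [Real.sqrt_sq (norm_nonneg _)] at h
    refine h.congr_fderiv ?_
    rw [← Nat.cast_smul_eq_nsmul ℝ, smul_smul]
    congr 1
    field
  ext i
  have hcomp : HasFDerivAt (fun y => c ‖y‖) (c' • ‖x‖⁻¹ • innerSL ℝ x) x :=
    hc.comp_hasFDerivAt x hnorm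
  rw [grad, pderiv, hcomp.fderiv]
  simp [radial, EuclideanSpace.inner_single_right, div_eq_inv_mul]

lemma HasWeakDivergence.hasSphereDeriv [NeZero n] (hF : HasWeakDivergence F g) :
    HasSphereDeriv (fun x => radial x ⬝ᵥ F x) g := by
  refine .of_radial_test (continuousOn_dotProduct continuousOn_radial hF.continuousOn)
    hF.continuousOn_divergence fun η hη hc hs => ?_
  rw [← hF.integral_eq_zero _ ((contDiff_comp_norm hη hs).of_le (by simp))
    (hasCompactSupport_comp_norm hc) (tsupport_comp_norm_subset_OmegaExt hs)]
  congr 1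
  ext x
  by_cases hx : x ∈ OmegaExt n
  · rw [grad_comp_norm (norm_pos_iff.1 (norm_pos_of_mem_OmegaExt hx))
      (hη.differentiable (by simp) _).hasDerivAt, dotProduct_smul, dotProduct_comm, smul_eq_mul]
    ring
  · have hη0 : ‖x‖ ∉ tsupport η := fun h => hx (hs h)
    rw [dotProduct_grad_add_mul_eq_zero fun h => hx (tsupport_comp_norm_subset_OmegaExt hs h),
      image_eq_zero_of_notMem_tsupport hη0,
      image_eq_zero_of_notMem_tsupport fun h => hη0 (tsupport_deriv_subset h)]
    ring

end WeakDivergence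

section Rellich

open scoped Topology ContDiff Matrix

variable {n : ℕ} {a A : En n → Matrix (Fin n) (Fin n) ℝ} {U V u f k ζ : En n → ℝ} {x : En n}

lemma mulVec_dotProduct_eq_sum (M : Matrix (Fin n) (Fin n) ℝ) (p : Fin n → ℝ) :
    M *ᵥ p ⬝ᵥ p = ∑ i, ∑ j, M i j * (p i * p j) := by
  simp only [dotProduct, Matrix.mulVec, Finset.sum_mul]
  exact Finset.sum_congr rfl fun i _ => Finset.sum_congr rfl fun j _ => by ring

lemma mulVec_dotProduct_comm {M : Matrix (Fin n) (Fin n) ℝ} (hM : M.IsSymm) (p q : Fin n → ℝ) :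
    M *ᵥ p ⬝ᵥ q = M *ᵥ q ⬝ᵥ p := by
  rw [dotProduct_comm, Matrix.dotProduct_mulVec, ← Matrix.mulVec_transpose, hM.eq]

lemma isSymm_of_posSemidef {M : Matrix (Fin n) (Fin n) ℝ} (hM : M.PosSemidef) : M.IsSymm := by
  rw [Matrix.IsSymm, ← Matrix.conjTranspose_eq_transpose_of_trivial, hM.1.eq]

lemma mulVec_dotProduct_sub_le {M : Matrix (Fin n) (Fin n) ℝ} (hM : M.PosSemidef)
    (p q : Fin n → ℝ) :
    M *ᵥ p ⬝ᵥ (q - p) ≤ 2⁻¹ * (M *ᵥ q ⬝ᵥ q) - 2⁻¹ * (M *ᵥ p ⬝ᵥ p) := by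
  have h : 0 ≤ M *ᵥ (q - p) ⬝ᵥ (q - p) :=
    (hM.dotProduct_mulVec_nonneg (q - p)).trans_eq (dotProduct_comm _ _)
  rw [Matrix.mulVec_sub, sub_dotProduct, dotProduct_sub, dotProduct_sub,
    mulVec_dotProduct_comm (isSymm_of_posSemidef hM) q p] at h
  rw [dotProduct_sub]
  linarith

/-- The integrand `½⟨a∇U, ∇U⟩ + kU` of the energy whose Euler–Lagrange equation is
`-div(a∇U) + k = 0`. -/
def energyDensity (a : En n → Matrix (Fin n) (Fin n) ℝ) (k U : En n → ℝ) (x : En n) : ℝ :=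
  2⁻¹ * (a x *ᵥ grad U x ⬝ᵥ grad U x) + k x * U x

lemma integrable_mulVec_grad_dotProduct_grad (ha : ∀ i j, Continuous fun x => a x i j)
    (hU : ContDiff ℝ 1 U) (hV : ContDiff ℝ 1 V) (hc : HasCompactSupport V) :
    Integrable fun x => a x *ᵥ grad U x ⬝ᵥ grad V x := by
  refine integrable_of_continuousOn_isCompact hc (continuousOn_dotProduct (continuousOn_mulVec
    (fun i j => (ha i j).continuousOn) (continuous_grad hU).continuousOn)
    (continuous_grad hV).continuousOn) fun x hx => ?_
  rw [grad_eq_zero_of_notMem_tsupport hx, dotProduct_zero]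

lemma integrable_mul_of_hasCompactSupport (hk : Continuous k) (hU : Continuous U)
    (hc : HasCompactSupport U) : Integrable fun x => k x * U x :=
  (hk.mul hU).integrable_of_hasCompactSupport hc.mul_left

lemma integrable_energyDensity (ha : ∀ i j, Continuous fun x => a x i j) (hk : Continuous k)
    (hU : ContDiff ℝ 1 U) (hc : HasCompactSupport U) : Integrable (energyDensity a k U) :=
  ((integrable_mulVec_grad_dotProduct_grad ha hU hU hc).const_mul _).add
    (integrable_mul_of_hasCompactSupport hk hU.continuous hc)

-- The energy is convex, so its critical points are minimizers.
lemma integral_energyDensity_le_of_critical (ha : ∀ i j, Continuous fun x => a x i j)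
    (hpos : ∀ x, (a x).PosSemidef) (hk : Continuous k)
    (hU : ContDiff ℝ 1 U) (hUc : HasCompactSupport U) (hV : ContDiff ℝ 1 V)
    (hVc : HasCompactSupport V)
    (hcrit : ∫ x, (a x *ᵥ grad U x ⬝ᵥ grad (fun y => V y - U y) x + k x * (V x - U x)) = 0) :
    ∫ x, energyDensity a k U x ≤ ∫ x, energyDensity a k V x := by
  have hEU := integrable_energyDensity ha hk hU hUc
  have hEV := integrable_energyDensity ha hk hV hVc
  rw [← sub_nonneg, ← integral_sub hEV hEU, ← hcrit]
  refine integral_mono ((integrable_mulVec_grad_dotProduct_grad ha hU (hV.sub hU)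
    (hVc.sub hUc)).add (integrable_mul_of_hasCompactSupport hk (hV.sub hU).continuous
    (hVc.sub hUc))) (hEV.sub hEU) fun x => ?_
  rw [grad_sub (hV.differentiable one_ne_zero x) (hU.differentiable one_ne_zero x)]
  simp only [energyDensity]
  linarith [mulVec_dotProduct_sub_le (hpos x) (grad U x) (grad V x)]

lemma hasDerivAt_integral_translate_mul (v : En n) (hf : ContDiff ℝ 1 f)
    (hfc : HasCompactSupport f) (hk : Continuous k) (hkc : HasCompactSupport k) :
    HasDerivAt (fun t : ℝ => ∫ x, f (x + t • v) * k x) (∫ x, fderiv ℝ f x v * k x) 0 := by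
  have hf' : Continuous fun x => fderiv ℝ f x v :=
    (hf.continuous_fderiv one_ne_zero).clm_apply continuous_const
  obtain ⟨M, hM⟩ := hf'.bounded_above_of_compact_support (hfc.fderiv_apply ℝ v)
  have hfcont := hf.continuous
  have hint : ∀ g : En n → ℝ, Continuous g → Integrable fun x => g x * k x := fun g hg =>
    integrable_mul_of_hasCompactSupport hg hk hkc
  have hline : ∀ (x : En n) (t : ℝ), HasDerivAt (fun t : ℝ => f (x + t • v))
      (fderiv ℝ f (x + t • v) v) t := fun x t => by
    have hv : HasDerivAt (fun t : ℝ => x + t • v) v t := by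
      simpa using ((hasDerivAt_id t).smul_const v).const_add x
    exact (hf.differentiable one_ne_zero _).hasFDerivAt.comp_hasDerivAt t hv
  have h := hasDerivAt_integral_of_dominated_loc_of_deriv_le (μ := (volume : Measure (En n)))
    (F := fun t x => f (x + t • v) * k x) (F' := fun t x => fderiv ℝ f (x + t • v) v * k x)
    (x₀ := (0 : ℝ)) (s := Set.univ) (bound := fun x => M * |k x|) univ_mem
    (.of_forall fun t => (hint _ (by fun_prop)).aestronglyMeasurable) (hint _ (by fun_prop))
    (hint _ (hf'.comp (by fun_prop))).aestronglyMeasurable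
    (.of_forall fun x t _ => (norm_mul _ _).trans_le
      (mul_le_mul_of_nonneg_right (hM _) (abs_nonneg _)))
    ((hk.integrable_of_hasCompactSupport hkc).abs.const_mul M)
    (.of_forall fun x t _ => (hline x t).mul_const _)
  simpa only [zero_smul, add_zero] using h.2

/-- The entrywise partial derivative `∂a/∂xₘ` of a matrix field. -/
def pderivMatrix (m : Fin n) (a : En n → Matrix (Fin n) (Fin n) ℝ) (x : En n) :
    Matrix (Fin n) (Fin n) ℝ :=
  Matrix.of fun i j => pderiv m (fun y => a y i j) x

lemma pderivMatrix_smul (m : Fin n) (hζ : DifferentiableAt ℝ ζ x)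
    (hA : ∀ i j, DifferentiableAt ℝ (fun x => A x i j) x) :
    pderivMatrix m (fun y => ζ y • A y) x = pderiv m ζ x • A x + ζ x • pderivMatrix m A x := by
  ext i j
  exact pderiv_mul m hζ (hA i j)

lemma pderivMatrix_smul_eq_zero_of_notMem_tsupport (m : Fin n) (hx : x ∉ tsupport ζ) :
    pderivMatrix m (fun y => ζ y • A y) x = 0 := by
  ext i j
  exact pderiv_eq_zero_of_notMem_tsupport m fun h => hx (tsupport_mul_subset_left h)

lemma continuousOn_pderivMatrix (m : Fin n)
    (hA : ∀ i j, ContDiffOn ℝ 1 (fun x => A x i j) (OmegaExt n)) (i j : Fin n) :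
    ContinuousOn (fun x => pderivMatrix m A x i j) (OmegaExt n) :=
  continuousOn_pderiv m (hA i j)

lemma hasDerivAt_integral_quadratic_translate (m : Fin n) {p : En n → Fin n → ℝ}
    (ha : ∀ i j, ContDiff ℝ 1 fun x => a x i j)
    (hac : ∀ i j, HasCompactSupport fun x => a x i j) (hp : Continuous p)
    (hpc : HasCompactSupport p) :
    HasDerivAt (fun t : ℝ => ∫ x, a (x + t • EuclideanSpace.single m 1) *ᵥ p x ⬝ᵥ p x)
      (∫ x, pderivMatrix m a x *ᵥ p x ⬝ᵥ p x) 0 := by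
  have hq : ∀ i j, Continuous fun x => p x i * p x j := fun i j =>
    ((continuous_apply i).comp hp).mul ((continuous_apply j).comp hp)
  have hqc : ∀ i j, HasCompactSupport fun x => p x i * p x j := fun i j =>
    hpc.mono fun x hx hpx => hx (by simp only [hpx, Pi.zero_apply, mul_zero])
  have hsum : ∀ M : En n → Matrix (Fin n) (Fin n) ℝ, (∀ i j, Continuous fun x => M x i j) →
      ∫ x, M x *ᵥ p x ⬝ᵥ p x = ∑ i, ∑ j, ∫ x, M x i j * (p x i * p x j) := fun M hM => by
    have hint := fun i j => integrable_mul_of_hasCompactSupport (hM i j) (hq i j) (hqc i j)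
    simp only [mulVec_dotProduct_eq_sum]
    rw [integral_finsetSum _ fun i _ => integrable_finsetSum _ fun j _ => hint i j]
    exact Finset.sum_congr rfl fun i _ => integral_finsetSum _ fun j _ => hint i j
  rw [hsum (pderivMatrix m a) fun i j => continuous_pderiv m (ha i j)]
  simp only [hsum (fun x => a (x + _)) fun i j =>
    (ha i j).continuous.comp (continuous_add_const _)]
  exact .fun_sum fun i _ => .fun_sum fun j _ =>
    hasDerivAt_integral_translate_mul _ (ha i j) (hac i j) (hq i j) (hqc i j)

lemma grad_comp_add_const (U : En n → ℝ) (v x : En n) :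
    grad (fun y => U (y + v)) x = grad U (x + v) := by
  ext i
  rw [grad, pderiv, fderiv_comp_add_right]
  rfl

lemma hasDerivAt_integral_energyDensity_translate (m : Fin n)
    (ha : ∀ i j, ContDiff ℝ 1 fun x => a x i j)
    (hac : ∀ i j, HasCompactSupport fun x => a x i j) (hk : Continuous k)
    (hkc : HasCompactSupport k) (hU : ContDiff ℝ 1 U) (hUc : HasCompactSupport U) :
    HasDerivAt
      (fun t : ℝ => ∫ x, energyDensity a k (fun y => U (y + t • EuclideanSpace.single m 1)) x)
      (2⁻¹ * -(∫ x, pderivMatrix m a x *ᵥ grad U x ⬝ᵥ grad U x) + ∫ x, pderiv m U x * k x) 0 := by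
  set e : En n := EuclideanSpace.single m 1
  have hgradc : HasCompactSupport (grad U) := HasCompactSupport.intro hUc fun x hx =>
    grad_eq_zero_of_notMem_tsupport hx
  have hquad : HasDerivAt (fun t : ℝ => ∫ x, a (x + (-t) • e) *ᵥ grad U x ⬝ᵥ grad U x)
      (-∫ x, pderivMatrix m a x *ᵥ grad U x ⬝ᵥ grad U x) 0 := by
    have h := hasDerivAt_integral_quadratic_translate m ha hac (continuous_grad hU) hgradc
    rw [← neg_zero] at h
    rw [← mul_neg_one]
    exact h.comp (0 : ℝ) (hasDerivAt_neg 0)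
  refine ((hquad.const_mul 2⁻¹).add
    (hasDerivAt_integral_translate_mul e hU hUc hk hkc)).congr_of_eventuallyEq (.of_forall ?_)
  intro t
  have hUt : ContDiff ℝ 1 fun y => U (y + t • e) := hU.comp (contDiff_id.add contDiff_const)
  have hUtc : HasCompactSupport fun y => U (y + t • e) :=
    hUc.comp_homeomorph (Homeomorph.addRight (t • e))
  have htranslate : ∫ x, a x *ᵥ grad U (x + t • e) ⬝ᵥ grad U (x + t • e) =
      ∫ x, a (x + (-t) • e) *ᵥ grad U x ⬝ᵥ grad U x := by
    rw [← integral_add_right_eq_self (fun x => a (x + (-t) • e) *ᵥ grad U x ⬝ᵥ grad U x) (t • e)]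
    simp only [neg_smul, add_neg_cancel_right]
  simp only [energyDensity]
  rw [integral_add ((integrable_mulVec_grad_dotProduct_grad (fun i j => (ha i j).continuous)
    hUt hUt hUtc).const_mul _) (integrable_mul_of_hasCompactSupport hk hUt.continuous hUtc),
    integral_const_mul]
  simp only [grad_comp_add_const, htranslate, mul_comm (k _), Pi.add_apply]

-- Inner variation: translating a minimizer cannot decrease the energy.
lemma integral_pderivMatrix_eq_of_critical (m : Fin n)
    (ha : ∀ i j, ContDiff ℝ 1 fun x => a x i j)
    (hac : ∀ i j, HasCompactSupport fun x => a x i j) (hpos : ∀ x, (a x).PosSemidef)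
    (hk : Continuous k) (hkc : HasCompactSupport k)
    (hU : ContDiff ℝ 1 U) (hUc : HasCompactSupport U)
    (hcrit : ∀ θ : En n → ℝ, ContDiff ℝ 1 θ →
      ∫ x, (a x *ᵥ grad U x ⬝ᵥ grad θ x + k x * θ x) = 0) :
    ∫ x, pderivMatrix m a x *ᵥ grad U x ⬝ᵥ grad U x = 2 * ∫ x, pderiv m U x * k x := by
  have hmin : IsLocalMin (fun t : ℝ =>
      ∫ x, energyDensity a k (fun y => U (y + t • EuclideanSpace.single m 1)) x) 0 := by
    refine .of_forall fun t => ?_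
    have hUt : ContDiff ℝ 1 fun y => U (y + t • EuclideanSpace.single m 1) :=
      hU.comp (contDiff_id.add contDiff_const)
    simp only [zero_smul, add_zero]
    exact integral_energyDensity_le_of_critical (fun i j => (ha i j).continuous) hpos hk
      hU hUc hUt (hUc.comp_homeomorph (Homeomorph.addRight _)) (hcrit _ (hUt.sub hU))
  linarith [hmin.hasDerivAt_eq_zero
    (hasDerivAt_integral_energyDensity_translate m ha hac hk hkc hU hUc)]

lemma continuous_weakDensity (hA : ∀ i j, ContDiffOn ℝ 1 (fun x => A x i j) (OmegaExt n))
    (hu : ContDiffOn ℝ 1 u (OmegaExt n)) (hζ : ContDiff ℝ 1 ζ) (hs : tsupport ζ ⊆ OmegaExt n) :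
    Continuous (weakDensity A u ζ) := by
  refine continuous_of_tsupport fun x hx => ContinuousOn.continuousAt ((continuousOn_dotProduct
    (continuousOn_flux hA hu) (continuous_grad hζ).continuousOn).sub
    (hu.continuousOn.mul hζ.continuous.continuousOn)) ((isOpen_OmegaExt n).mem_nhds (hs ?_))
  refine closure_minimal (fun y hy => ?_) (isClosed_tsupport ζ) hx
  exact by_contra fun h => hy (weakDensity_eq_zero_of_notMem_tsupport h)

lemma weakDensity_mul {θ : En n → ℝ} (hζ : DifferentiableAt ℝ ζ x)
    (hθ : DifferentiableAt ℝ θ x) :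
    weakDensity A u (fun y => ζ y * θ y) x =
      (ζ x • A x) *ᵥ grad u x ⬝ᵥ grad θ x + weakDensity A u ζ x * θ x := by
  simp only [weakDensity, grad_mul hζ hθ, dotProduct_add, dotProduct_smul, smul_eq_mul,
    Matrix.smul_mulVec, smul_dotProduct, flux]
  ring

/-- The Rellich vector field `⟨A∇u, ∇u⟩ eₘ - 2 (∂u/∂xₘ) A∇u`; its divergence involves no second
derivatives of `u`. -/
def rellichField (A : En n → Matrix (Fin n) (Fin n) ℝ) (u : En n → ℝ) (m : Fin n)
    (x : En n) : Fin n → ℝ :=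
  (flux A u x ⬝ᵥ grad u x) • Pi.single m 1 - (2 * pderiv m u x) • flux A u x

namespace WeakSol

lemma integral_pderivMatrix_smul_eq (hA : ∀ i j, ContDiffOn ℝ 1 (fun x => A x i j) (OmegaExt n))
    (hpos : ∀ x ∈ OmegaExt n, (A x).PosSemidef) (hu : WeakSol A u) (m : Fin n)
    (hζ : ContDiff ℝ 1 ζ) (hc : HasCompactSupport ζ) (hs : tsupport ζ ⊆ OmegaExt n)
    (hζ0 : ∀ x, 0 ≤ ζ x) :
    ∫ x, pderivMatrix m (fun y => ζ y • A y) x *ᵥ grad u x ⬝ᵥ grad u x =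
      2 * ∫ x, pderiv m u x * weakDensity A u ζ x := by
  obtain ⟨U, hU, hUc, hUu⟩ := exists_contDiff_eventuallyEq (isOpen_OmegaExt n) hc.isCompact hs hu.1
  have hgrad : ∀ x ∈ tsupport ζ, grad U x = grad u x := fun x hx => grad_congr (hUu x hx)
  have hzero : ∀ x ∉ tsupport ζ, ζ x = 0 := fun x hx => image_eq_zero_of_notMem_tsupport hx
  have hpos' : ∀ x, (ζ x • A x).PosSemidef := fun x => by
    by_cases hx : x ∈ tsupport ζ
    · exact (hpos x (hs hx)).smul (hζ0 x)
    · rw [hzero x hx, zero_smul]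
      exact .zero
  have hcrit : ∀ θ : En n → ℝ, ContDiff ℝ 1 θ →
      ∫ x, ((ζ x • A x) *ᵥ grad U x ⬝ᵥ grad θ x + weakDensity A u ζ x * θ x) = 0 := fun θ hθ => by
    rw [← hu.integral_weakDensity_eq_zero hA (hζ.mul hθ) hc.mul_right
      (tsupport_mul_subset_left.trans hs)]
    congr 1
    ext x
    rw [weakDensity_mul (hζ.differentiable one_ne_zero x) (hθ.differentiable one_ne_zero x)]
    by_cases hx : x ∈ tsupport ζ
    · rw [hgrad x hx]
    · simp only [hzero x hx, zero_smul, Matrix.zero_mulVec, zero_dotProduct]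
  have hquad : ∀ x, pderivMatrix m (fun y => ζ y • A y) x *ᵥ grad u x ⬝ᵥ grad u x =
      pderivMatrix m (fun y => ζ y • A y) x *ᵥ grad U x ⬝ᵥ grad U x := fun x => by
    by_cases hx : x ∈ tsupport ζ
    · rw [hgrad x hx]
    · simp only [pderivMatrix_smul_eq_zero_of_notMem_tsupport m hx, Matrix.zero_mulVec,
        zero_dotProduct]
  have hlin : ∀ x, pderiv m u x * weakDensity A u ζ x =
      pderiv m U x * weakDensity A u ζ x := fun x => by
    by_cases hx : x ∈ tsupport ζ
    · rw [show pderiv m U x = pderiv m u x from congrFun (hgrad x hx) m]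
    · simp only [weakDensity_eq_zero_of_notMem_tsupport hx, mul_zero]
  simp only [hquad, hlin]
  exact integral_pderivMatrix_eq_of_critical m (a := fun x => ζ x • A x)
    (fun i j => contDiff_mul_of_tsupport_subset (isOpen_OmegaExt n) hζ hs (hA i j))
    (fun i j => hc.mul_right) hpos' (continuous_weakDensity hA hu.1 hζ hs)
    (HasCompactSupport.intro hc fun x => weakDensity_eq_zero_of_notMem_tsupport) hU hUc hcrit

theorem hasWeakDivergence_rellichField
    (hA : ∀ i j, ContDiffOn ℝ 1 (fun x => A x i j) (OmegaExt n))
    (hpos : ∀ x ∈ OmegaExt n, (A x).PosSemidef) (hu : WeakSol A u) (m : Fin n) :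
    HasWeakDivergence (rellichField A u m) fun x =>
      pderivMatrix m A x *ᵥ grad u x ⬝ᵥ grad u x + 2 * (u x * pderiv m u x) := by
  have hgrad := continuousOn_grad hu.1
  have hflux := continuousOn_flux hA hu.1
  have hpderiv := continuousOn_pderiv m hu.1
  refine .of_nonneg (((continuousOn_dotProduct hflux hgrad).smul continuousOn_const).sub
    ((continuousOn_const.mul hpderiv).smul hflux))
    ((continuousOn_dotProduct (continuousOn_mulVec (continuousOn_pderivMatrix m hA) hgrad)
      hgrad).add (continuousOn_const.mul (hu.1.continuousOn.mul hpderiv)))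
    fun ζ hζ hc hs hζ0 => ?_
  have hsplit : ∀ x, rellichField A u m x ⬝ᵥ grad ζ x +
      (pderivMatrix m A x *ᵥ grad u x ⬝ᵥ grad u x + 2 * (u x * pderiv m u x)) * ζ x =
      pderivMatrix m (fun y => ζ y • A y) x *ᵥ grad u x ⬝ᵥ grad u x -
        2 * (pderiv m u x * weakDensity A u ζ x) := fun x => by
    by_cases hx : x ∈ tsupport ζ
    · have hsingle : (Pi.single m 1 : Fin n → ℝ) ⬝ᵥ grad ζ x = pderiv m ζ x := by
        rw [single_dotProduct, one_mul, grad]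
      rw [pderivMatrix_smul m (hζ.differentiable one_ne_zero x) fun i j =>
        differentiableAt_of_mem_OmegaExt (hA i j) (hs hx)]
      simp only [rellichField, sub_dotProduct, smul_dotProduct, hsingle, smul_eq_mul,
        Matrix.add_mulVec, Matrix.smul_mulVec, add_dotProduct, weakDensity, flux]
      ring
    · simp only [grad_eq_zero_of_notMem_tsupport hx, image_eq_zero_of_notMem_tsupport hx,
        dotProduct_zero, add_zero, weakDensity_eq_zero_of_notMem_tsupport hx,
        pderivMatrix_smul_eq_zero_of_notMem_tsupport m hx, Matrix.zero_mulVec, zero_dotProduct,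
        mul_zero, sub_zero]
  have hζA : ∀ i j, ContDiff ℝ 1 fun x => ζ x * A x i j := fun i j =>
    contDiff_mul_of_tsupport_subset (isOpen_OmegaExt n) hζ hs (hA i j)
  have hint₁ : Integrable fun x =>
      pderivMatrix m (fun y => ζ y • A y) x *ᵥ grad u x ⬝ᵥ grad u x :=
    integrable_of_continuousOn_isCompact hc ((continuousOn_dotProduct (continuousOn_mulVec
      (fun i j => (continuous_pderiv m (hζA i j)).continuousOn) hgrad) hgrad).mono hs)
      fun x hx => by
        simp only [pderivMatrix_smul_eq_zero_of_notMem_tsupport m hx, Matrix.zero_mulVec,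
          zero_dotProduct]
  have hint₂ : Integrable fun x => 2 * (pderiv m u x * weakDensity A u ζ x) :=
    integrable_of_continuousOn_isCompact hc ((continuousOn_const.mul
      (hpderiv.mul (continuous_weakDensity hA hu.1 hζ hs).continuousOn)).mono hs)
      fun x hx => by simp only [weakDensity_eq_zero_of_notMem_tsupport hx, mul_zero]
  simp only [hsplit]
  rw [integral_sub hint₁ hint₂, hu.integral_pderivMatrix_smul_eq hA hpos m hζ hc hs hζ0,
    integral_const_mul, sub_self]

end WeakSol

end Rellich

section Growth

open scoped Topology ContDiff Matrix

variable {n : ℕ} {E : Type*} [NormedAddCommGroup E] {w w' : En n → ℝ} {a b : ℕ} {k l : ℝ}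

/-- The bound `f = O(|x|ᵏ wᵃ)` on `Ω`. The weight `w` will be the square root of a density that is
quadratic in the solution, so that `a` counts the degree of `f` in the solution. -/
def HasGrowth (w : En n → ℝ) (a : ℕ) (k : ℝ) (f : En n → E) : Prop :=
  f =O[𝓟 (OmegaExt n)] fun x => ‖x‖ ^ k * w x ^ a

namespace HasGrowth

variable {f g : En n → E}

lemma reweight (h : HasGrowth w 0 k f) : HasGrowth w' 0 k f := by
  simpa only [HasGrowth, pow_zero] using h

lemma congr (h : HasGrowth w a k f) (hfg : Set.EqOn g f (OmegaExt n)) : HasGrowth w a k g :=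
  Asymptotics.IsBigO.congr' h (eventually_principal.2 hfg.symm) .rfl

lemma mono (h : HasGrowth w a k f) (hkl : k ≤ l) : HasGrowth w a l f := by
  refine h.trans (.of_bound 1 (eventually_principal.2 fun x hx => ?_))
  have hx1 : 1 ≤ ‖x‖ := le_of_lt hx
  simp only [norm_mul, Real.norm_eq_abs, one_mul]
  gcongr

lemma add (hf : HasGrowth w a k f) (hg : HasGrowth w a k g) :
    HasGrowth w a k fun x => f x + g x :=
  Asymptotics.IsBigO.add hf hg

lemma sub (hf : HasGrowth w a k f) (hg : HasGrowth w a k g) :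
    HasGrowth w a k fun x => f x - g x :=
  Asymptotics.IsBigO.sub hf hg

lemma neg (hf : HasGrowth w a k f) : HasGrowth w a k fun x => -f x :=
  Asymptotics.IsBigO.neg_left hf

lemma sum {ι : Type*} {s : Finset ι} {f : ι → En n → E} (hf : ∀ i ∈ s, HasGrowth w a k (f i)) :
    HasGrowth w a k fun x => ∑ i ∈ s, f i x :=
  Asymptotics.IsBigO.fun_sum hf

lemma const_mul {f : En n → ℝ} (c : ℝ) (hf : HasGrowth w a k f) :
    HasGrowth w a k fun x => c * f x :=
  Asymptotics.IsBigO.const_mul_left hf c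

lemma smul [NormedSpace ℝ E] {c : En n → ℝ} (hc : HasGrowth w a k c) (hf : HasGrowth w b l f) :
    HasGrowth w (a + b) (k + l) fun x => c x • f x := by
  refine Asymptotics.IsBigO.congr' (Asymptotics.IsBigO.smul hc hf) .rfl
    (eventually_principal.2 fun x hx => ?_)
  simp only [smul_eq_mul]
  rw [Real.rpow_add (norm_pos_of_mem_OmegaExt hx), pow_add]
  ring

lemma mul {f g : En n → ℝ} (hf : HasGrowth w a k f) (hg : HasGrowth w b l g) :
    HasGrowth w (a + b) (k + l) fun x => f x * g x :=
  hf.smul hg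

lemma pi {f : En n → Fin n → ℝ} (hf : ∀ i, HasGrowth w a k fun x => f x i) :
    HasGrowth w a k f :=
  Asymptotics.isBigO_pi.2 hf

lemma apply {f : En n → Fin n → ℝ} (hf : HasGrowth w a k f) (i : Fin n) :
    HasGrowth w a k fun x => f x i :=
  Asymptotics.isBigO_pi.1 hf i

lemma dotProduct {f g : En n → Fin n → ℝ} (hf : HasGrowth w a k f) (hg : HasGrowth w b l g) :
    HasGrowth w (a + b) (k + l) fun x => f x ⬝ᵥ g x :=
  .sum fun i _ => (hf.apply i).mul (hg.apply i)

lemma mulVec {M : En n → Matrix (Fin n) (Fin n) ℝ} {f : En n → Fin n → ℝ}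
    (hM : ∀ i j, HasGrowth w a k fun x => M x i j) (hf : HasGrowth w b l f) :
    HasGrowth w (a + b) (k + l) fun x => M x *ᵥ f x :=
  .pi fun i => .dotProduct (.pi (hM i)) hf

end HasGrowth

lemma hasGrowth_zero : HasGrowth w a k fun _ => (0 : E) :=
  Asymptotics.isBigO_zero _ _

lemma hasGrowth_const (c : E) : HasGrowth w 0 0 fun _ => c := by
  simpa only [HasGrowth, Real.rpow_zero, pow_zero, one_mul] using
    Asymptotics.isBigO_const_const c (one_ne_zero' ℝ) (𝓟 (OmegaExt n))

lemma hasGrowth_norm_rpow (k : ℝ) : HasGrowth w 0 k fun x => ‖x‖ ^ k := by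
  simpa only [HasGrowth, pow_zero, mul_one] using
    Asymptotics.isBigO_refl (fun x : En n => ‖x‖ ^ k) (𝓟 (OmegaExt n))

lemma hasGrowth_of_sq_le {f N : En n → ℝ} {c : ℝ} (hN : ∀ x ∈ OmegaExt n, 0 ≤ N x)
    (h : ∀ x ∈ OmegaExt n, f x ^ 2 ≤ c * N x) : HasGrowth (fun x => √(N x)) 1 0 f := by
  refine .of_bound √(max c 0) (eventually_principal.2 fun x hx => ?_)
  rw [Real.rpow_zero, one_mul, pow_one, Real.norm_eq_abs, Real.norm_eq_abs,
    abs_of_nonneg (Real.sqrt_nonneg _), ← Real.sqrt_mul (le_max_right c 0)]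
  exact Real.abs_le_sqrt ((h x hx).trans (mul_le_mul_of_nonneg_right (le_max_left c 0) (hN x hx)))

lemma exists_abs_sphereIntegral_le {f N : En n → ℝ} (hf : ContinuousOn f (OmegaExt n))
    (hN : ContinuousOn N (OmegaExt n)) (hN0 : ∀ x ∈ OmegaExt n, 0 ≤ N x)
    (h : HasGrowth (fun x => √(N x)) 2 k f) :
    ∃ c : ℝ, 0 ≤ c ∧ ∀ r, 1 < r → |sphereIntegral f r| ≤ c * r ^ k * sphereIntegral N r := by
  obtain ⟨c, hc0, hc⟩ := h.exists_nonneg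
  have hfN : ∀ x ∈ OmegaExt n, |f x| ≤ c * ‖x‖ ^ k * N x := fun x hx => by
    have hbound := eventually_principal.1 hc.bound x hx
    rwa [Real.sq_sqrt (hN0 x hx), Real.norm_eq_abs, Real.norm_eq_abs, abs_of_nonneg
      (mul_nonneg (Real.rpow_nonneg (norm_nonneg x) k) (hN0 x hx)), ← mul_assoc] at hbound
  refine ⟨c, hc0, fun r hr => ?_⟩
  have hcont : ContinuousOn (fun x : En n => c * ‖x‖ ^ k * N x) (OmegaExt n) :=
    (continuousOn_const.mul (continuous_norm.continuousOn.rpow_const fun x hx =>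
      .inl (norm_pos_of_mem_OmegaExt hx).ne')).mul hN
  have hradial : sphereIntegral (fun x : En n => c * ‖x‖ ^ k * N x) r =
      c * r ^ k * sphereIntegral N r :=
    sphereIntegral_radial_mul (fun t => c * t ^ k) N (one_pos.trans hr)
  rw [← hradial, abs_le']
  refine ⟨sphereIntegral_mono hf hcont hr fun x hx => (abs_le'.1 (hfN x hx)).1, ?_⟩
  rw [← neg_one_mul, ← sphereIntegral_const_mul]
  exact sphereIntegral_mono (continuousOn_const.mul hf) hcont hr fun x hx =>
    (neg_one_mul (f x)).le.trans (abs_le'.1 (hfN x hx)).2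

end Growth

section Symbol

open scoped Topology ContDiff Matrix

variable {n : ℕ} {f g : En n → ℝ} {m k : ℝ} {w : En n → ℝ}

/-- A `C¹` symbol of order `m` on `Ω`: `f = O(|x|ᵐ)` and `∇f = O(|x|ᵐ⁻¹)`. -/
structure IsSymbol (m : ℝ) (f : En n → ℝ) : Prop where
  contDiffOn : ContDiffOn ℝ 1 f (OmegaExt n)
  growth : HasGrowth 1 0 m f
  growth_pderiv : ∀ i, HasGrowth 1 0 (m - 1) (pderiv i f)

namespace IsSymbol

lemma hasGrowth (h : IsSymbol m f) : HasGrowth w 0 m f := h.growth.reweight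

lemma hasGrowth_pderiv (h : IsSymbol m f) (i : Fin n) : HasGrowth w 0 (m - 1) (pderiv i f) :=
  (h.growth_pderiv i).reweight

lemma differentiableAt (h : IsSymbol m f) {x : En n} (hx : x ∈ OmegaExt n) :
    DifferentiableAt ℝ f x :=
  differentiableAt_of_mem_OmegaExt h.contDiffOn hx

lemma congr (h : IsSymbol m f) (hfg : Set.EqOn g f (OmegaExt n)) : IsSymbol m g where
  contDiffOn := h.contDiffOn.congr hfg
  growth := h.growth.congr hfg
  growth_pderiv i := (h.growth_pderiv i).congr fun _ hx =>
    pderiv_congr i (hfg.eventuallyEq_of_mem ((isOpen_OmegaExt n).mem_nhds hx))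

lemma mono (h : IsSymbol m f) (hmk : m ≤ k) : IsSymbol k f where
  contDiffOn := h.contDiffOn
  growth := h.growth.mono hmk
  growth_pderiv i := (h.growth_pderiv i).mono (by linarith)

lemma add (hf : IsSymbol m f) (hg : IsSymbol m g) : IsSymbol m fun x => f x + g x where
  contDiffOn := hf.contDiffOn.add hg.contDiffOn
  growth := hf.growth.add hg.growth
  growth_pderiv i := ((hf.growth_pderiv i).add (hg.growth_pderiv i)).congr fun _ hx =>
    pderiv_add i (hf.differentiableAt hx) (hg.differentiableAt hx)

lemma sub (hf : IsSymbol m f) (hg : IsSymbol m g) : IsSymbol m fun x => f x - g x where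
  contDiffOn := hf.contDiffOn.sub hg.contDiffOn
  growth := hf.growth.sub hg.growth
  growth_pderiv i := ((hf.growth_pderiv i).sub (hg.growth_pderiv i)).congr fun _ hx =>
    pderiv_sub i (hf.differentiableAt hx) (hg.differentiableAt hx)

lemma mul (hf : IsSymbol m f) (hg : IsSymbol k g) : IsSymbol (m + k) fun x => f x * g x where
  contDiffOn := hf.contDiffOn.mul hg.contDiffOn
  growth := hf.growth.mul hg.growth
  growth_pderiv i :=
    ((hf.growth.mul (hg.growth_pderiv i)).mono (by linarith) |>.add
      ((hg.growth.mul (hf.growth_pderiv i)).mono (by linarith))).congr fun _ hx =>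
        (pderiv_mul i (hf.differentiableAt hx) (hg.differentiableAt hx)).trans (by ring)

end IsSymbol

lemma isSymbol_const (c : ℝ) : IsSymbol 0 fun _ : En n => c where
  contDiffOn := contDiffOn_const
  growth := hasGrowth_const c
  growth_pderiv i := hasGrowth_zero.congr fun x _ => by
    simp only [pderiv, fderiv_const_apply, zero_apply]

namespace IsSymbol

lemma sum {f : Fin n → En n → ℝ} (hf : ∀ i, IsSymbol m (f i)) :
    IsSymbol m fun x => ∑ i, f i x where
  contDiffOn := .sum fun i _ => (hf i).contDiffOn
  growth := .sum fun i _ => (hf i).growth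
  growth_pderiv i := (HasGrowth.sum fun j _ => (hf j).growth_pderiv i).congr fun x hx => by
    rw [pderiv, fderiv_fun_sum fun j _ => (hf j).differentiableAt hx, sum_apply]
    rfl

lemma inv {c : ℝ} (hc : 0 < c) (hfc : ∀ x ∈ OmegaExt n, c ≤ f x) (hf : IsSymbol 0 f) :
    IsSymbol 0 fun x => (f x)⁻¹ := by
  have hne : ∀ x ∈ OmegaExt n, f x ≠ 0 := fun x hx => (hc.trans_le (hfc x hx)).ne'
  have hgrowth : HasGrowth 1 0 0 fun x => (f x)⁻¹ :=
    .of_bound c⁻¹ (eventually_principal.2 fun x hx => by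
      simpa [abs_of_pos (hc.trans_le (hfc x hx))] using inv_anti₀ hc (hfc x hx))
  refine ⟨hf.contDiffOn.inv hne, hgrowth, fun i => ?_⟩
  refine (((hgrowth.mul hgrowth).mul (hf.growth_pderiv i)).neg.mono (by linarith)).congr
    fun x hx => ?_
  have hderiv := ((hasDerivAt_inv (hne x hx)).comp_hasFDerivAt x
    (hf.differentiableAt hx).hasFDerivAt).fderiv
  change fderiv ℝ ((fun t => t⁻¹) ∘ f) x _ = _
  simp only [hderiv, smul_apply, smul_eq_mul, pderiv]
  ring

end IsSymbol

end Symbol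

section CoefficientFields

open scoped Topology ContDiff Matrix

variable {n : ℕ} {A : En n → Matrix (Fin n) (Fin n) ℝ} {lam α C : ℝ} {x : En n}
  {F G : En n → Fin n → ℝ}

/-- The Jacobian matrix of a vector field; its rows are the gradients of the components. -/
def jacobian (F : En n → Fin n → ℝ) (x : En n) : Matrix (Fin n) (Fin n) ℝ :=
  .of fun m => grad (fun y => F y m) x

lemma jacobian_sub (hF : ∀ i, DifferentiableAt ℝ (fun y => F y i) x)
    (hG : ∀ i, DifferentiableAt ℝ (fun y => G y i) x) :
    jacobian (fun y => F y - G y) x = jacobian F x - jacobian G x := by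
  ext m i
  exact pderiv_sub i (hF m) (hG m)

lemma trace_jacobian (F : En n → Fin n → ℝ) (x : En n) : (jacobian F x).trace = divergence F x :=
  rfl

lemma ofLp_dotProduct_self (x : En n) : x.ofLp ⬝ᵥ x.ofLp = ‖x‖ ^ 2 := by
  rw [EuclideanSpace.real_norm_sq_eq, dotProduct]
  exact Finset.sum_congr rfl fun i _ => (sq _).symm

lemma radial_eq_smul (x : En n) : radial x = ‖x‖⁻¹ • x.ofLp := by
  ext i
  exact div_eq_inv_mul _ _

lemma radial_dotProduct_self (hx : x ≠ 0) : radial x ⬝ᵥ radial x = 1 := by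
  rw [radial_eq_smul, smul_dotProduct, dotProduct_smul, ofLp_dotProduct_self, smul_eq_mul,
    smul_eq_mul]
  have := norm_pos_iff.2 hx
  field_simp

lemma pderiv_radial (hx : x ≠ 0) (i m : Fin n) :
    pderiv i (fun y => radial y m) x =
      ‖x‖⁻¹ * ((1 : Matrix (Fin n) (Fin n) ℝ) m i - radial x m * radial x i) := by
  have hx0 : ‖x‖ ≠ 0 := norm_ne_zero_iff.2 hx
  have hinv := congrFun (grad_comp_norm hx (hasDerivAt_inv hx0)) i
  have hdiff : DifferentiableAt ℝ (fun y : En n => ‖y‖⁻¹) x :=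
    (DifferentiableAt.norm ℝ differentiableAt_id hx).inv hx0
  have hcoord : pderiv i (fun y : En n => y m) x = (1 : Matrix (Fin n) (Fin n) ℝ) m i := by
    rw [pderiv, show (fun y : En n => y m) = EuclideanSpace.proj (𝕜 := ℝ) m from rfl,
      ContinuousLinearMap.fderiv]
    simp [Matrix.one_apply, eq_comm]
  simp only [radial, div_eq_mul_inv] at hinv ⊢
  rw [pderiv_mul i (by fun_prop) hdiff, hcoord]
  simp only [grad, Pi.smul_apply, smul_eq_mul] at hinv
  rw [hinv]
  simp only [radial]
  field

lemma jacobian_radial (hx : x ≠ 0) :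
    jacobian radial x = ‖x‖⁻¹ • (1 - Matrix.vecMulVec (radial x) (radial x)) := by
  ext m i
  exact pderiv_radial hx i m

lemma divergence_radial (hx : x ≠ 0) : divergence radial x = ‖x‖⁻¹ * (n - 1) := by
  rw [← trace_jacobian, jacobian_radial hx, Matrix.trace_smul, Matrix.trace_sub, Matrix.trace_one,
    Matrix.trace_vecMulVec, radial_dotProduct_self hx, Fintype.card_fin, smul_eq_mul]

lemma abs_radial_le (x : En n) (i : Fin n) : |radial x i| ≤ 1 := by
  rw [radial, abs_div, abs_norm]
  exact div_le_one_of_le₀ (PiLp.norm_apply_le x i) (norm_nonneg x)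

lemma isSymbol_radial (m : Fin n) : IsSymbol 0 fun x => radial x m where
  contDiffOn := by
    refine ContDiffOn.div (by fun_prop) (fun x hx => (contDiffAt_norm ℝ ?_).contDiffWithinAt)
      fun x hx => (norm_pos_of_mem_OmegaExt hx).ne'
    exact norm_pos_iff.1 (norm_pos_of_mem_OmegaExt hx)
  growth := .of_bound 1 (.of_forall fun x => by simpa using abs_radial_le x m)
  growth_pderiv i := by
    have hρ : ∀ j, HasGrowth (n := n) 1 0 0 fun x => radial x j := fun j =>
      .of_bound 1 (.of_forall fun x => by simpa using abs_radial_le x j)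
    refine HasGrowth.congr (((hasGrowth_norm_rpow (-1)).mul ((hasGrowth_const
      ((1 : Matrix (Fin n) (Fin n) ℝ) m i)).sub
      ((hρ m).mul (hρ i) |>.mono (add_zero _).le))).mono (by norm_num)) fun x hx => ?_
    rw [pderiv_radial (norm_pos_iff.1 (norm_pos_of_mem_OmegaExt hx)), Real.rpow_neg_one]

/-- The vector `A∇r`. -/
def conormal (A : En n → Matrix (Fin n) (Fin n) ℝ) (x : En n) : Fin n → ℝ := A x *ᵥ radial x

/-- The vector field `A∇r/μ = Z/r`, whose radial component is one. -/
def normalField (A : En n → Matrix (Fin n) (Fin n) ℝ) (x : En n) : Fin n → ℝ :=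
  (muA A x)⁻¹ • conormal A x

lemma radial_dotProduct_conormal (A : En n → Matrix (Fin n) (Fin n) ℝ) (x : En n) :
    radial x ⬝ᵥ conormal A x = muA A x := by
  rw [conormal, radial_eq_smul, Matrix.mulVec_smul, smul_dotProduct, dotProduct_smul,
    dotProduct_comm, muA, quadForm, dotProduct, smul_eq_mul, smul_eq_mul]
  field

namespace EllipticDecay

lemma contDiffOn_entry (hA : EllipticDecay A lam α C) (i j : Fin n) :
    ContDiffOn ℝ 1 (fun x => A x i j) (OmegaExt n) :=
  hA.2.1 i j

lemma mulVec_dotProduct_bounds (hA : EllipticDecay A lam α C) (hx : x ∈ OmegaExt n)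
    (p : Fin n → ℝ) :
    lam * (p ⬝ᵥ p) ≤ A x *ᵥ p ⬝ᵥ p ∧ A x *ᵥ p ⬝ᵥ p ≤ lam⁻¹ * (p ⬝ᵥ p) := by
  have h := hA.2.2.1 x hx (WithLp.toLp 2 p)
  rwa [← ofLp_dotProduct_self] at h

lemma posSemidef (hA : EllipticDecay A lam α C) (hlam : 0 < lam) (hx : x ∈ OmegaExt n) :
    (A x).PosSemidef := by
  refine .of_dotProduct_mulVec_nonneg (by simpa using hA.1 x hx) fun p => ?_
  rw [star_trivial, dotProduct_comm]
  exact le_trans (mul_nonneg hlam.le (dotProduct_self_star_nonneg p))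
    (hA.mulVec_dotProduct_bounds hx p).1

lemma muA_bounds (hA : EllipticDecay A lam α C) (hx : x ∈ OmegaExt n) :
    lam ≤ muA A x ∧ muA A x ≤ lam⁻¹ := by
  have h := hA.mulVec_dotProduct_bounds hx (radial x)
  rwa [radial_dotProduct_self (norm_pos_iff.1 (norm_pos_of_mem_OmegaExt hx)), mul_one, mul_one,
    dotProduct_comm, ← conormal, radial_dotProduct_conormal] at h

lemma mono {α' : ℝ} (hA : EllipticDecay A lam α C) (hα : α' ≤ α) : EllipticDecay A lam α' C := by
  refine ⟨hA.1, hA.2.1, hA.2.2.1, fun x hx i j => (hA.2.2.2 x hx i j).trans ?_⟩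
  have hpos : 0 < ‖x‖ ^ (-α) := Real.rpow_pos_of_pos (norm_pos_of_mem_OmegaExt hx) _
  have hC : 0 ≤ C := nonneg_of_mul_nonneg_left
    (le_trans (by positivity) (hA.2.2.2 x hx i j)) hpos
  exact mul_le_mul_of_nonneg_left
    (Real.rpow_le_rpow_of_exponent_le (le_of_lt hx) (neg_le_neg hα)) hC

lemma isSymbol_entry_sub_one (hA : EllipticDecay A lam α C) (i j : Fin n) :
    IsSymbol (-α) fun x => (A x - 1) i j where
  contDiffOn := (hA.contDiffOn_entry i j).sub contDiffOn_const
  growth := .of_bound C (eventually_principal.2 fun x hx => by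
    have h := hA.2.2.2 x hx i j
    have hgrad := mul_nonneg (norm_nonneg x) (norm_nonneg (gradient (fun y => (A y - 1) i j) x))
    rw [pow_zero, mul_one, Real.norm_eq_abs, Real.norm_of_nonneg (by positivity)]
    linarith)
  growth_pderiv m := .of_bound C (eventually_principal.2 fun x hx => by
    have hx0 := norm_pos_of_mem_OmegaExt hx
    have h := hA.2.2.2 x hx i j
    have hle : ‖pderiv m (fun y => (A y - 1) i j) x‖ ≤ ‖gradient (fun y => (A y - 1) i j) x‖ := by
      rw [← gradient_apply_eq_pderiv]
      exact PiLp.norm_apply_le _ m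
    rw [pow_zero, mul_one, Real.norm_of_nonneg (Real.rpow_nonneg hx0.le (-α - 1)),
      Real.rpow_sub_one hx0.ne', ← mul_div_assoc, le_div_iff₀ hx0]
    nlinarith [abs_nonneg ((A x - 1) i j)])

lemma isSymbol_conormal_sub_radial (hA : EllipticDecay A lam α C) (i : Fin n) :
    IsSymbol (-α) fun x => conormal A x i - radial x i := by
  refine IsSymbol.congr (.sum fun j => ((hA.isSymbol_entry_sub_one i j).mul
    (isSymbol_radial j)).mono (add_zero _).le) fun x _ => ?_
  have h : conormal A x - radial x = (A x - 1) *ᵥ radial x := by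
    rw [Matrix.sub_mulVec, Matrix.one_mulVec, conormal]
  exact congrFun h i

lemma isSymbol_muA_sub_one (hA : EllipticDecay A lam α C) :
    IsSymbol (-α) fun x => muA A x - 1 := by
  refine IsSymbol.congr (.sum fun j => ((isSymbol_radial j).mul
    (hA.isSymbol_conormal_sub_radial j)).mono (zero_add _).le) fun x hx => ?_
  change _ = radial x ⬝ᵥ (conormal A x - radial x)
  rw [dotProduct_sub, radial_dotProduct_conormal,
    radial_dotProduct_self (norm_pos_iff.1 (norm_pos_of_mem_OmegaExt hx))]

lemma isSymbol_muA (hA : EllipticDecay A lam α C) (hα : 0 ≤ α) : IsSymbol 0 (muA A) :=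
  (((hA.isSymbol_muA_sub_one.mono (neg_nonpos.2 hα)).add (isSymbol_const 1))).congr
    fun _ _ => (sub_add_cancel _ _).symm

lemma isSymbol_conormal (hA : EllipticDecay A lam α C) (hα : 0 ≤ α) (i : Fin n) :
    IsSymbol 0 fun x => conormal A x i :=
  (((hA.isSymbol_conormal_sub_radial i).mono (neg_nonpos.2 hα)).add (isSymbol_radial i)).congr
    fun _ _ => (sub_add_cancel _ _).symm

lemma isSymbol_normalField_sub_radial (hA : EllipticDecay A lam α C) (hlam : 0 < lam)
    (hα : 0 ≤ α) (i : Fin n) :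
    IsSymbol (-α) fun x => normalField A x i - radial x i := by
  have hinv := (hA.isSymbol_muA hα).inv hlam fun x hx => (hA.muA_bounds hx).1
  refine (hinv.mul ((hA.isSymbol_conormal_sub_radial i).sub
    ((hA.isSymbol_muA_sub_one.mul (isSymbol_radial i)).mono (add_zero _).le)) |>.mono
      (zero_add _).le).congr fun x hx => ?_
  have hμ : muA A x ≠ 0 := (hlam.trans_le (hA.muA_bounds hx).1).ne'
  simp only [normalField, Pi.smul_apply, smul_eq_mul]
  field

lemma isSymbol_normalField (hA : EllipticDecay A lam α C) (hlam : 0 < lam) (hα : 0 ≤ α)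
    (i : Fin n) : IsSymbol 0 fun x => normalField A x i :=
  (((hA.isSymbol_normalField_sub_radial hlam hα i).mono (neg_nonpos.2 hα)).add
    (isSymbol_radial i)).congr fun _ _ => (sub_add_cancel _ _).symm

lemma hasGrowth_pderivMatrix (hA : EllipticDecay A lam α C) {w : En n → ℝ} (m i j : Fin n) :
    HasGrowth w 0 (-α - 1) fun x => pderivMatrix m A x i j := by
  refine ((hA.isSymbol_entry_sub_one i j).hasGrowth_pderiv m).congr fun x _ => ?_
  simp only [pderivMatrix, Matrix.of_apply, Matrix.sub_apply, pderiv, fderiv_sub_const]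

end EllipticDecay

end CoefficientFields

section SphereIdentities

open scoped Topology ContDiff Matrix

variable {n : ℕ} [NeZero n] {A : En n → Matrix (Fin n) (Fin n) ℝ} {u : En n → ℝ}
  {F Y : En n → Fin n → ℝ}

lemma hasSphereDeriv_sq_mul (hu : ContDiffOn ℝ 1 u (OmegaExt n))
    (hF : ∀ i, ContDiffOn ℝ 1 (fun x => F x i) (OmegaExt n)) :
    HasSphereDeriv (fun x => u x ^ 2 * (radial x ⬝ᵥ F x))
      fun x => 2 * u x * (F x ⬝ᵥ grad u x) + u x ^ 2 * divergence F x := by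
  refine ((hasWeakDivergence_divergence hF).smul (hu.mul hu)).hasSphereDeriv.congr
    (fun x _ => ?_) fun x hx => ?_
  · simp only [dotProduct_smul, smul_eq_mul, sq]
  · have hdiff := differentiableAt_of_mem_OmegaExt hu hx
    change _ = F x ⬝ᵥ grad (fun y => u y * u y) x + _
    rw [grad_mul hdiff hdiff, dotProduct_add, dotProduct_smul, smul_eq_mul]
    ring

lemma hasSphereDeriv_mul_flux (hA : ∀ i j, ContDiffOn ℝ 1 (fun x => A x i j) (OmegaExt n))
    (hu : WeakSol A u) :
    HasSphereDeriv (fun x => u x * (radial x ⬝ᵥ flux A u x))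
      fun x => flux A u x ⬝ᵥ grad u x - u x ^ 2 := by
  refine ((hu.hasWeakDivergence_flux hA).smul hu.1).hasSphereDeriv.congr (fun x _ => ?_)
    fun x _ => ?_
  · simp only [dotProduct_smul, smul_eq_mul]
  · ring

lemma hasSphereDeriv_rellich (hA : ∀ i j, ContDiffOn ℝ 1 (fun x => A x i j) (OmegaExt n))
    (hpos : ∀ x ∈ OmegaExt n, (A x).PosSemidef) (hu : WeakSol A u)
    (hY : ∀ m, ContDiffOn ℝ 1 (fun x => Y x m) (OmegaExt n)) :
    HasSphereDeriv (fun x => (radial x ⬝ᵥ Y x) * (flux A u x ⬝ᵥ grad u x) -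
        2 * (Y x ⬝ᵥ grad u x) * (radial x ⬝ᵥ flux A u x))
      fun x => divergence Y x * (flux A u x ⬝ᵥ grad u x) +
        ∑ m, Y x m * (pderivMatrix m A x *ᵥ grad u x ⬝ᵥ grad u x) -
        2 * (grad u x ⬝ᵥ jacobian Y x *ᵥ flux A u x) + 2 * u x * (Y x ⬝ᵥ grad u x) := by
  refine (HasWeakDivergence.sum fun m =>
    (hu.hasWeakDivergence_rellichField hA hpos m).smul (hY m)).hasSphereDeriv.congr
      (fun x _ => ?_) fun x _ => ?_
  · simp only [rellichField, dotProduct_sum, dotProduct_smul, dotProduct_sub, smul_eq_mul,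
      dotProduct_single_one]
    have hmain : ∑ m, (radial x m * Y x m * (flux A u x ⬝ᵥ grad u x) -
        2 * (Y x m * pderiv m u x) * (radial x ⬝ᵥ flux A u x)) =
        (radial x ⬝ᵥ Y x) * (flux A u x ⬝ᵥ grad u x) -
        2 * (Y x ⬝ᵥ grad u x) * (radial x ⬝ᵥ flux A u x) := by
      simp only [dotProduct, grad, Finset.sum_sub_distrib, ← Finset.mul_sum, ← Finset.sum_mul]
    rw [← hmain]
    exact Finset.sum_congr rfl fun m _ => by ring
  · have hjacobian : ∀ m, (jacobian Y x *ᵥ flux A u x) m = flux A u x ⬝ᵥ grad (fun y => Y y m) x :=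
      fun m => dotProduct_comm _ _
    have hmain : ∑ m, (pderiv m (fun y => Y y m) x * (flux A u x ⬝ᵥ grad u x) +
        Y x m * (pderivMatrix m A x *ᵥ grad u x ⬝ᵥ grad u x) -
        2 * (pderiv m u x * (jacobian Y x *ᵥ flux A u x) m) + 2 * u x * (Y x m * pderiv m u x)) =
        divergence Y x * (flux A u x ⬝ᵥ grad u x) +
        ∑ m, Y x m * (pderivMatrix m A x *ᵥ grad u x ⬝ᵥ grad u x) -
        2 * (grad u x ⬝ᵥ jacobian Y x *ᵥ flux A u x) + 2 * u x * (Y x ⬝ᵥ grad u x) := by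
      simp only [divergence, dotProduct, grad, Finset.sum_add_distrib, Finset.sum_sub_distrib,
        ← Finset.mul_sum, ← Finset.sum_mul]
    rw [← hmain]
    refine Finset.sum_congr rfl fun m _ => ?_
    rw [hjacobian, rellichField, sub_dotProduct, smul_dotProduct, smul_dotProduct,
      single_one_dotProduct, smul_eq_mul, smul_eq_mul, grad]
    ring

end SphereIdentities

section Densities

open scoped Topology ContDiff Matrix

variable {n : ℕ} {A : En n → Matrix (Fin n) (Fin n) ℝ} {u : En n → ℝ} {lam α C : ℝ} {x : En n}

/-- The exponent `(n-1)/2` of the normalisation `w = |x|^((n-1)/2) u`. -/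
def decayRate (n : ℕ) : ℝ := ((n : ℝ) - 1) / 2

/-- The gradient of `w = |x|^((n-1)/2) u` divided by `|x|^((n-1)/2)`. -/
def normalizedGrad (u : En n → ℝ) (x : En n) : Fin n → ℝ :=
  grad u x + (decayRate n * u x / ‖x‖) • radial x

/-- The normalised conormal derivative `⟨A∇r, ∇w⟩` of `w`. -/
def normalFlux (A : En n → Matrix (Fin n) (Fin n) ℝ) (u : En n → ℝ) (x : En n) : ℝ :=
  conormal A x ⬝ᵥ normalizedGrad u x

/-- The normalised density `w²μ`. -/
def massDensity (A : En n → Matrix (Fin n) (Fin n) ℝ) (u : En n → ℝ) (x : En n) : ℝ :=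
  u x ^ 2 * muA A x

/-- The normalised density `w⟨A∇r, ∇w⟩`. -/
def mixedDensity (A : En n → Matrix (Fin n) (Fin n) ℝ) (u : En n → ℝ) (x : En n) : ℝ :=
  u x * normalFlux A u x

/-- The normalised density `(Zw/r)²μ`. -/
def radialDensity (A : En n → Matrix (Fin n) (Fin n) ℝ) (u : En n → ℝ) (x : En n) : ℝ :=
  normalFlux A u x ^ 2 / muA A x

/-- The normalised density `⟨A∇w, ∇w⟩`. -/
def gradientDensity (A : En n → Matrix (Fin n) (Fin n) ℝ) (u : En n → ℝ) (x : En n) : ℝ :=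
  A x *ᵥ normalizedGrad u x ⬝ᵥ normalizedGrad u x

/-- The normalised density of the functional `G`; note
`((n-1)/2)² - (n-1)/2 = (n-1)(n-3)/4`. -/
def functionalDensity (A : En n → Matrix (Fin n) (Fin n) ℝ) (u : En n → ℝ) (x : En n) : ℝ :=
  2 * radialDensity A u x - gradientDensity A u x + u x ^ 2 -
    (decayRate n ^ 2 - decayRate n) / ‖x‖ ^ 2 * massDensity A u x

/-- The squared length of the tangential part of `∇w`, normalised. -/
def tangentialDensity (u : En n → ℝ) (x : En n) : ℝ :=
  normalizedGrad u x ⬝ᵥ normalizedGrad u x - (radial x ⬝ᵥ normalizedGrad u x) ^ 2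

/-- The normalised density `|∇w|² + w²`. -/
def totalDensity (u : En n → ℝ) (x : En n) : ℝ :=
  normalizedGrad u x ⬝ᵥ normalizedGrad u x + u x ^ 2

lemma ne_zero_of_mem_OmegaExt (hx : x ∈ OmegaExt n) : x ≠ 0 :=
  norm_pos_iff.1 (norm_pos_of_mem_OmegaExt hx)

lemma conormal_dotProduct_grad (hA : (A x).IsSymm) :
    conormal A x ⬝ᵥ grad u x = radial x ⬝ᵥ flux A u x := by
  rw [conormal, mulVec_dotProduct_comm hA, dotProduct_comm, flux]

lemma normalFlux_eq (hA : (A x).IsSymm) : normalFlux A u x =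
    radial x ⬝ᵥ flux A u x + decayRate n * u x / ‖x‖ * muA A x := by
  rw [normalFlux, normalizedGrad, dotProduct_add, conormal_dotProduct_grad hA, dotProduct_smul,
    dotProduct_comm _ (radial x), radial_dotProduct_conormal, smul_eq_mul]

lemma gradientDensity_eq (hA : (A x).IsSymm) : gradientDensity A u x =
    flux A u x ⬝ᵥ grad u x + 2 * (decayRate n * u x / ‖x‖) * (radial x ⬝ᵥ flux A u x) +
      (decayRate n * u x / ‖x‖) ^ 2 * muA A x := by
  rw [gradientDensity, normalizedGrad, Matrix.mulVec_add, Matrix.mulVec_smul, ← conormal, ← flux]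
  simp only [add_dotProduct, dotProduct_add, smul_dotProduct, dotProduct_smul, smul_eq_mul,
    conormal_dotProduct_grad hA, dotProduct_comm (conormal A x) (radial x),
    dotProduct_comm (flux A u x) (radial x), radial_dotProduct_conormal]
  ring

lemma tangentialDensity_eq (hx : x ≠ 0) :
    tangentialDensity u x = grad u x ⬝ᵥ grad u x - (radial x ⬝ᵥ grad u x) ^ 2 := by
  simp only [tangentialDensity, normalizedGrad, add_dotProduct, dotProduct_add, smul_dotProduct,
    dotProduct_smul, smul_eq_mul, radial_dotProduct_self hx, dotProduct_comm (grad u x) (radial x)]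
  ring

lemma radial_dotProduct_normalField (hμ : muA A x ≠ 0) : radial x ⬝ᵥ normalField A x = 1 := by
  rw [normalField, dotProduct_smul, radial_dotProduct_conormal, smul_eq_mul, inv_mul_cancel₀ hμ]

lemma EllipticDecay.muA_pos (hA : EllipticDecay A lam α C) (hlam : 0 < lam)
    (hx : x ∈ OmegaExt n) : 0 < muA A x :=
  hlam.trans_le (hA.muA_bounds hx).1

lemma HasSphereDeriv.div_norm_pow {P Q : En n → ℝ} (h : HasSphereDeriv P Q) (c : ℝ) (k : ℕ) :
    HasSphereDeriv (fun x => c / ‖x‖ ^ k * P x)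
      fun x => c / ‖x‖ ^ k * Q x + -(k * c / ‖x‖ ^ (k + 1)) * P x := by
  refine h.radial_mul (c := fun r => c / r ^ k) (c' := fun r => -(k * c / r ^ (k + 1)))
    (fun r hr => ?_) ?_
  · have hr0 : r ≠ 0 := (one_pos.trans hr).ne'
    refine ((hasDerivAt_const r c).div (hasDerivAt_pow k r) (pow_ne_zero k hr0)).congr_deriv ?_
    rcases k with _ | k
    · simp
    · simp only [Nat.add_sub_cancel]
      field
  · exact (continuousOn_const.div (by fun_prop) fun r hr =>
      pow_ne_zero _ (one_pos.trans hr).ne').neg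

/-- The deviation `div(A∇r) - (n-1)μ/r`, which vanishes for `A` the identity matrix. -/
def conormalDefect (A : En n → Matrix (Fin n) (Fin n) ℝ) (x : En n) : ℝ :=
  divergence (conormal A) x - 2 * decayRate n / ‖x‖ * muA A x

/-- The deviation `A∇r/μ - ∇r` of `normalField` from the radial field. -/
def normalDefect (A : En n → Matrix (Fin n) (Fin n) ℝ) (x : En n) : Fin n → ℝ :=
  normalField A x - radial x

/-- The part of the derivative density of `G` that vanishes up to decay when `A` is replaced by
the identity. -/
def functionalDefect (A : En n → Matrix (Fin n) (Fin n) ℝ) (u : En n → ℝ) (x : En n) : ℝ :=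
  -(divergence (normalDefect A) x * (flux A u x ⬝ᵥ grad u x - u x ^ 2)) -
    ∑ m, normalField A x m * (pderivMatrix m A x *ᵥ grad u x ⬝ᵥ grad u x) +
    2 * (grad u x ⬝ᵥ jacobian (normalDefect A) x *ᵥ flux A u x) +
    2 * ‖x‖⁻¹ * ((flux A u x - grad u x) ⬝ᵥ grad u x -
      (radial x ⬝ᵥ grad u x) * (radial x ⬝ᵥ (flux A u x - grad u x))) +
    decayRate n / ‖x‖ ^ 2 * (divergence (conormal A) x - 2 / ‖x‖ * muA A x) * u x ^ 2

lemma EllipticDecay.jacobian_normalField (hA : EllipticDecay A lam α C) (hlam : 0 < lam)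
    (hα : 0 ≤ α) (hx : x ∈ OmegaExt n) : jacobian (normalField A) x =
      jacobian (normalDefect A) x + ‖x‖⁻¹ • (1 - Matrix.vecMulVec (radial x) (radial x)) := by
  rw [show normalDefect A = fun y => normalField A y - radial y from rfl, jacobian_sub
    (fun i => (hA.isSymbol_normalField hlam hα i).differentiableAt hx)
    (fun i => (isSymbol_radial i).differentiableAt hx),
    jacobian_radial (ne_zero_of_mem_OmegaExt hx), sub_add_cancel]

lemma EllipticDecay.divergence_normalField (hA : EllipticDecay A lam α C) (hlam : 0 < lam)
    (hα : 0 ≤ α) (hx : x ∈ OmegaExt n) : divergence (normalField A) x =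
      divergence (normalDefect A) x + ‖x‖⁻¹ * (n - 1) := by
  rw [← trace_jacobian, hA.jacobian_normalField hlam hα hx, Matrix.trace_add, trace_jacobian,
    ← jacobian_radial (ne_zero_of_mem_OmegaExt hx), trace_jacobian,
    divergence_radial (ne_zero_of_mem_OmegaExt hx)]

section Derivatives

variable [NeZero n]

lemma WeakSol.hasSphereDeriv_sq_mul_muA (hu : WeakSol A u) (hA : EllipticDecay A lam α C)
    (hα : 0 ≤ α) : HasSphereDeriv (massDensity A u) fun x =>
      2 * u x * (radial x ⬝ᵥ flux A u x) + u x ^ 2 * divergence (conormal A) x := by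
  refine (hasSphereDeriv_sq_mul hu.1 fun i => (hA.isSymbol_conormal hα i).contDiffOn).congr
    (fun x _ => ?_) fun x hx => ?_
  · simp only [massDensity, radial_dotProduct_conormal]
  · simp only [conormal_dotProduct_grad (hA.1 x hx)]

lemma WeakSol.hasSphereDeriv_massDensity (hu : WeakSol A u) (hA : EllipticDecay A lam α C)
    (hα : 0 ≤ α) : HasSphereDeriv (massDensity A u) fun x =>
      2 * mixedDensity A u x + conormalDefect A x * u x ^ 2 := by
  refine (hu.hasSphereDeriv_sq_mul_muA hA hα).congr (fun _ _ => rfl) fun x hx => ?_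
  simp only [mixedDensity, normalFlux_eq (hA.1 x hx), conormalDefect]
  ring

lemma WeakSol.hasSphereDeriv_mixedDensity (hu : WeakSol A u) (hA : EllipticDecay A lam α C)
    (hα : 0 ≤ α) : HasSphereDeriv (mixedDensity A u) fun x =>
      2 * radialDensity A u x - functionalDensity A u x +
        decayRate n / ‖x‖ * conormalDefect A x * u x ^ 2 := by
  refine ((hasSphereDeriv_mul_flux hA.2.1 hu).add
    ((hu.hasSphereDeriv_sq_mul_muA hA hα).div_norm_pow (decayRate n) 1)).congr
      (fun x hx => ?_) fun x hx => ?_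
  · simp only [mixedDensity, normalFlux_eq (hA.1 x hx), massDensity]
    ring
  · simp only [functionalDensity, gradientDensity_eq (hA.1 x hx), massDensity, conormalDefect]
    ring

lemma WeakSol.hasSphereDeriv_rellich_normalField (hu : WeakSol A u)
    (hA : EllipticDecay A lam α C) (hlam : 0 < lam) (hα : 0 ≤ α) :
    HasSphereDeriv (fun x => 2 * ((radial x ⬝ᵥ flux A u x) ^ 2 / muA A x) -
        flux A u x ⬝ᵥ grad u x + u x ^ 2) fun x =>
      -(divergence (normalField A) x * (flux A u x ⬝ᵥ grad u x - u x ^ 2)) -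
        ∑ m, normalField A x m * (pderivMatrix m A x *ᵥ grad u x ⬝ᵥ grad u x) +
        2 * (grad u x ⬝ᵥ jacobian (normalField A) x *ᵥ flux A u x) := by
  have hY := fun m => (hA.isSymbol_normalField hlam hα m).contDiffOn
  have hrellich := (hasSphereDeriv_rellich hA.2.1 (fun x hx => hA.posSemidef hlam hx) hu
    hY).div_norm_pow (-1) 0
  refine (hrellich.add (hasSphereDeriv_sq_mul hu.1 hY)).congr (fun x hx => ?_) fun x _ => ?_
  · have hYu : normalField A x ⬝ᵥ grad u x = (muA A x)⁻¹ * (radial x ⬝ᵥ flux A u x) := by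
      rw [normalField, smul_dotProduct, conormal_dotProduct_grad (hA.1 x hx), smul_eq_mul]
    simp only [radial_dotProduct_normalField (hA.muA_pos hlam hx).ne', hYu]
    ring
  · simp only [Nat.cast_zero]
    ring

lemma WeakSol.hasSphereDeriv_functionalDensity (hu : WeakSol A u)
    (hA : EllipticDecay A lam α C) (hlam : 0 < lam) (hα : 0 ≤ α) :
    HasSphereDeriv (functionalDensity A u) fun x =>
      2 * ‖x‖⁻¹ * tangentialDensity u x + functionalDefect A u x := by
  refine (((hu.hasSphereDeriv_rellich_normalField hA hlam hα).add
    ((hasSphereDeriv_mul_flux hA.2.1 hu).div_norm_pow (2 * decayRate n) 1)).add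
    ((hu.hasSphereDeriv_sq_mul_muA hA hα).div_norm_pow (decayRate n) 2)).congr
      (fun x hx => ?_) fun x hx => ?_
  · have hμ := (hA.muA_pos hlam hx).ne'
    simp only [functionalDensity, radialDensity, normalFlux_eq (hA.1 x hx),
      gradientDensity_eq (hA.1 x hx), massDensity]
    field
  · simp only [hA.divergence_normalField hlam hα hx, hA.jacobian_normalField hlam hα hx,
      tangentialDensity_eq (ne_zero_of_mem_OmegaExt hx), functionalDefect, massDensity,
      Matrix.add_mulVec, Matrix.smul_mulVec, Matrix.sub_mulVec, Matrix.one_mulVec,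
      Matrix.vecMulVec_mulVec, dotProduct_add, dotProduct_sub, sub_dotProduct, dotProduct_smul,
      smul_eq_mul, op_smul_eq_mul, Nat.cast_one, Nat.cast_ofNat,
      dotProduct_comm (grad u x) (flux A u x), dotProduct_comm (grad u x) (radial x)]
    simp only [decayRate]
    have hr := (norm_pos_of_mem_OmegaExt hx).ne'
    field

end Derivatives

end Densities

section DensityEstimates

open scoped Topology ContDiff Matrix

variable {n : ℕ} {A : En n → Matrix (Fin n) (Fin n) ℝ} {u w : En n → ℝ} {lam α C m : ℝ}

lemma dotProduct_self_nonneg {ι : Type*} [Fintype ι] (p : ι → ℝ) : 0 ≤ p ⬝ᵥ p :=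
  Finset.sum_nonneg fun i _ => mul_self_nonneg (p i)

lemma hasGrowth_radial : HasGrowth w 0 0 (radial (n := n)) :=
  .pi fun i => (isSymbol_radial i).hasGrowth

lemma hasGrowth_divergence {F : En n → Fin n → ℝ} (hF : ∀ i, IsSymbol m fun x => F x i) :
    HasGrowth w 0 (m - 1) (divergence F) :=
  .sum fun i _ => (hF i).hasGrowth_pderiv i

lemma hasGrowth_jacobian {F : En n → Fin n → ℝ} (hF : ∀ i, IsSymbol m fun x => F x i)
    (i j : Fin n) : HasGrowth w 0 (m - 1) fun x => jacobian F x i j :=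
  (hF i).hasGrowth_pderiv j

lemma hasGrowth_norm_inv : HasGrowth w 0 (-1) fun x => ‖x‖⁻¹ := by
  simpa only [Real.rpow_neg_one] using hasGrowth_norm_rpow (w := w) (-1)

lemma totalDensity_nonneg (u : En n → ℝ) (x : En n) : 0 ≤ totalDensity u x :=
  add_nonneg (dotProduct_self_nonneg _) (sq_nonneg _)

lemma hasGrowth_self : HasGrowth (fun x => √(totalDensity u x)) 1 0 u :=
  hasGrowth_of_sq_le (c := 1) (fun x _ => totalDensity_nonneg u x) fun x _ => by
    rw [one_mul]
    exact le_add_of_nonneg_left (dotProduct_self_nonneg _)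

lemma hasGrowth_normalizedGrad :
    HasGrowth (fun x => √(totalDensity u x)) 1 0 (normalizedGrad u) :=
  .pi fun i => hasGrowth_of_sq_le (c := 1) (fun x _ => totalDensity_nonneg u x) fun x _ => by
    rw [one_mul, sq]
    exact (Finset.single_le_sum (fun j _ => mul_self_nonneg (normalizedGrad u x j))
      (Finset.mem_univ i)).trans (le_add_of_nonneg_right (sq_nonneg (u x)))

lemma hasGrowth_grad : HasGrowth (fun x => √(totalDensity u x)) 1 0 (grad u) := by
  have hcoeff : HasGrowth (fun x => √(totalDensity u x)) 1 0
      fun x => decayRate n * (u x * ‖x‖⁻¹) :=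
    ((hasGrowth_self.mul hasGrowth_norm_inv).const_mul _).mono (by norm_num)
  refine (hasGrowth_normalizedGrad.sub ((hcoeff.smul hasGrowth_radial).mono
    (add_zero 0).le)).congr fun x _ => ?_
  simp only [normalizedGrad, ← div_eq_mul_inv, mul_div_assoc, add_sub_cancel_right]

namespace EllipticDecay

lemma hasGrowth_sub_one_mulVec (hA : EllipticDecay A lam α C) {p : En n → Fin n → ℝ} {a : ℕ}
    (hp : HasGrowth w a 0 p) : HasGrowth w a (-α) fun x => A x *ᵥ p x - p x := by
  have h := HasGrowth.mulVec (fun i j => (hA.isSymbol_entry_sub_one i j).hasGrowth) hp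
  simp only [Matrix.sub_mulVec, Matrix.one_mulVec, add_zero, zero_add] at h
  exact h

lemma hasGrowth_flux_sub_grad (hA : EllipticDecay A lam α C) :
    HasGrowth (fun x => √(totalDensity u x)) 1 (-α) fun x => flux A u x - grad u x :=
  hA.hasGrowth_sub_one_mulVec hasGrowth_grad

lemma hasGrowth_flux (hA : EllipticDecay A lam α C) (hα : 0 ≤ α) :
    HasGrowth (fun x => √(totalDensity u x)) 1 0 (flux A u) :=
  ((hA.hasGrowth_flux_sub_grad.mono (neg_nonpos.2 hα)).add hasGrowth_grad).congr fun _ _ =>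
    (sub_add_cancel _ _).symm

lemma hasGrowth_conormalDefect (hA : EllipticDecay A lam α C) (hα : 0 ≤ α) :
    HasGrowth w 0 (-1 - α) (conormalDefect A) := by
  have hdiv : HasGrowth w 0 (-α - 1) (divergence fun x => conormal A x - radial x) :=
    hasGrowth_divergence hA.isSymbol_conormal_sub_radial
  have hmu := (hasGrowth_norm_inv (w := w)).mul hA.isSymbol_muA_sub_one.hasGrowth
  refine ((hdiv.mono (by linarith)).sub ((hmu.const_mul (2 * decayRate n)).mono
    (by linarith))).congr fun x hx => ?_
  simp only [← trace_jacobian (fun x => conormal A x - radial x)]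
  rw [jacobian_sub (fun i => (hA.isSymbol_conormal hα i).differentiableAt hx)
    (fun i => (isSymbol_radial i).differentiableAt hx), Matrix.trace_sub, trace_jacobian,
    trace_jacobian, divergence_radial (ne_zero_of_mem_OmegaExt hx), conormalDefect, decayRate]
  ring

lemma hasGrowth_functionalDefect (hA : EllipticDecay A lam α C) (hlam : 0 < lam) (hα : 0 ≤ α)
    (hα2 : α ≤ 2) :
    HasGrowth (fun x => √(totalDensity u x)) 2 (-1 - α) (functionalDefect A u) := by
  have hu := hasGrowth_self (u := u)
  have hgrad := hasGrowth_grad (u := u)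
  have hflux := hA.hasGrowth_flux hα (u := u)
  have hfluxSub := hA.hasGrowth_flux_sub_grad (u := u)
  have hinv := hasGrowth_norm_inv (w := fun x => √(totalDensity u x))
  have hsymbol : ∀ i, IsSymbol (-α) fun x => normalDefect A x i :=
    hA.isSymbol_normalField_sub_radial hlam hα
  have hdivergence := (hasGrowth_divergence hsymbol).mul
    ((hflux.dotProduct hgrad).sub ((hu.mul hu).congr fun x _ => sq (u x)))
  have hcoefficients := HasGrowth.sum (s := Finset.univ) fun m _ =>
    (hA.isSymbol_normalField hlam hα m).hasGrowth.mul
      ((HasGrowth.mulVec (hA.hasGrowth_pderivMatrix m) hgrad).dotProduct hgrad)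
  have hjacobian := hgrad.dotProduct (HasGrowth.mulVec (hasGrowth_jacobian hsymbol) hflux)
  have htangential := hinv.mul ((hfluxSub.dotProduct hgrad).sub
    (((hasGrowth_radial.dotProduct hgrad).mul (hasGrowth_radial.dotProduct hfluxSub)).mono
      (by linarith)))
  have hlower := (((hinv.mul hinv).mul ((hasGrowth_divergence (hA.isSymbol_conormal hα)).sub
    (((hinv.mul (hA.isSymbol_muA hα).hasGrowth).const_mul 2).mono (by norm_num)))).mul
      (hu.mul hu)).const_mul (decayRate n)
  refine (((((hdivergence.neg.mono ?_).sub (hcoefficients.mono ?_)).add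
    ((hjacobian.const_mul 2).mono ?_)).add ((htangential.const_mul 2).mono ?_)).add
      (hlower.mono ?_)).congr fun x _ => ?_
  case refine_6 =>
    simp only [functionalDefect]
    ring
  all_goals linarith

end EllipticDecay

end DensityEstimates

section DensityComparison

open scoped Topology ContDiff Matrix

variable {n : ℕ} {A : En n → Matrix (Fin n) (Fin n) ℝ} {u w : En n → ℝ} {lam α C k : ℝ} {x : En n}

lemma tangentialDensity_nonneg (hx : x ≠ 0) : 0 ≤ tangentialDensity u x := by
  have hcauchy := Finset.sum_mul_sq_le_sq_mul_sq Finset.univ (radial x) (normalizedGrad u x)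
  have hunit := radial_dotProduct_self hx
  simp only [dotProduct, ← sq] at hunit
  rw [hunit, one_mul] at hcauchy
  simpa only [tangentialDensity, dotProduct, ← sq] using sub_nonneg.2 hcauchy

lemma tangentialDensity_le_totalDensity : tangentialDensity u x ≤ totalDensity u x :=
  (sub_le_self _ (sq_nonneg _)).trans (le_add_of_nonneg_right (sq_nonneg _))

namespace EllipticDecay

lemma massDensity_nonneg (hA : EllipticDecay A lam α C) (hlam : 0 < lam) (hx : x ∈ OmegaExt n) :
    0 ≤ massDensity A u x :=
  mul_nonneg (sq_nonneg _) (hA.muA_pos hlam hx).le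

lemma radialDensity_nonneg (hA : EllipticDecay A lam α C) (hlam : 0 < lam)
    (hx : x ∈ OmegaExt n) : 0 ≤ radialDensity A u x :=
  div_nonneg (sq_nonneg _) (hA.muA_pos hlam hx).le

lemma gradientDensity_nonneg (hA : EllipticDecay A lam α C) (hlam : 0 < lam)
    (hx : x ∈ OmegaExt n) : 0 ≤ gradientDensity A u x :=
  (mul_nonneg hlam.le (dotProduct_self_nonneg _)).trans (hA.mulVec_dotProduct_bounds hx _).1

lemma sq_le_massDensity (hA : EllipticDecay A lam α C) (hlam : 0 < lam) (hx : x ∈ OmegaExt n) :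
    u x ^ 2 ≤ lam⁻¹ * massDensity A u x := by
  rw [inv_mul_eq_div, le_div_iff₀ hlam]
  exact mul_le_mul_of_nonneg_left (hA.muA_bounds hx).1 (sq_nonneg _)

lemma massDensity_le_totalDensity (hA : EllipticDecay A lam α C) (hlam : 0 < lam)
    (hx : x ∈ OmegaExt n) : massDensity A u x ≤ lam⁻¹ * totalDensity u x := by
  rw [massDensity, mul_comm]
  exact mul_le_mul (hA.muA_bounds hx).2 (le_add_of_nonneg_left (dotProduct_self_nonneg _))
    (sq_nonneg _) (inv_nonneg.2 hlam.le)

lemma totalDensity_le (hA : EllipticDecay A lam α C) (hlam : 0 < lam) (hx : x ∈ OmegaExt n) :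
    totalDensity u x ≤ lam⁻¹ * (gradientDensity A u x + massDensity A u x) := by
  rw [mul_add]
  refine add_le_add ?_ (hA.sq_le_massDensity hlam hx)
  rw [inv_mul_eq_div, le_div_iff₀' hlam]
  exact (hA.mulVec_dotProduct_bounds hx _).1

lemma radialDensity_add_nonneg (hA : EllipticDecay A lam α C) (hlam : 0 < lam)
    (hx : x ∈ OmegaExt n) (t : ℝ) :
    0 ≤ radialDensity A u x + 2 * t * mixedDensity A u x + t ^ 2 * massDensity A u x := by
  have hμ := hA.muA_pos hlam hx
  have hsquare : radialDensity A u x + 2 * t * mixedDensity A u x + t ^ 2 * massDensity A u x =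
      (normalFlux A u x + t * u x * muA A x) ^ 2 / muA A x := by
    rw [radialDensity, mixedDensity, massDensity]
    field
  exact hsquare ▸ div_nonneg (sq_nonneg _) hμ.le

lemma functionalDensity_sub_eq (hA : EllipticDecay A lam α C) (hlam : 0 < lam)
    (hx : x ∈ OmegaExt n) :
    functionalDensity A u x - (totalDensity u x - 2 * tangentialDensity u x) =
      2 * ((normalDefect A x ⬝ᵥ normalizedGrad u x) * normalFlux A u x +
        (radial x ⬝ᵥ normalizedGrad u x) *
          ((conormal A x - radial x) ⬝ᵥ normalizedGrad u x)) -
      (A x *ᵥ normalizedGrad u x - normalizedGrad u x) ⬝ᵥ normalizedGrad u x -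
      (decayRate n ^ 2 - decayRate n) * (‖x‖⁻¹ * ‖x‖⁻¹ * muA A x) * (u x * u x) := by
  have hμ := (hA.muA_pos hlam hx).ne'
  simp only [functionalDensity, radialDensity, gradientDensity, massDensity, totalDensity,
    tangentialDensity, normalDefect, normalField, sub_dotProduct, smul_dotProduct, smul_eq_mul,
    show conormal A x ⬝ᵥ normalizedGrad u x = normalFlux A u x from rfl]
  field

lemma hasGrowth_functionalDensity_sub_total (hA : EllipticDecay A lam α C) (hlam : 0 < lam)
    (hα : 0 ≤ α) (hα2 : α ≤ 2) : HasGrowth (fun x => √(totalDensity u x)) 2 (-α) fun x =>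
      functionalDensity A u x - (totalDensity u x - 2 * tangentialDensity u x) := by
  have hu := hasGrowth_self (u := u)
  have hp := hasGrowth_normalizedGrad (u := u)
  have hinv := hasGrowth_norm_inv (w := fun x => √(totalDensity u x))
  have hnormal : HasGrowth (fun x => √(totalDensity u x)) 0 (-α) (normalDefect A) :=
    .pi fun i => (hA.isSymbol_normalField_sub_radial hlam hα i).hasGrowth
  have hconormal : HasGrowth (fun x => √(totalDensity u x)) 0 0 (conormal A) :=
    .pi fun i => (hA.isSymbol_conormal hα i).hasGrowth
  have hconormalSub : HasGrowth (fun x => √(totalDensity u x)) 0 (-α)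
      fun x => conormal A x - radial x :=
    .pi fun i => (hA.isSymbol_conormal_sub_radial i).hasGrowth
  have hlower := ((hinv.mul hinv).mul (hA.isSymbol_muA hα).hasGrowth).const_mul
    (decayRate n ^ 2 - decayRate n)
  refine (((((((hnormal.dotProduct hp).mul (hconormal.dotProduct hp)).mono ?_).add
    (((hasGrowth_radial.dotProduct hp).mul (hconormalSub.dotProduct hp)).mono ?_)).const_mul
      2).sub (((hA.hasGrowth_sub_one_mulVec hp).dotProduct hp).mono ?_)).sub
        ((hlower.mul (hu.mul hu)).mono ?_)).congr fun x hx => hA.functionalDensity_sub_eq hlam hx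
  all_goals linarith

lemma hasGrowth_mul_sq (hA : EllipticDecay A lam α C) (hlam : 0 < lam) {c : En n → ℝ}
    (hc : HasGrowth w 0 k c) :
    HasGrowth (fun x => √(massDensity A u x)) 2 k fun x => c x * u x ^ 2 := by
  have hu : HasGrowth (fun x => √(massDensity A u x)) 1 0 u :=
    hasGrowth_of_sq_le (fun x hx => hA.massDensity_nonneg hlam hx) fun x hx =>
      hA.sq_le_massDensity hlam hx
  refine ((hc.reweight.mul (hu.mul hu)).mono (by linarith)).congr fun x _ => ?_
  simp only [sq]

lemma hasGrowth_functionalDensity_sub_radial (hA : EllipticDecay A lam α C) (hlam : 0 < lam)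
    (hα : 0 ≤ α) : HasGrowth (fun x => √(massDensity A u x)) 2 0 fun x =>
      functionalDensity A u x - (2 * radialDensity A u x - gradientDensity A u x) := by
  have hinv := hasGrowth_norm_inv (n := n) (w := 1)
  have hcoeff := (hasGrowth_const 1).sub (((hinv.mul hinv).mul
    (hA.isSymbol_muA hα).hasGrowth).const_mul (decayRate n ^ 2 - decayRate n) |>.mono
      (by norm_num))
  refine (hA.hasGrowth_mul_sq hlam hcoeff).congr fun x _ => ?_
  rw [functionalDensity, massDensity]
  ring

end EllipticDecay

end DensityComparison

section Carleman

open scoped Topology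

variable {M τ r : ℝ}

/-- Pointwise form of the differential inequalities for the spherical integrals `H`, `I`, `D`, `E`
of `w²μ`, `w⟨A∇r, ∇w⟩`, `(Zw/r)²μ`, `⟨A∇w, ∇w⟩` and for `G`, with bounded errors; `H'`, `I'`, `G'`
are the radial derivatives. -/
structure CarlemanInequalities (M H I D E G H' I' G' : ℝ) : Prop where
  mass_nonneg : 0 ≤ H
  radial_nonneg : 0 ≤ D
  sq_mixed_le : I ^ 2 ≤ D * H
  abs_deriv_mass_sub_le : |H' - 2 * I| ≤ M * H
  abs_deriv_mixed_sub_le : |I' - E| ≤ M * H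
  abs_deriv_functional_le : |G'| ≤ M * (E + H)
  abs_functional_sub_le : |G - (2 * D - E)| ≤ M * H

lemma add_two_mul_add_sq_mul_nonneg {D H I : ℝ} (hD : 0 ≤ D) (hH : 0 ≤ H) (h : I ^ 2 ≤ D * H)
    (t : ℝ) : 0 ≤ D + 2 * t * I + t ^ 2 * H := by
  have hI := Real.abs_le_sqrt h
  have hprod : √(D * H) = √D * √H := Real.sqrt_mul hD H
  have hcross : -(|t| * (√D * √H)) ≤ t * I := by
    rw [← hprod, neg_le]
    exact (neg_le_abs (t * I)).trans ((abs_mul t I).trans_le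
      (mul_le_mul_of_nonneg_left hI (abs_nonneg t)))
  nlinarith [sq_nonneg (√D - |t| * √H), Real.sq_sqrt hD, Real.sq_sqrt hH, sq_abs t]

/-- The logarithmic derivative of the square root of the Carleman weight. -/
def carlemanFactor (M τ r : ℝ) : ℝ := τ * Real.exp ((2 * M + 1) * r)

/-- The Carleman weight `exp (2τφ)` with the convex phase `φ r = exp (γr) / γ`, `γ = 2M + 1`. -/
def carlemanWeight (M τ r : ℝ) : ℝ :=
  Real.exp (2 * τ * (Real.exp ((2 * M + 1) * r) / (2 * M + 1)))

/-- The functional `G` conjugated by the Carleman weight, plus a multiple of the conjugated `I`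
that absorbs the error terms. -/
def carlemanFunctional (M τ : ℝ) (H I G : ℝ → ℝ) (r : ℝ) : ℝ :=
  carlemanWeight M τ r * (G r + (2 * carlemanFactor M τ r + M) * I r +
    (2 * carlemanFactor M τ r ^ 2 + M * carlemanFactor M τ r) * H r)

/-- The left side of the conclusion is the derivative of `carlemanFunctional` divided by the
weight; the main positive terms are `4β` times a completed square and `2β²H`. -/
lemma CarlemanInequalities.le_deriv {H I D E G H' I' G' β : ℝ}
    (h : CarlemanInequalities M H I D E G H' I' G') (hM : 0 ≤ M)
    (hβ : 6 * M ^ 2 + 7 * M + 2 ≤ β) :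
    H ≤ 2 * β * (G + (2 * β + M) * I + (2 * β ^ 2 + M * β) * H) +
      (G' + (2 * β + M) * I' + 2 * ((2 * M + 1) * β) * I + (2 * β ^ 2 + M * β) * H' +
        (4 * β + M) * ((2 * M + 1) * β) * H) := by
  have hH := h.mass_nonneg
  have hβ2 : 2 ≤ β := by nlinarith
  have hsquare := mul_nonneg (by positivity : 0 ≤ 4 * β)
    (add_two_mul_add_sq_mul_nonneg h.radial_nonneg hH h.sq_mixed_le (β + (4 * M + 1) / 4))
  have hmass := mul_nonneg (by positivity : 0 ≤ 2 * β ^ 2 + M * β)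
    (by linarith [(abs_le.mp h.abs_deriv_mass_sub_le).1] : 0 ≤ H' - 2 * I + M * H)
  have hmixed := mul_nonneg (by positivity : 0 ≤ 2 * β + M)
    (by linarith [(abs_le.mp h.abs_deriv_mixed_sub_le).1] : 0 ≤ I' - E + M * H)
  have hfunctional := mul_nonneg (by positivity : 0 ≤ 2 * β)
    (by linarith [(abs_le.mp h.abs_functional_sub_le).1] : 0 ≤ G - (2 * D - E) + M * H)
  have hderiv := (abs_le.mp h.abs_deriv_functional_le).1
  have hphase : 0 ≤ M * (2 * M + 1) * β * H := by positivity
  have hrest : 0 ≤ H * (2 * β ^ 2 - β * ((4 * M + 1) ^ 2 / 4 + M ^ 2 + 4 * M) - M - M ^ 2 - 1) :=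
    mul_nonneg hH (by nlinarith only [hβ, hβ2, mul_le_mul_of_nonneg_right hβ (by linarith : 0 ≤ β),
      mul_le_mul_of_nonneg_left hβ2 hM, mul_le_mul_of_nonneg_left hβ2 (sq_nonneg M)])
  linear_combination hsquare + hmass + hmixed + hfunctional + hphase + hderiv + hrest

lemma carlemanWeight_pos (M τ r : ℝ) : 0 < carlemanWeight M τ r := Real.exp_pos _

lemma carlemanWeight_eq_exp_mul (M τ a b : ℝ) :
    carlemanWeight M τ b = Real.exp (2 * (Real.exp ((2 * M + 1) * b) / (2 * M + 1) -
      Real.exp ((2 * M + 1) * a) / (2 * M + 1)) * τ) * carlemanWeight M τ a := by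
  rw [carlemanWeight, carlemanWeight, ← Real.exp_add]
  ring_nf

lemma exp_div_strictMono (hM : 0 ≤ M) :
    StrictMono fun r ↦ Real.exp ((2 * M + 1) * r) / (2 * M + 1) := fun a b hab ↦ by
  dsimp only
  gcongr

lemma carlemanWeight_monotone (hM : 0 ≤ M) (hτ : 0 ≤ τ) : Monotone (carlemanWeight M τ) :=
  fun _ _ hab ↦ Real.exp_le_exp.mpr <|
    mul_le_mul_of_nonneg_left ((exp_div_strictMono hM).monotone hab) (by positivity)

lemma hasDerivAt_carlemanFactor (M τ r : ℝ) :
    HasDerivAt (carlemanFactor M τ) ((2 * M + 1) * carlemanFactor M τ r) r :=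
  ((((hasDerivAt_id r).const_mul (2 * M + 1)).exp).const_mul τ).congr_deriv
    (by simp only [carlemanFactor, id]; ring)

lemma hasDerivAt_carlemanWeight (hM : 0 ≤ M) (τ r : ℝ) :
    HasDerivAt (carlemanWeight M τ) (2 * carlemanFactor M τ r * carlemanWeight M τ r) r :=
  ((((((hasDerivAt_id r).const_mul (2 * M + 1)).exp).div_const (2 * M + 1)).const_mul
    (2 * τ)).exp).congr_deriv
      (by simp only [carlemanFactor, carlemanWeight, id]; field_simp)

lemma hasDerivAt_carlemanFunctional {H I G : ℝ → ℝ} {H' I' G' : ℝ} (hM : 0 ≤ M)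
    (hH : HasDerivAt H H' r) (hI : HasDerivAt I I' r) (hG : HasDerivAt G G' r) :
    HasDerivAt (carlemanFunctional M τ H I G) (carlemanWeight M τ r *
      (2 * carlemanFactor M τ r * (G r + (2 * carlemanFactor M τ r + M) * I r +
          (2 * carlemanFactor M τ r ^ 2 + M * carlemanFactor M τ r) * H r) +
        (G' + (2 * carlemanFactor M τ r + M) * I' +
          2 * ((2 * M + 1) * carlemanFactor M τ r) * I r +
          (2 * carlemanFactor M τ r ^ 2 + M * carlemanFactor M τ r) * H' +
          (4 * carlemanFactor M τ r + M) * ((2 * M + 1) * carlemanFactor M τ r) * H r))) r := by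
  have hβ := hasDerivAt_carlemanFactor M τ r
  have hI' := ((hβ.const_mul 2).add_const M).fun_mul hI
  have hH' := (((hβ.fun_pow 2).const_mul 2).fun_add (hβ.const_mul M)).fun_mul hH
  refine ((hasDerivAt_carlemanWeight hM τ r).fun_mul ((hG.fun_add hI').fun_add hH')).congr_deriv ?_
  push_cast
  ring

lemma exists_affine_lt_exp_mul {κ δ : ℝ} (hκ : 0 < κ) (hδ : 0 < δ) (B X Y : ℝ) :
    ∃ τ, B ≤ τ ∧ X + Y * τ < Real.exp (κ * τ) * δ := by
  have hlim := (Real.tendsto_mul_exp_add_div_pow_atTop δ (-X) 1 hδ).comp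
    (tendsto_id.const_mul_atTop hκ)
  obtain ⟨τ, hτ, hB, hτ0⟩ := ((hlim.eventually_gt_atTop (Y / κ)).and
    ((eventually_ge_atTop B).and (eventually_gt_atTop 0))).exists
  refine ⟨τ, hB, ?_⟩
  rw [Function.comp_apply, id, pow_one, lt_div_iff₀ (by positivity),
    show Y / κ * (κ * τ) = Y * τ by field_simp] at hτ
  linarith

/-- The functions `H`, `I`, `D`, `E`, `G` of the radius satisfy `CarlemanInequalities` on
`(1, ∞)`. -/
structure CarlemanSystem (M : ℝ) (H I D E G : ℝ → ℝ) : Prop where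
  differentiableAt_mass : ∀ r, 1 < r → DifferentiableAt ℝ H r
  differentiableAt_mixed : ∀ r, 1 < r → DifferentiableAt ℝ I r
  differentiableAt_functional : ∀ r, 1 < r → DifferentiableAt ℝ G r
  inequalities : ∀ r, 1 < r → CarlemanInequalities M (H r) (I r) (D r) (E r) (G r)
    (deriv H r) (deriv I r) (deriv G r)

namespace CarlemanSystem

variable {H I D E G : ℝ → ℝ} {a b d r₀ h : ℝ}

lemma differentiableAt_carlemanFunctional (S : CarlemanSystem M H I D E G) (hM : 0 ≤ M)
    (hr : 1 < r) : DifferentiableAt ℝ (carlemanFunctional M τ H I G) r :=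
  (hasDerivAt_carlemanFunctional hM (S.differentiableAt_mass r hr).hasDerivAt
    (S.differentiableAt_mixed r hr).hasDerivAt
    (S.differentiableAt_functional r hr).hasDerivAt).differentiableAt

lemma mul_le_deriv_carlemanFunctional (S : CarlemanSystem M H I D E G) (hM : 0 ≤ M)
    (hτ : 6 * M ^ 2 + 7 * M + 2 ≤ τ) (hr : 1 < r) :
    carlemanWeight M τ r * H r ≤ deriv (carlemanFunctional M τ H I G) r := by
  have hτ0 : 0 ≤ τ := le_trans (by positivity) hτ
  have hfactor : 6 * M ^ 2 + 7 * M + 2 ≤ carlemanFactor M τ r :=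
    hτ.trans (le_mul_of_one_le_right hτ0 (Real.one_le_exp (by positivity)))
  rw [(hasDerivAt_carlemanFunctional (τ := τ) hM (S.differentiableAt_mass r hr).hasDerivAt
    (S.differentiableAt_mixed r hr).hasDerivAt
    (S.differentiableAt_functional r hr).hasDerivAt).deriv]
  exact mul_le_mul_of_nonneg_left ((S.inequalities r hr).le_deriv hM hfactor)
    (carlemanWeight_pos M τ r).le

lemma monotoneOn_carlemanFunctional (S : CarlemanSystem M H I D E G) (hM : 0 ≤ M)
    (hτ : 6 * M ^ 2 + 7 * M + 2 ≤ τ) : MonotoneOn (carlemanFunctional M τ H I G) (Set.Ioi 1) := by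
  refine monotoneOn_of_deriv_nonneg (convex_Ioi 1) (fun r hr ↦
    (S.differentiableAt_carlemanFunctional hM hr).continuousAt.continuousWithinAt)
    (fun r hr ↦ ?_) fun r hr ↦ ?_ <;> rw [interior_Ioi] at hr
  · exact (S.differentiableAt_carlemanFunctional hM hr).differentiableWithinAt
  · exact (mul_nonneg (carlemanWeight_pos M τ r).le (S.inequalities r hr).mass_nonneg).trans
      (S.mul_le_deriv_carlemanFunctional hM hτ hr)

lemma mul_sub_le_carlemanFunctional_sub (S : CarlemanSystem M H I D E G) (hM : 0 ≤ M)
    (hτ : 6 * M ^ 2 + 7 * M + 2 ≤ τ) (hb : 1 < b) (hbd : b ≤ d) (h0 : 0 ≤ h)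
    (hh : ∀ r ∈ Set.Icc b d, h ≤ H r) : carlemanWeight M τ b * h * (d - b) ≤
      carlemanFunctional M τ H I G d - carlemanFunctional M τ H I G b := by
  have hτ0 : 0 ≤ τ := le_trans (by positivity) hτ
  have hdiff {r : ℝ} (hr : r ∈ Set.Icc b d) :=
    S.differentiableAt_carlemanFunctional (τ := τ) hM (hb.trans_le hr.1)
  refine (convex_Icc b d).mul_sub_le_image_sub_of_le_deriv
    (fun r hr ↦ (hdiff hr).continuousAt.continuousWithinAt)
    (fun r hr ↦ (hdiff (interior_subset hr)).differentiableWithinAt) (fun r hr ↦ ?_)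
    b ⟨le_rfl, hbd⟩ d ⟨hbd, le_rfl⟩ hbd
  replace hr := interior_subset hr
  exact (mul_le_mul (carlemanWeight_monotone hM hτ0 hr.1) (hh r hr) h0
    (carlemanWeight_pos M τ r).le).trans
      (S.mul_le_deriv_carlemanFunctional hM hτ (hb.trans_le hr.1))

lemma neg_le_carlemanFunctional (S : CarlemanSystem M H I D E G) (hM : 0 ≤ M) (hτ : 0 ≤ τ)
    (hr : 1 < r) :
    -(carlemanWeight M τ r * (|G r| + M * |I r| + 2 * carlemanFactor M 1 r * |I r| * τ)) ≤
      carlemanFunctional M τ H I G r := by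
  have hβ : 0 ≤ carlemanFactor M τ r := mul_nonneg hτ (Real.exp_pos _).le
  have hmixed := mul_le_mul_of_nonneg_left (neg_abs_le (I r))
    (by positivity : 0 ≤ 2 * carlemanFactor M τ r + M)
  have hmass := mul_nonneg (by positivity : 0 ≤ 2 * carlemanFactor M τ r ^ 2 +
    M * carlemanFactor M τ r) (S.inequalities r hr).mass_nonneg
  rw [← mul_neg]
  refine mul_le_mul_of_nonneg_left ?_ (carlemanWeight_pos M τ r).le
  have hfactor : carlemanFactor M τ r = carlemanFactor M 1 r * τ := by
    simp only [carlemanFactor]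
    ring
  rw [hfactor] at hmixed hmass ⊢
  linarith [neg_abs_le (G r)]

lemma carleman_estimate (S : CarlemanSystem M H I D E G) (hM : 0 ≤ M)
    (hτ : 6 * M ^ 2 + 7 * M + 2 ≤ τ) (ha : 1 < a) (hab : a ≤ b) (hbd : b ≤ d) (hdr : d ≤ r₀)
    (hH₀ : H r₀ = 0) (hI₀ : I r₀ = 0) (hG₀ : G r₀ = 0) (h0 : 0 ≤ h)
    (hh : ∀ r ∈ Set.Icc b d, h ≤ H r) : carlemanWeight M τ b * h * (d - b) ≤
      carlemanWeight M τ a * (|G a| + M * |I a| + 2 * carlemanFactor M 1 a * |I a| * τ) := by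
  have hb := ha.trans_le hab
  have hd := hb.trans_le hbd
  have hmono := S.monotoneOn_carlemanFunctional hM hτ
  calc carlemanWeight M τ b * h * (d - b)
      ≤ carlemanFunctional M τ H I G d - carlemanFunctional M τ H I G b :=
        S.mul_sub_le_carlemanFunctional_sub hM hτ hb hbd h0 hh
    _ ≤ carlemanFunctional M τ H I G r₀ - carlemanFunctional M τ H I G a :=
        sub_le_sub (hmono hd (hd.trans_le hdr) hdr) (hmono ha hb hab)
    _ = -carlemanFunctional M τ H I G a := by
        simp only [carlemanFunctional, hH₀, hI₀, hG₀]
        ring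
    _ ≤ _ := neg_le.mp (S.neg_le_carlemanFunctional hM (le_trans (by positivity) hτ) ha)

lemma mass_eq_zero_of_lt (S : CarlemanSystem M H I D E G) (hM : 0 ≤ M) (hd : 1 < d)
    (hdr : d < r₀) (hH₀ : H r₀ = 0) (hI₀ : I r₀ = 0) (hG₀ : G r₀ = 0) : H d = 0 := by
  by_contra hne
  have hpos : 0 < H d := (S.inequalities d hd).mass_nonneg.lt_of_ne' hne
  obtain ⟨b, hbd, hb⟩ := mem_nhdsLE_iff_exists_Icc_subset.mp <| mem_nhdsWithin_of_mem_nhds <|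
    ((S.differentiableAt_mass d hd).continuousAt.eventually_const_lt (half_lt_self hpos)).and
      (lt_mem_nhds (by linarith : (1 + d) / 2 < d))
  have hab : (1 + d) / 2 < b := (hb ⟨le_rfl, hbd.le⟩).2
  obtain ⟨τ, hτ, hlt⟩ := exists_affine_lt_exp_mul
    (mul_pos two_pos (sub_pos.mpr (exp_div_strictMono hM hab)))
    (mul_pos (half_pos hpos) (sub_pos.mpr hbd)) (6 * M ^ 2 + 7 * M + 2)
    (|G ((1 + d) / 2)| + M * |I ((1 + d) / 2)|) (2 * carlemanFactor M 1 ((1 + d) / 2) *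
      |I ((1 + d) / 2)|)
  have hestimate := S.carleman_estimate hM hτ (by linarith : 1 < (1 + d) / 2) hab.le hbd.le hdr.le
    hH₀ hI₀ hG₀ (half_pos hpos).le fun r hr ↦ (hb hr).1.le
  rw [carlemanWeight_eq_exp_mul M τ ((1 + d) / 2) b, mul_comm (Real.exp _), mul_assoc, mul_assoc]
    at hestimate
  exact hlt.not_ge (le_of_mul_le_mul_left hestimate (carlemanWeight_pos M τ _))

end CarlemanSystem

end Carleman

section RadialSystems

open scoped Topology

/-- The regularity, positivity and Cauchy–Schwarz properties on `(1, ∞)` of the integrals over the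
spheres of radius `r` of the densities attached to a solution: `H` of `u²μ`, `I` of the mixed
density, `D` and `T` of the squares of the radial and tangential derivatives, `K` of the total
density, and `G` of the functional. -/
structure RadialSystem (H I D G T K : ℝ → ℝ) : Prop where
  differentiableAt_mass : ∀ r, 1 < r → DifferentiableAt ℝ H r
  differentiableAt_mixed : ∀ r, 1 < r → DifferentiableAt ℝ I r
  differentiableAt_functional : ∀ r, 1 < r → DifferentiableAt ℝ G r
  continuousAt_radial : ∀ r, 1 < r → ContinuousAt D r
  tangential_nonneg : ∀ r, 1 < r → 0 ≤ T r
  tangential_le : ∀ r, 1 < r → T r ≤ K r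
  radial_nonneg : ∀ r, 1 < r → 0 ≤ D r
  mass_nonneg : ∀ r, 1 < r → 0 ≤ H r
  sq_mixed_le : ∀ r, 1 < r → I r ^ 2 ≤ D r * H r

/-- The first order differential system satisfied by the integrals in `RadialSystem` and by the
integrals `E` of the full gradient form. The errors relative to the unperturbed system carry the
constant `C` and the decay exponent `α`. -/
structure PerturbedRadialSystem (α C : ℝ) (H I D E G T K : ℝ → ℝ) : Prop
    extends RadialSystem H I D G T K where
  one_le_const : 1 ≤ C
  abs_deriv_mass_sub_le : ∀ r, 1 < r → |deriv H r - 2 * I r| ≤ C * r ^ (-1 - α) * H r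
  abs_deriv_mixed_sub_le : ∀ r, 1 < r → |deriv I r - (2 * D r - G r)| ≤ C * r ^ (-1 - α) * H r
  abs_deriv_functional_sub_le :
    ∀ r, 1 < r → |deriv G r - 2 * r⁻¹ * T r| ≤ C * r ^ (-1 - α) * K r
  abs_functional_sub_total_le : ∀ r, 1 < r → |G r - (K r - 2 * T r)| ≤ C * r ^ (-α) * K r
  abs_functional_sub_radial_le : ∀ r, 1 < r → |G r - (2 * D r - E r)| ≤ C * H r
  mass_le : ∀ r, 1 < r → H r ≤ C * K r
  total_le : ∀ r, 1 < r → K r ≤ C * (E r + H r)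

namespace PerturbedRadialSystem

variable {α C : ℝ} {H I D E G T K : ℝ → ℝ}

lemma carlemanInequalities (S : PerturbedRadialSystem α C H I D E G T K) (hα : 0 ≤ α) {r : ℝ}
    (hr : 1 < r) : CarlemanInequalities (3 * C ^ 2) (H r) (I r) (D r) (E r) (G r)
      (deriv H r) (deriv I r) (deriv G r) := by
  have hC := S.one_le_const
  have hH := S.mass_nonneg r hr
  have hK := (S.tangential_nonneg r hr).trans (S.tangential_le r hr)
  have hpow : r ^ (-1 - α) ≤ 1 := Real.rpow_le_one_of_one_le_of_nonpos hr.le (by linarith)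
  have herr : C * r ^ (-1 - α) ≤ C := mul_le_of_le_one_right (by linarith) hpow
  have hmassErr := mul_le_mul_of_nonneg_right herr hH
  have htotalErr := mul_le_mul_of_nonneg_right herr hK
  have hsq : C * H r ≤ C ^ 2 * H r := mul_le_mul_of_nonneg_right (by nlinarith) hH
  have hmass := S.abs_deriv_mass_sub_le r hr
  have hfunctional := S.abs_functional_sub_radial_le r hr
  have hsq0 : 0 ≤ C ^ 2 * H r := by positivity
  refine ⟨hH, S.radial_nonneg r hr, S.sq_mixed_le r hr, by linarith, ?_, ?_, by linarith⟩
  · have hmixed := S.abs_deriv_mixed_sub_le r hr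
    rw [show deriv I r - E r = (deriv I r - (2 * D r - G r)) - (G r - (2 * D r - E r)) by ring]
    exact (abs_sub _ _).trans (by linarith)
  · have htangential : |2 * r⁻¹ * T r| ≤ 2 * K r := by
      have hT := S.tangential_nonneg r hr
      rw [abs_of_nonneg (by positivity), mul_assoc]
      exact mul_le_mul_of_nonneg_left ((mul_le_of_le_one_left hT
        (inv_le_one_of_one_le₀ hr.le)).trans (S.tangential_le r hr)) two_pos.le
    calc |deriv G r| ≤ |deriv G r - 2 * r⁻¹ * T r| + |2 * r⁻¹ * T r| := by
          simpa only [sub_add_cancel] using abs_add_le (deriv G r - 2 * r⁻¹ * T r) (2 * r⁻¹ * T r)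
      _ ≤ 3 * C * K r := by nlinarith [S.abs_deriv_functional_sub_le r hr]
      _ ≤ 3 * C * (C * (E r + H r)) := by gcongr; exact S.total_le r hr
      _ = 3 * C ^ 2 * (E r + H r) := by ring

lemma carlemanSystem (S : PerturbedRadialSystem α C H I D E G T K) (hα : 0 ≤ α) :
    CarlemanSystem (3 * C ^ 2) H I D E G where
  differentiableAt_mass := S.differentiableAt_mass
  differentiableAt_mixed := S.differentiableAt_mixed
  differentiableAt_functional := S.differentiableAt_functional
  inequalities _ hr := S.carlemanInequalities hα hr

section ZeroOfMass

variable {r₀ : ℝ}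

lemma mixed_eq_zero (S : PerturbedRadialSystem α C H I D E G T K) (hr₀ : 1 < r₀)
    (hH₀ : H r₀ = 0) : I r₀ = 0 :=
  pow_eq_zero_iff two_ne_zero |>.mp
    ((by simpa only [hH₀, mul_zero] using S.sq_mixed_le r₀ hr₀ : I r₀ ^ 2 ≤ 0).antisymm
      (sq_nonneg _))

lemma hasDerivAt_mass_zero (S : PerturbedRadialSystem α C H I D E G T K) (hr₀ : 1 < r₀)
    (hH₀ : H r₀ = 0) : HasDerivAt H 0 r₀ := by
  have hderiv := S.abs_deriv_mass_sub_le r₀ hr₀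
  rw [hH₀, S.mixed_eq_zero hr₀ hH₀, mul_zero, mul_zero, sub_zero, abs_nonpos_iff] at hderiv
  exact hderiv ▸ (S.differentiableAt_mass r₀ hr₀).hasDerivAt

lemma tendsto_mixed_div_sub (S : PerturbedRadialSystem α C H I D E G T K) (hr₀ : 1 < r₀)
    (hH₀ : H r₀ = 0) :
    Tendsto (fun r ↦ I r / (r - r₀)) (𝓝[>] r₀) (𝓝 (2 * D r₀ - G r₀)) := by
  have hderiv := S.abs_deriv_mixed_sub_le r₀ hr₀
  rw [hH₀, mul_zero, abs_nonpos_iff, sub_eq_zero] at hderiv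
  refine ((hderiv ▸ (S.differentiableAt_mixed r₀ hr₀).hasDerivAt :
    HasDerivAt I (2 * D r₀ - G r₀) r₀).tendsto_slope.mono_left
      (nhdsWithin_mono _ fun r hr ↦ ne_of_gt hr)).congr fun r ↦ ?_
  rw [slope_def_field, S.mixed_eq_zero hr₀ hH₀, sub_zero]

lemma tendsto_mass_div_sq_sub (S : PerturbedRadialSystem α C H I D E G T K) (hα : 0 ≤ α)
    (hr₀ : 1 < r₀) (hH₀ : H r₀ = 0) :
    Tendsto (fun r ↦ H r / (r - r₀) ^ 2) (𝓝[>] r₀) (𝓝 (2 * D r₀ - G r₀)) := by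
  have hone : ∀ᶠ r in 𝓝[>] r₀, 1 < r :=
    eventually_nhdsWithin_of_forall fun r hr ↦ hr₀.trans hr
  have hslope : Tendsto (fun r ↦ H r / (r - r₀)) (𝓝[>] r₀) (𝓝 0) :=
    ((S.hasDerivAt_mass_zero hr₀ hH₀).tendsto_slope.mono_left
      (nhdsWithin_mono _ fun r hr ↦ ne_of_gt hr)).congr fun r ↦ by
        rw [slope_def_field, hH₀, sub_zero]
  have herror : Tendsto (fun r ↦ (deriv H r - 2 * I r) / (r - r₀)) (𝓝[>] r₀) (𝓝 0) := by
    refine squeeze_zero_norm' ?_ (by simpa only [mul_zero] using hslope.const_mul (3 * C ^ 2))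
    filter_upwards [hone, self_mem_nhdsWithin] with r hr hlt
    rw [norm_div, Real.norm_eq_abs, Real.norm_of_nonneg (sub_pos.mpr hlt).le, ← mul_div_assoc]
    exact div_le_div_of_nonneg_right (S.carlemanInequalities hα hr).abs_deriv_mass_sub_le
      (sub_pos.mpr hlt).le
  have hlim := (herror.div_const 2).add (S.tendsto_mixed_div_sub hr₀ hH₀)
  rw [zero_div, zero_add] at hlim
  refine HasDerivAt.lhopital_zero_nhdsGT (f' := deriv H) (g' := fun r ↦ 2 * (r - r₀))
    (hone.mono fun r hr ↦ (S.differentiableAt_mass r hr).hasDerivAt)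
    (Eventually.of_forall fun r ↦ by
      simpa using ((hasDerivAt_id r).sub_const r₀).fun_pow 2)
    (eventually_nhdsWithin_of_forall fun r hr ↦ mul_ne_zero two_ne_zero (sub_pos.mpr hr).ne')
    ?_ ?_ (hlim.congr fun r ↦ ?_)
  · exact hH₀ ▸ (S.differentiableAt_mass r₀ hr₀).continuousAt.continuousWithinAt.tendsto
  · have hcont : Continuous fun r : ℝ ↦ (r - r₀) ^ 2 := by fun_prop
    simpa using (hcont.tendsto r₀).mono_left nhdsWithin_le_nhds
  · rw [mul_comm 2 (r - r₀), ← div_div]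
    ring

/-- At a zero of `H` both `I` and `H` have explicit leading terms, and `I² ≤ D H` compares them. -/
lemma functional_nonneg (S : PerturbedRadialSystem α C H I D E G T K) (hα : 0 ≤ α)
    (hr₀ : 1 < r₀) (hH₀ : H r₀ = 0) : 0 ≤ G r₀ := by
  have hD := S.radial_nonneg r₀ hr₀
  have hcauchy : (2 * D r₀ - G r₀) ^ 2 ≤ D r₀ * (2 * D r₀ - G r₀) := by
    refine le_of_tendsto_of_tendsto ((S.tendsto_mixed_div_sub hr₀ hH₀).pow 2)
      (((S.continuousAt_radial r₀ hr₀).tendsto.mono_left nhdsWithin_le_nhds).mul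
        (S.tendsto_mass_div_sq_sub hα hr₀ hH₀)) ?_
    filter_upwards [self_mem_nhdsWithin] with r hr
    rw [div_pow, ← mul_div_assoc]
    exact div_le_div_of_nonneg_right (S.sq_mixed_le r (hr₀.trans hr)) (sq_nonneg _)
  nlinarith

lemma mass_eq_zero_of_lt (S : PerturbedRadialSystem α C H I D E G T K) (hα : 0 ≤ α) {d : ℝ}
    (hd : 1 < d) (hdr : d < r₀) (hH₀ : H r₀ = 0) (hG₀ : G r₀ ≤ 0) : H d = 0 :=
  (S.carlemanSystem hα).mass_eq_zero_of_lt (by positivity) hd hdr hH₀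
    (S.mixed_eq_zero (hd.trans hdr) hH₀) (hG₀.antisymm (S.functional_nonneg hα (hd.trans hdr) hH₀))

end ZeroOfMass

end PerturbedRadialSystem

end RadialSystems

section Frequency

open scoped Topology

lemma hasDerivAt_min_zero_sq (x : ℝ) :
    HasDerivAt (fun y : ℝ ↦ min y 0 ^ 2) (2 * min x 0) x := by
  rw [hasDerivAt_iff_isLittleO]
  refine (Asymptotics.IsBigO.of_bound' (Eventually.of_forall fun y ↦ ?_)).trans_isLittleO
    (Asymptotics.isLittleO_pow_sub_sub x one_lt_two)
  simp only [Real.norm_eq_abs, abs_pow, sq_abs, smul_eq_mul, abs_le]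
  rcases le_total x 0 with hx | hx <;> rcases le_total y 0 with hy | hy <;>
    simp only [min_eq_left, min_eq_right, hx, hy] <;> constructor <;> nlinarith

lemma deriv_lyapunov_le {N k ε N' k' c : ℝ} (hk : 0 ≤ k) (hε : 0 ≤ ε)
    (hN' : k - ε - |N| * ε ≤ N') (hk' : k' ≤ -c - 2 * k * N + k * ε) :
    k' + 2 * min N 0 * N' ≤ -c + 3 * ε * (1 + (k + min N 0 ^ 2)) := by
  have hεk := mul_nonneg hε hk
  rcases le_total N 0 with hN | hN
  · rw [min_eq_left hN]
    rw [abs_of_nonpos hN] at hN'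
    nlinarith only [mul_le_mul_of_nonpos_left hN' hN, hk', hεk, hε,
      mul_nonneg hε (sq_nonneg (N + 1)), mul_nonneg hε (sq_nonneg N)]
  · rw [min_eq_right hN]
    nlinarith only [mul_nonneg hk hN, hk', hεk, hε]

lemma hasDerivAt_exp_rpow_neg {α r : ℝ} (C : ℝ) (hα : α ≠ 0) (hr : r ≠ 0) :
    HasDerivAt (fun r ↦ Real.exp (3 * C / α * r ^ (-α)))
      (-(3 * (C * r ^ (-1 - α))) * Real.exp (3 * C / α * r ^ (-α))) r := by
  refine (((Real.hasDerivAt_rpow_const (p := -α) (Or.inl hr)).const_mul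
    (3 * C / α)).exp).congr_deriv ?_
  rw [show -α - 1 = -1 - α by ring]
  field_simp

/-- The function `(1 + k + (min N 0)²) exp (3C r^(-α) / α) + c log r` would be nonincreasing. -/
lemma not_frequency_inequalities {N k : ℝ → ℝ} {α c C R : ℝ} (hα : 0 < α) (hc : 0 < c)
    (hC : 0 ≤ C) (hR : 0 < R) (hN : ∀ r, R ≤ r → DifferentiableAt ℝ N r)
    (hk : ∀ r, R ≤ r → DifferentiableAt ℝ k r) (hk0 : ∀ r, R ≤ r → 0 ≤ k r)
    (hN' : ∀ r, R ≤ r → k r - C * r ^ (-1 - α) - |N r| * (C * r ^ (-1 - α)) ≤ deriv N r) :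
    ¬ ∀ r, R ≤ r → deriv k r ≤ -(c * r⁻¹) - 2 * k r * N r + k r * (C * r ^ (-1 - α)) := by
  intro hk'
  set W : ℝ → ℝ := fun r ↦ Real.exp (3 * C / α * r ^ (-α))
  set F : ℝ → ℝ := fun r ↦ (1 + (k r + min (N r) 0 ^ 2)) * W r + c * Real.log r
  have hderiv : ∀ r, R ≤ r → HasDerivAt F ((deriv k r + 2 * min (N r) 0 * deriv N r) * W r +
      (1 + (k r + min (N r) 0 ^ 2)) * (-(3 * (C * r ^ (-1 - α))) * W r) + c * r⁻¹) r :=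
    fun r hr ↦ ((((hk r hr).hasDerivAt.fun_add
      ((hasDerivAt_min_zero_sq (N r)).comp r (hN r hr).hasDerivAt)).const_add 1).fun_mul
        (hasDerivAt_exp_rpow_neg C hα.ne' (hR.trans_le hr).ne')).fun_add
          ((Real.hasDerivAt_log (hR.trans_le hr).ne').const_mul c)
  have hanti : AntitoneOn F (Set.Ici R) := by
    refine antitoneOn_of_deriv_nonpos (convex_Ici R)
      (fun r hr ↦ (hderiv r hr).continuousAt.continuousWithinAt)
      (fun r hr ↦ (hderiv r (interior_subset hr)).differentiableAt.differentiableWithinAt)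
      fun r hr ↦ ?_
    have hRr : R ≤ r := interior_subset hr
    have hr0 : 0 < r := hR.trans_le hRr
    have hW1 : 1 ≤ W r := Real.one_le_exp (by positivity)
    have hmain := mul_le_mul_of_nonneg_right (deriv_lyapunov_le (hk0 r hRr)
      (by positivity : 0 ≤ C * r ^ (-1 - α)) (hN' r hRr) (hk' r hRr)) (zero_le_one.trans hW1)
    have hlog : c * r⁻¹ ≤ c * r⁻¹ * W r := le_mul_of_one_le_right (by positivity) hW1
    rw [(hderiv r hRr).deriv]
    linarith
  obtain ⟨r, hlarge, hr⟩ := (((Real.tendsto_log_atTop.const_mul_atTop hc).eventually_gt_atTop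
    (F R)).and (eventually_ge_atTop R)).exists
  have hpos : 0 ≤ (1 + (k r + min (N r) 0 ^ 2)) * W r := by
    have := hk0 r hr
    positivity
  linarith [hanti Set.self_mem_Ici hr hr]

namespace PerturbedRadialSystem

variable {α C r : ℝ} {H I D E G T K : ℝ → ℝ}

lemma le_deriv_frequency (S : PerturbedRadialSystem α C H I D E G T K) (hr : 1 < r)
    (hH : 0 < H r) :
    -G r / H r - C * r ^ (-1 - α) - |I r / H r| * (C * r ^ (-1 - α)) ≤
      deriv (fun s ↦ I s / H s) r := by
  rw [((S.differentiableAt_mixed r hr).hasDerivAt.fun_div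
    (S.differentiableAt_mass r hr).hasDerivAt hH.ne').deriv, le_div_iff₀ (by positivity), abs_div,
    abs_of_pos hH]
  have hmixed := mul_le_mul_of_nonneg_right (abs_le.mp (S.abs_deriv_mixed_sub_le r hr)).1 hH.le
  have hmass : I r * (deriv H r - 2 * I r) ≤ |I r| * (C * r ^ (-1 - α) * H r) := by
    refine (le_abs_self _).trans ?_
    rw [abs_mul]
    exact mul_le_mul_of_nonneg_left (S.abs_deriv_mass_sub_le r hr) (abs_nonneg _)
  calc (-G r / H r - C * r ^ (-1 - α) - |I r| / H r * (C * r ^ (-1 - α))) * H r ^ 2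
      = -G r * H r - C * r ^ (-1 - α) * H r ^ 2 - |I r| * (C * r ^ (-1 - α) * H r) := by
        field_simp
    _ ≤ deriv I r * H r - I r * deriv H r := by linarith [S.sq_mixed_le r hr]

lemma eventually_mass_le_deriv_functional (S : PerturbedRadialSystem α C H I D E G T K)
    (hα : 0 < α) (hG : ∀ᶠ r in atTop, G r ≤ 0) :
    ∀ᶠ r in atTop, 1 / (3 * C) * r⁻¹ * H r ≤ deriv G r := by
  have hC := S.one_le_const
  have hdecay : Tendsto (fun r : ℝ ↦ C * r ^ (-α)) atTop (𝓝 0) := by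
    simpa using (tendsto_rpow_neg_atTop hα).const_mul C
  filter_upwards [hG, hdecay.eventually (ge_mem_nhds (by norm_num : (0 : ℝ) < 1 / 3)),
    eventually_gt_atTop 1] with r hGr hsmall hr
  have hr0 : 0 < r := by linarith
  have hK := (S.tangential_nonneg r hr).trans (S.tangential_le r hr)
  have herror : C * r ^ (-α) * K r ≤ 1 / 3 * K r := mul_le_mul_of_nonneg_right hsmall hK
  have htangential : K r ≤ 3 * T r := by
    linarith [(abs_le.mp (S.abs_functional_sub_total_le r hr)).1]
  have hpow : r ^ (-1 - α) = r ^ (-α) * r⁻¹ := by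
    rw [← Real.rpow_neg_one, ← Real.rpow_add hr0]
    ring_nf
  have hderiv := (abs_le.mp (S.abs_deriv_functional_sub_le r hr)).1
  rw [hpow] at hderiv
  have hmass : 1 / (3 * C) * H r ≤ 1 / 3 * K r := by
    rw [div_mul_eq_mul_div, one_mul, div_le_iff₀ (by linarith)]
    linarith [S.mass_le r hr]
  calc 1 / (3 * C) * r⁻¹ * H r = 1 / (3 * C) * H r * r⁻¹ := by ring
    _ ≤ (2 * T r - C * r ^ (-α) * K r) * r⁻¹ := by gcongr; linarith
    _ ≤ deriv G r := by linarith

lemma deriv_neg_functional_div_le (S : PerturbedRadialSystem α C H I D E G T K) (hr : 1 < r)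
    (hH : 0 < H r) (hG : G r ≤ 0) (hG' : 1 / (3 * C) * r⁻¹ * H r ≤ deriv G r) :
    deriv (fun s ↦ -G s / H s) r ≤ -(1 / (3 * C) * r⁻¹) - 2 * (-G r / H r) * (I r / H r) +
      -G r / H r * (C * r ^ (-1 - α)) := by
  rw [((S.differentiableAt_functional r hr).hasDerivAt.fun_neg.fun_div
    (S.differentiableAt_mass r hr).hasDerivAt hH.ne').deriv, div_le_iff₀ (by positivity)]
  have hmass := mul_le_mul_of_nonneg_left (abs_le.mp (S.abs_deriv_mass_sub_le r hr)).1
    (neg_nonneg.mpr hG)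
  calc -deriv G r * H r - -G r * deriv H r
      ≤ -(1 / (3 * C) * r⁻¹ * H r) * H r - 2 * -G r * I r +
          -G r * (C * r ^ (-1 - α) * H r) := by
        linarith [mul_le_mul_of_nonneg_right hG' hH.le]
    _ = (-(1 / (3 * C) * r⁻¹) - 2 * (-G r / H r) * (I r / H r) +
          -G r / H r * (C * r ^ (-1 - α))) * H r ^ 2 := by
        field_simp

lemma frequently_mass_eq_zero (S : PerturbedRadialSystem α C H I D E G T K) (hα : 0 < α)
    (hG : ∀ᶠ r in atTop, G r ≤ 0) : ∃ᶠ r in atTop, H r = 0 := by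
  intro hne
  obtain ⟨R, hR⟩ := eventually_atTop.mp <| ((eventually_gt_atTop (1 : ℝ)).and hne).and
    (hG.and (S.eventually_mass_le_deriv_functional hα hG))
  have hH : ∀ r, R ≤ r → 0 < H r := fun r hr ↦
    (S.mass_nonneg r (hR r hr).1.1).lt_of_ne' (hR r hr).1.2
  have hC := S.one_le_const
  refine not_frequency_inequalities (N := fun r ↦ I r / H r) (k := fun r ↦ -G r / H r)
    (c := 1 / (3 * C)) hα (by positivity) (by linarith) (one_pos.trans (hR R le_rfl).1.1)
    (fun r hr ↦ ?_) (fun r hr ↦ ?_) (fun r hr ↦ ?_)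
    (fun r hr ↦ S.le_deriv_frequency (hR r hr).1.1 (hH r hr))
    (fun r hr ↦ S.deriv_neg_functional_div_le (hR r hr).1.1 (hH r hr) (hR r hr).2.1 (hR r hr).2.2)
  · exact (S.differentiableAt_mixed r (hR r hr).1.1).fun_div
      (S.differentiableAt_mass r (hR r hr).1.1) (hH r hr).ne'
  · exact (S.differentiableAt_functional r (hR r hr).1.1).fun_neg.fun_div
      (S.differentiableAt_mass r (hR r hr).1.1) (hH r hr).ne'
  · exact div_nonneg (neg_nonneg.mpr (hR r hr).2.1) (hH r hr).le

/-- Unless `H` vanishes identically, `G` is positive at arbitrarily large radii. -/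
lemma frequently_functional_pos (S : PerturbedRadialSystem α C H I D E G T K) (hα : 0 < α)
    (hr : 1 < r) (hH : H r ≠ 0) : ∃ᶠ s in atTop, 0 < G s := by
  by_contra hG
  simp only [not_frequently, not_lt] at hG
  obtain ⟨r₀, hH₀, hG₀, hrr₀⟩ := ((S.frequently_mass_eq_zero hα hG).and_eventually
    (hG.and (eventually_gt_atTop r))).exists
  exact hH (S.mass_eq_zero_of_lt hα.le hr hrr₀ hH₀ hG₀)

end PerturbedRadialSystem

end Frequency

section SphericalSystem

open scoped Topology ContDiff Matrix

variable {n : ℕ} {A : En n → Matrix (Fin n) (Fin n) ℝ} {u : En n → ℝ} {lam α C k : ℝ}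

lemma exists_abs_sphereIntegral_sub_le {f g N : En n → ℝ} (hf : ContinuousOn f (OmegaExt n))
    (hg : ContinuousOn g (OmegaExt n)) (hN : ContinuousOn N (OmegaExt n))
    (hN0 : ∀ x ∈ OmegaExt n, 0 ≤ N x)
    (h : HasGrowth (fun x => √(N x)) 2 k fun x => f x - g x) :
    ∃ c : ℝ, 0 ≤ c ∧ ∀ r, 1 < r →
      |sphereIntegral f r - sphereIntegral g r| ≤ c * r ^ k * sphereIntegral N r := by
  obtain ⟨c, hc, hbound⟩ := exists_abs_sphereIntegral_le (hf.sub hg) hN hN0 h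
  exact ⟨c, hc, fun r hr => sphereIntegral_sub hf hg hr ▸ hbound r hr⟩

lemma HasSphereDeriv.exists_abs_deriv_sub_le {P Q g N : En n → ℝ} (h : HasSphereDeriv P Q)
    (hg : ContinuousOn g (OmegaExt n)) (hN : ContinuousOn N (OmegaExt n))
    (hN0 : ∀ x ∈ OmegaExt n, 0 ≤ N x)
    (hQg : HasGrowth (fun x => √(N x)) 2 k fun x => Q x - g x) :
    ∃ c : ℝ, 0 ≤ c ∧ ∀ r, 1 < r →
      |deriv (sphereIntegral P) r - sphereIntegral g r| ≤ c * r ^ k * sphereIntegral N r := by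
  obtain ⟨c, hc, hbound⟩ :=
    exists_abs_sphereIntegral_sub_le h.continuousOn_deriv hg hN hN0 hQg
  exact ⟨c, hc, fun r hr => (h.hasDerivAt r hr).deriv.symm ▸ hbound r hr⟩

lemma continuousOn_normalizedGrad (hu : ContDiffOn ℝ 1 u (OmegaExt n)) :
    ContinuousOn (normalizedGrad u) (OmegaExt n) :=
  (continuousOn_grad hu).add (((continuousOn_const.mul hu.continuousOn).div
    continuous_norm.continuousOn fun _ hx => (norm_pos_of_mem_OmegaExt hx).ne').smul
      continuousOn_radial)

lemma continuousOn_totalDensity (hu : ContDiffOn ℝ 1 u (OmegaExt n)) :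
    ContinuousOn (totalDensity u) (OmegaExt n) :=
  (continuousOn_dotProduct (continuousOn_normalizedGrad hu) (continuousOn_normalizedGrad hu)).add
    (hu.continuousOn.pow 2)

lemma continuousOn_tangentialDensity (hu : ContDiffOn ℝ 1 u (OmegaExt n)) :
    ContinuousOn (tangentialDensity u) (OmegaExt n) :=
  (continuousOn_dotProduct (continuousOn_normalizedGrad hu) (continuousOn_normalizedGrad hu)).sub
    ((continuousOn_dotProduct continuousOn_radial (continuousOn_normalizedGrad hu)).pow 2)

namespace EllipticDecay

lemma continuousOn_massDensity (hA : EllipticDecay A lam α C) (hα : 0 ≤ α)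
    (hu : ContDiffOn ℝ 1 u (OmegaExt n)) : ContinuousOn (massDensity A u) (OmegaExt n) :=
  (hu.continuousOn.pow 2).mul (hA.isSymbol_muA hα).contDiffOn.continuousOn

lemma continuousOn_gradientDensity (hA : EllipticDecay A lam α C)
    (hu : ContDiffOn ℝ 1 u (OmegaExt n)) : ContinuousOn (gradientDensity A u) (OmegaExt n) :=
  continuousOn_dotProduct (continuousOn_mulVec (fun i j => (hA.2.1 i j).continuousOn)
    (continuousOn_normalizedGrad hu)) (continuousOn_normalizedGrad hu)

lemma continuousOn_radialDensity (hA : EllipticDecay A lam α C) (hlam : 0 < lam) (hα : 0 ≤ α)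
    (hu : ContDiffOn ℝ 1 u (OmegaExt n)) : ContinuousOn (radialDensity A u) (OmegaExt n) :=
  ((continuousOn_dotProduct (continuousOn_pi.2 fun i => (hA.isSymbol_conormal hα
    i).contDiffOn.continuousOn) (continuousOn_normalizedGrad hu)).pow 2).div
      (hA.isSymbol_muA hα).contDiffOn.continuousOn fun _ hx => (hA.muA_pos hlam hx).ne'

lemma sphereIntegral_massDensity_le (hA : EllipticDecay A lam α C) (hlam : 0 < lam)
    (hα : 0 ≤ α) (hu : ContDiffOn ℝ 1 u (OmegaExt n)) {r : ℝ} (hr : 1 < r) :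
    sphereIntegral (massDensity A u) r ≤ lam⁻¹ * sphereIntegral (totalDensity u) r := by
  rw [← sphereIntegral_const_mul]
  exact sphereIntegral_mono (hA.continuousOn_massDensity hα hu)
    (continuousOn_const.mul (continuousOn_totalDensity hu)) hr fun x hx =>
      hA.massDensity_le_totalDensity hlam hx

lemma sphereIntegral_totalDensity_le (hA : EllipticDecay A lam α C) (hlam : 0 < lam)
    (hα : 0 ≤ α) (hu : ContDiffOn ℝ 1 u (OmegaExt n)) {r : ℝ} (hr : 1 < r) :
    sphereIntegral (totalDensity u) r ≤
      lam⁻¹ * (sphereIntegral (gradientDensity A u) r + sphereIntegral (massDensity A u) r) := by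
  have hgradient := hA.continuousOn_gradientDensity hu
  have hmass := hA.continuousOn_massDensity hα hu
  rw [← sphereIntegral_add hgradient hmass hr, ← sphereIntegral_const_mul]
  exact sphereIntegral_mono (continuousOn_totalDensity hu)
    (continuousOn_const.mul (hgradient.add hmass)) hr fun x hx =>
      hA.totalDensity_le hlam hx

end EllipticDecay

namespace WeakSol

variable [NeZero n]

lemma exists_abs_deriv_mass_sub_le (hu : WeakSol A u) (hA : EllipticDecay A lam α C)
    (hlam : 0 < lam) (hα : 0 ≤ α) : ∃ c : ℝ, 0 ≤ c ∧ ∀ r, 1 < r →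
      |deriv (sphereIntegral (massDensity A u)) r - 2 * sphereIntegral (mixedDensity A u) r| ≤
        c * r ^ (-1 - α) * sphereIntegral (massDensity A u) r := by
  have hmass := hu.hasSphereDeriv_massDensity hA hα
  have hmixed := (hu.hasSphereDeriv_mixedDensity hA hα).continuousOn
  obtain ⟨c, hc, hbound⟩ := hmass.exists_abs_deriv_sub_le
    (continuousOn_const (c := (2 : ℝ)).fun_mul hmixed) hmass.continuousOn
    (fun x hx => hA.massDensity_nonneg hlam hx)
    ((hA.hasGrowth_mul_sq hlam (w := 1) (hA.hasGrowth_conormalDefect hα)).congr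
      fun x _ => add_sub_cancel_left _ _)
  exact ⟨c, hc, fun r hr => sphereIntegral_const_mul 2 (mixedDensity A u) r ▸ hbound r hr⟩

lemma exists_abs_deriv_mixed_sub_le (hu : WeakSol A u) (hA : EllipticDecay A lam α C)
    (hlam : 0 < lam) (hα : 0 ≤ α) : ∃ c : ℝ, 0 ≤ c ∧ ∀ r, 1 < r →
      |deriv (sphereIntegral (mixedDensity A u)) r - (2 * sphereIntegral (radialDensity A u) r -
        sphereIntegral (functionalDensity A u) r)| ≤
        c * r ^ (-1 - α) * sphereIntegral (massDensity A u) r := by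
  have hradial := continuousOn_const (c := (2 : ℝ)).fun_mul
    (hA.continuousOn_radialDensity hlam hα hu.1)
  have hfunctional := (hu.hasSphereDeriv_functionalDensity hA hlam hα).continuousOn
  have hdefect : HasGrowth 1 0 (-1 - α) fun x => decayRate n / ‖x‖ * conormalDefect A x :=
    (((hasGrowth_norm_inv.const_mul (decayRate n)).mul (hA.hasGrowth_conormalDefect hα)).mono
      (by linarith)).congr fun x _ => by rw [div_eq_mul_inv]
  obtain ⟨c, hc, hbound⟩ := (hu.hasSphereDeriv_mixedDensity hA hα).exists_abs_deriv_sub_le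
    (hradial.fun_sub hfunctional) (hu.hasSphereDeriv_massDensity hA hα).continuousOn
    (fun x hx => hA.massDensity_nonneg hlam hx)
    ((hA.hasGrowth_mul_sq hlam hdefect).congr fun x _ => add_sub_cancel_left _ _)
  refine ⟨c, hc, fun r hr => ?_⟩
  rw [← sphereIntegral_const_mul, ← sphereIntegral_sub hradial hfunctional hr]
  exact hbound r hr

lemma exists_abs_deriv_functional_sub_le (hu : WeakSol A u) (hA : EllipticDecay A lam α C)
    (hlam : 0 < lam) (hα : 0 ≤ α) (hα2 : α ≤ 2) : ∃ c : ℝ, 0 ≤ c ∧ ∀ r, 1 < r →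
      |deriv (sphereIntegral (functionalDensity A u)) r -
        2 * r⁻¹ * sphereIntegral (tangentialDensity u) r| ≤
        c * r ^ (-1 - α) * sphereIntegral (totalDensity u) r := by
  have hcont : ContinuousOn (fun x => 2 * ‖x‖⁻¹ * tangentialDensity u x) (OmegaExt n) :=
    (continuousOn_const.mul (continuous_norm.continuousOn.inv₀ fun _ hx =>
      (norm_pos_of_mem_OmegaExt hx).ne')).mul (continuousOn_tangentialDensity hu.1)
  obtain ⟨c, hc, hbound⟩ :=
    (hu.hasSphereDeriv_functionalDensity hA hlam hα).exists_abs_deriv_sub_le hcont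
      (continuousOn_totalDensity hu.1) (fun x _ => totalDensity_nonneg u x)
      ((hA.hasGrowth_functionalDefect hlam hα hα2).congr fun x _ => add_sub_cancel_left _ _)
  refine ⟨c, hc, fun r hr => ?_⟩
  rw [← sphereIntegral_radial_mul (fun r => 2 * r⁻¹) _ (one_pos.trans hr)]
  exact hbound r hr

lemma exists_abs_functional_sub_total_le (hu : WeakSol A u) (hA : EllipticDecay A lam α C)
    (hlam : 0 < lam) (hα : 0 ≤ α) (hα2 : α ≤ 2) : ∃ c : ℝ, 0 ≤ c ∧ ∀ r, 1 < r →
      |sphereIntegral (functionalDensity A u) r - (sphereIntegral (totalDensity u) r -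
        2 * sphereIntegral (tangentialDensity u) r)| ≤
        c * r ^ (-α) * sphereIntegral (totalDensity u) r := by
  have htotal := continuousOn_totalDensity hu.1
  have htangential := continuousOn_const (c := (2 : ℝ)).fun_mul
    (continuousOn_tangentialDensity hu.1)
  obtain ⟨c, hc, hbound⟩ := exists_abs_sphereIntegral_sub_le
    (hu.hasSphereDeriv_functionalDensity hA hlam hα).continuousOn (htotal.fun_sub htangential)
    htotal (fun x _ => totalDensity_nonneg u x)
    (hA.hasGrowth_functionalDensity_sub_total hlam hα hα2)
  refine ⟨c, hc, fun r hr => ?_⟩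
  rw [← sphereIntegral_const_mul, ← sphereIntegral_sub htotal htangential hr]
  exact hbound r hr

lemma exists_abs_functional_sub_radial_le (hu : WeakSol A u) (hA : EllipticDecay A lam α C)
    (hlam : 0 < lam) (hα : 0 ≤ α) : ∃ c : ℝ, 0 ≤ c ∧ ∀ r, 1 < r →
      |sphereIntegral (functionalDensity A u) r - (2 * sphereIntegral (radialDensity A u) r -
        sphereIntegral (gradientDensity A u) r)| ≤ c * sphereIntegral (massDensity A u) r := by
  have hradial := continuousOn_const (c := (2 : ℝ)).fun_mul
    (hA.continuousOn_radialDensity hlam hα hu.1)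
  have hgradient := hA.continuousOn_gradientDensity hu.1
  obtain ⟨c, hc, hbound⟩ := exists_abs_sphereIntegral_sub_le
    (hu.hasSphereDeriv_functionalDensity hA hlam hα).continuousOn (hradial.fun_sub hgradient)
    (hu.hasSphereDeriv_massDensity hA hα).continuousOn
    (fun x hx => hA.massDensity_nonneg hlam hx)
    (hA.hasGrowth_functionalDensity_sub_radial hlam hα)
  simp only [Real.rpow_zero, mul_one] at hbound
  refine ⟨c, hc, fun r hr => ?_⟩
  rw [← sphereIntegral_const_mul, ← sphereIntegral_sub hradial hgradient hr]
  exact hbound r hr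

lemma radialSystem (hu : WeakSol A u) (hA : EllipticDecay A lam α C) (hlam : 0 < lam)
    (hα : 0 ≤ α) : RadialSystem (sphereIntegral (massDensity A u))
      (sphereIntegral (mixedDensity A u)) (sphereIntegral (radialDensity A u))
      (sphereIntegral (functionalDensity A u)) (sphereIntegral (tangentialDensity u))
      (sphereIntegral (totalDensity u)) := by
  have hmass := hu.hasSphereDeriv_massDensity hA hα
  have hmixed := hu.hasSphereDeriv_mixedDensity hA hα
  have hradial := hA.continuousOn_radialDensity hlam hα hu.1
  exact {
    differentiableAt_mass := fun r hr => (hmass.hasDerivAt r hr).differentiableAt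
    differentiableAt_mixed := fun r hr => (hmixed.hasDerivAt r hr).differentiableAt
    differentiableAt_functional := fun r hr =>
      ((hu.hasSphereDeriv_functionalDensity hA hlam hα).hasDerivAt r hr).differentiableAt
    continuousAt_radial := fun r hr =>
      (continuousOn_sphereIntegral hradial).continuousAt (Ioi_mem_nhds hr)
    tangential_nonneg := fun r hr => sphereIntegral_nonneg hr fun x hx =>
      tangentialDensity_nonneg (ne_zero_of_mem_OmegaExt hx)
    tangential_le := fun r hr => sphereIntegral_mono (continuousOn_tangentialDensity hu.1)
      (continuousOn_totalDensity hu.1) hr fun _ _ => tangentialDensity_le_totalDensity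
    radial_nonneg := fun r hr => sphereIntegral_nonneg hr fun _ hx =>
      hA.radialDensity_nonneg hlam hx
    mass_nonneg := fun r hr => sphereIntegral_nonneg hr fun _ hx =>
      hA.massDensity_nonneg hlam hx
    sq_mixed_le := fun r hr => sq_sphereIntegral_le_mul hradial hmass.continuousOn
      hmixed.continuousOn hr fun _ hx => hA.radialDensity_add_nonneg hlam hx }

theorem exists_perturbedRadialSystem (hu : WeakSol A u) (hA : EllipticDecay A lam α C)
    (hlam : 0 < lam) (hα : 0 ≤ α) (hα2 : α ≤ 2) : ∃ c, PerturbedRadialSystem α c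
      (sphereIntegral (massDensity A u)) (sphereIntegral (mixedDensity A u))
      (sphereIntegral (radialDensity A u)) (sphereIntegral (gradientDensity A u))
      (sphereIntegral (functionalDensity A u)) (sphereIntegral (tangentialDensity u))
      (sphereIntegral (totalDensity u)) := by
  have S := hu.radialSystem hA hlam hα
  have hE {r : ℝ} (hr : 1 < r) : 0 ≤ sphereIntegral (gradientDensity A u) r :=
    sphereIntegral_nonneg hr fun _ hx => hA.gradientDensity_nonneg hlam hx
  have hK {r : ℝ} (hr : 1 < r) : 0 ≤ sphereIntegral (totalDensity u) r :=
    (S.tangential_nonneg r hr).trans (S.tangential_le r hr)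
  obtain ⟨c₁, hc₁, h₁⟩ := hu.exists_abs_deriv_mass_sub_le hA hlam hα
  obtain ⟨c₂, hc₂, h₂⟩ := hu.exists_abs_deriv_mixed_sub_le hA hlam hα
  obtain ⟨c₃, hc₃, h₃⟩ := hu.exists_abs_deriv_functional_sub_le hA hlam hα hα2
  obtain ⟨c₄, hc₄, h₄⟩ := hu.exists_abs_functional_sub_total_le hA hlam hα hα2
  obtain ⟨c₅, hc₅, h₅⟩ := hu.exists_abs_functional_sub_radial_le hA hlam hα
  have hinv := inv_nonneg.2 hlam.le
  have enlarge {X a b N : ℝ} (hN : 0 ≤ N) (hab : a ≤ b) (h : X ≤ a * N) : X ≤ b * N :=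
    h.trans (mul_le_mul_of_nonneg_right hab hN)
  have enlarge_rpow {X a b N r k : ℝ} (hr : 1 < r) (hN : 0 ≤ N) (hab : a ≤ b)
      (h : X ≤ a * r ^ k * N) : X ≤ b * r ^ k * N :=
    enlarge hN (mul_le_mul_of_nonneg_right hab (Real.rpow_nonneg (by linarith) k)) h
  refine ⟨1 + lam⁻¹ + c₁ + c₂ + c₃ + c₄ + c₅, S, by linarith,
    fun r hr => enlarge_rpow hr (S.mass_nonneg r hr) (by linarith) (h₁ r hr),
    fun r hr => enlarge_rpow hr (S.mass_nonneg r hr) (by linarith) (h₂ r hr),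
    fun r hr => enlarge_rpow hr (hK hr) (by linarith) (h₃ r hr),
    fun r hr => enlarge_rpow hr (hK hr) (by linarith) (h₄ r hr),
    fun r hr => enlarge (S.mass_nonneg r hr) (by linarith) (h₅ r hr),
    fun r hr => enlarge (hK hr) (by linarith) (hA.sphereIntegral_massDensity_le hlam hα hu.1 hr),
    fun r hr => enlarge (add_nonneg (hE hr) (S.mass_nonneg r hr)) (by linarith)
      (hA.sphereIntegral_totalDensity_le hlam hα hu.1 hr)⟩

end WeakSol

end SphericalSystem

section Positivity

open scoped Matrix

variable {n : ℕ} {A : En n → Matrix (Fin n) (Fin n) ℝ} {u : En n → ℝ} {lam α C ρ : ℝ} {x : En n}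

lemma grad_norm_rpow_mul (hu : DifferentiableAt ℝ u x) (hx : x ≠ 0) :
    grad (fun y => ‖y‖ ^ decayRate n * u y) x = ‖x‖ ^ decayRate n • normalizedGrad u x := by
  have hr := norm_ne_zero_iff.2 hx
  have hpow := Real.hasDerivAt_rpow_const (p := decayRate n) (Or.inl hr)
  have hdiff : DifferentiableAt ℝ (fun y : En n => ‖y‖ ^ decayRate n) x :=
    hpow.differentiableAt.comp x (differentiableAt_id.norm ℝ hx)
  rw [grad_mul hdiff hu, grad_comp_norm hx hpow, normalizedGrad, Real.rpow_sub_one hr, smul_add,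
    smul_smul, smul_smul, add_comm]
  congr 2
  ring

lemma quadForm_gradient (M : Matrix (Fin n) (Fin n) ℝ) (f : En n → ℝ) (x : En n) :
    quadForm M (gradient f x) (gradient f x) = M *ᵥ grad f x ⬝ᵥ grad f x := by
  simp only [quadForm, gradient_apply_eq_pderiv]
  rfl

lemma Zd_eq (A : En n → Matrix (Fin n) (Fin n) ℝ) (f : En n → ℝ) (hx : x ≠ 0) :
    Zd A f x = ‖x‖ * ((muA A x)⁻¹ * (conormal A x ⬝ᵥ grad f x)) := by
  have hZ : (Zvec A x).ofLp = ‖x‖ • (muA A x)⁻¹ • conormal A x := by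
    rw [conormal, radial_eq_smul, Matrix.mulVec_smul, smul_comm (‖x‖),
      smul_inv_smul₀ (norm_ne_zero_iff.2 hx)]
    rfl
  simp only [Zd, gradient_apply_eq_pderiv]
  rw [← smul_eq_mul, ← smul_eq_mul, ← smul_dotProduct, ← smul_dotProduct, ← hZ]
  rfl

lemma sphereIntegral_massDensity_ne_zero (hu : WeakSol A u) (hA : EllipticDecay A lam α C)
    (hlam : 0 < lam) (hα : 0 ≤ α) (hx : x ∈ OmegaExt n) (hux : u x ≠ 0) :
    sphereIntegral (massDensity A u) ‖x‖ ≠ 0 := fun h0 =>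
  mul_ne_zero (pow_ne_zero 2 hux) (hA.muA_pos hlam hx).ne' <|
    eq_zero_of_sphereIntegral_eq_zero (hA.continuousOn_massDensity hα hu.1) hx
      (fun _ hy => hA.massDensity_nonneg hlam hy) h0 rfl

variable [NeZero n]

lemma sphereIntegral_functionalDensity (hu : WeakSol A u) (hA : EllipticDecay A lam α C)
    (hlam : 0 < lam) (hα : 0 ≤ α) (hρ : 1 < ρ) :
    sphereIntegral (functionalDensity A u) ρ = 2 * sphereIntegral (radialDensity A u) ρ -
      sphereIntegral (gradientDensity A u) ρ + sphereIntegral (fun x => u x ^ 2) ρ -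
      (decayRate n ^ 2 - decayRate n) / ρ ^ 2 * sphereIntegral (massDensity A u) ρ := by
  have hradial := (continuousOn_const (c := (2 : ℝ))).fun_mul
    (hA.continuousOn_radialDensity hlam hα hu.1)
  have hgradient := hA.continuousOn_gradientDensity hu.1
  have hsq : ContinuousOn (fun x => u x ^ 2) (OmegaExt n) := hu.1.continuousOn.pow 2
  have hmass := (hu.hasSphereDeriv_massDensity hA hα).div_norm_pow
    (decayRate n ^ 2 - decayRate n) 2 |>.continuousOn
  rw [← sphereIntegral_radial_mul (fun r => (decayRate n ^ 2 - decayRate n) / r ^ 2) _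
    (one_pos.trans hρ), ← sphereIntegral_const_mul, ← sphereIntegral_sub hradial hgradient hρ,
    ← sphereIntegral_add (hradial.fun_sub hgradient) hsq hρ,
    ← sphereIntegral_sub ((hradial.fun_sub hgradient).fun_add hsq) hmass hρ]
  rfl

lemma exists_Gfun_eq_mul_sphereIntegral (hu : WeakSol A u) (hA : EllipticDecay A lam α C)
    (hlam : 0 < lam) (hα : 0 ≤ α) (hρ : 1 < ρ) :
    ∃ c, 0 < c ∧ Gfun A u ρ = c * sphereIntegral (functionalDensity A u) ρ := by
  have hρ0 := one_pos.trans hρ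
  obtain ⟨c, hc, hsphInt⟩ := exists_sphInt_eq_mul_sphereIntegral (n := n) hρ0
  have rescale {f g : En n → ℝ}
      (h : ∀ x ∈ OmegaExt n, f x = (‖x‖ ^ decayRate n) ^ 2 * g x) :
      sphInt n ρ f = c * ((ρ ^ decayRate n) ^ 2 * sphereIntegral g ρ) := by
    rw [hsphInt, sphereIntegral_congr h hρ,
      sphereIntegral_radial_mul (fun r => (r ^ decayRate n) ^ 2) g hρ0]
  have hgrad {x : En n} (hx : x ∈ OmegaExt n) :=
    grad_norm_rpow_mul (differentiableAt_of_mem_OmegaExt hu.1 hx) (ne_zero_of_mem_OmegaExt hx)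
  refine ⟨c * (ρ ^ decayRate n) ^ 2, by positivity, ?_⟩
  rw [Gfun, ← decayRate, rescale (g := radialDensity A u) fun x hx => ?_,
    rescale (g := gradientDensity A u) fun x hx => ?_, rescale fun x _ => mul_pow _ _ 2,
    rescale (g := fun x => 1 / ‖x‖ ^ 2 * massDensity A u x) fun x _ => ?_,
    sphereIntegral_radial_mul (fun r => 1 / r ^ 2) _ hρ0,
    sphereIntegral_functionalDensity hu hA hlam hα hρ]
  · simp only [decayRate]
    ring
  · rw [massDensity]
    ring
  · rw [quadForm_gradient, hgrad hx, gradientDensity, Matrix.mulVec_smul, smul_dotProduct,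
      dotProduct_smul, smul_eq_mul, smul_eq_mul, sq, mul_assoc]
  · have hμ := (hA.muA_pos hlam hx).ne'
    rw [Zd_eq A _ (ne_zero_of_mem_OmegaExt hx), hgrad hx, dotProduct_smul, ← normalFlux,
      mul_div_cancel_left₀ _ (norm_pos_of_mem_OmegaExt hx).ne', radialDensity, smul_eq_mul]
    field

end Positivity

theorem G_positive_on_sequence_general
    (n : ℕ) (A : En n → Matrix (Fin n) (Fin n) ℝ) (lam α C : ℝ)
    (hlam0 : 0 < lam) (hα : 0 < α) (hA : EllipticDecay A lam α C)
    (u : En n → ℝ) (hu : WeakSol A u) (hne : ∃ x ∈ OmegaExt n, u x ≠ 0) :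
    ∃ r : ℕ → ℝ, Tendsto r atTop atTop ∧ ∀ j, 0 < Gfun A u (r j) := by
  obtain ⟨x, hx, hux⟩ := hne
  have hn : n ≠ 0 := by
    rintro rfl
    exact ne_zero_of_mem_OmegaExt hx (Subsingleton.elim _ _)
  have : NeZero n := ⟨hn⟩
  have hα' : 0 < min α 2 := lt_min hα two_pos
  obtain ⟨c, S⟩ := hu.exists_perturbedRadialSystem (hA.mono (min_le_left α 2)) hlam0 hα'.le
    (min_le_right α 2)
  have hpos := S.frequently_functional_pos hα' hx
    (sphereIntegral_massDensity_ne_zero hu hA hlam0 hα.le hx hux)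
  have hG : ∃ᶠ ρ in atTop, 0 < Gfun A u ρ := by
    refine (hpos.and_eventually (eventually_gt_atTop 1)).mono fun ρ ⟨hρ, hρ1⟩ => ?_
    obtain ⟨k, hk, hGk⟩ := exists_Gfun_eq_mul_sphereIntegral hu hA hlam0 hα.le hρ1
    exact hGk ▸ mul_pos hk hρ
  exact exists_seq_forall_of_frequently hG

/-- **Lemma `post1`.** Let `u` be a nontrivial weak solution of
`-div(A∇u) = u` in `Ω` and suppose that for some `δ ∈ (0,1)` one has
`liminf_{R→∞} R^{-(1-δ)} ∫_{R<|x|<2R} u² = 0`. Then there is a sequence `r_j → ∞`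
with `G(r_j) > 0` for every `j`. -/
theorem G_positive_on_sequence
    (n : ℕ) (hn : 2 ≤ n)
    (A : En n → Matrix (Fin n) (Fin n) ℝ) (lam α C : ℝ)
    (hlam0 : 0 < lam) (hlam1 : lam < 1) (hα : 0 < α) (hC : 0 < C)
    (hA : EllipticDecay A lam α C)
    (u : En n → ℝ) (hu : WeakSol A u)
    (hne : ∃ x ∈ OmegaExt n, u x ≠ 0)
    (δ : ℝ) (hδ : δ ∈ Set.Ioo (0 : ℝ) 1)
    (hlim : Filter.liminf
        (fun R : ℝ => R ^ (-(1 - δ)) * ∫ x in {x : En n | R < ‖x‖ ∧ ‖x‖ < 2 * R}, (u x) ^ 2)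
        Filter.atTop = 0) :
    ∃ r : ℕ → ℝ, Tendsto r atTop atTop ∧ ∀ j, 0 < Gfun A u (r j) :=
  G_positive_on_sequence_general n A lam α C hlam0 hα hA u hu hne

end
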